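/- For every δ > 0 there exists p₀ such that for every prime p ≥ p₀ there exist constants C > 0 and c > 0 (depending on p and δ) with the following property. Let r ∈ 𝔽_p and let s be a positive integer with p − s > p^{3/4+δ}, and set R = {r, r+1, …, r+s−1} ⊆ 𝔽_p. For every positive integer n, let N(R,n) be the number of monic irreducible polynomials of degree n over 𝔽_p all of whose coefficients of degrees 0,…,n−1 lie in 𝔽_p \ R, and set Λ = 1 if 0 ∈ R and Λ = 1 − 1/(p−s) if 0 ∉ R. Then |N(R,n) − (p/(p−1))·((p−s)ⁿ/n)·Λ| ≤ C·(p/(p−1))·((p−s)ⁿ/n)·e^{−c√n}. -/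

import Mathlib

/-!
The proof is the circle method for the coefficient vector of a polynomial. By Fourier inversion on
`𝔽_p^n` (`circle`), the number of prime powers of degree `n`, weighted by the von Mangoldt function,
with all coefficients in an interval `A`
(the complement of the excluded one) is a sum over frequencies `ξ ∈ 𝔽_p^n` of the product of the
Fourier coefficients of `A` at the `ξ i`, times the exponential sum over prime powers at `ξ`.

*Major frequencies.* The frequencies supported on the `b + 1` lowest and the `b` highest positions
reproduce the count of prime powers whose coefficients at the two ends lie in `A`
(`circle_major`). The two ends of a polynomial define a class in a finite abelian group, and the
L-functions of the nontrivial characters of this group are polynomials of degree less than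
`B = 2 b + 1`. The argument of de la Vallée Poussin, based on `3 + 4 cos θ + cos 2θ ≥ 0`, bounds
their reciprocal roots by `p (1 - 1 / (125 B))` (`zeroFree`). Since `p` is odd, a real character of
the class group depends only on the constant term, so there are no exceptional zeros. This gives
`edge_asymptotic`; the factor `Λ` appears because a prime power has nonzero constant term, unless it
is a power of `X`.

*Minor frequencies.* These are split by the rank `rk` of the Hankel matrix of `ξ`. A vector of rank
`r < n / 2` is linear recurrent of length at most `r`, up to a short final block.
* Rank at most `R`. If such a vector is nonzero away from the two ends, then every block of `R`
  consecutive digits contains a nonzero one (`sparse_or_dense`), and each of these gives a factor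
  `ρ < 1`. Since there are few vectors of small rank, the trivial bound for the exponential sum
  suffices (`smallRank_bound`).
* Rank `r` between `R` and `2 n / 5`. Vaughan's identity together with Type I and Type II estimates
  saves `p ^ (r / 2)` in the exponential sum (`norm_sum_vM_le`), whereas the total mass of the
  vectors of rank `r` is at most about `L ^ (2 r + 1)`, where `L` is the `L¹` norm of the normalised
  Fourier transform of `A` (`sum_rk_le`). The saving wins because `L` is smaller than `p ^ (1 / 4)`
  (`mediumRank_bound`).
* Larger rank. Heath-Brown's identity with four factors writes the sum as products of pieces which
  are smooth or of degree at most `n / 4`. A long smooth piece gives a Type I sum; otherwise the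
  pieces group into a balanced bilinear sum, which is estimated on average over `ξ`, the
  coincidences being counted by duality (`typeII_avg`, `largeRank_bound`).

*Parameters.* For an interval of length `m` one has `L ≤ 1 + p (1 + log p) / m`. So for
`m > p ^ (3 / 4 + δ)` and large `p` there is a `d ≥ 2 ^ 10` with `L d ^ 2 ≤ p ^ (1 / 4)`; this is
where the exponent `3 / 4` comes from. The loss `p ^ O(R)` in the small-rank and major
contributions is beaten by the gains `ρ ^ (n / R)` and `exp (-n / (250 R))` when `R` is a small
multiple of `√n`, and the medium ranks contribute `d ^ (-2 R)` up to powers of `n`. This produces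
the saving `exp (-c √n)` (`exists_err_bound`). Proper prime powers are negligible (`prime_count`),
and the finitely many small degrees are absorbed in the constant `C`.
-/

/- Setting: `ZMod p` is the field `𝔽_p` with `p` elements (for `p` prime).
The field `𝔽_p((1/t))` of formal Laurent series in `1/t` is modelled by
`LaurentSeries (ZMod p) = HahnSeries ℤ (ZMod p)`, where the element `t`
corresponds to the Hahn series supported at `-1`; thus the coefficient `x_i` of
`t^i` in `x ∈ 𝔽_p((1/t))` is the Hahn series coefficient of `x` at `-i`. -/

open Polynomial

noncomputable section

attribute [local instance] Classical.propDecidable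

/-- `ψ(a) = exp(2πi·a/p)`, with `a` identified with its integer representative. -/
def psiP (p : ℕ) (a : ZMod p) : ℂ :=
  Complex.exp (2 * Real.pi * Complex.I * (a.val : ℂ) / (p : ℂ))

variable (p : ℕ) [Fact p.Prime]

/-- The element `t` of `𝔽_p((1/t))`. -/
def tP : LaurentSeries (ZMod p) := HahnSeries.single (-1 : ℤ) 1

/-- Laurent expansion (at infinity) of a polynomial in `t`. -/
def toLSP (f : Polynomial (ZMod p)) : LaurentSeries (ZMod p) :=
  Polynomial.eval₂ (algebraMap (ZMod p) (LaurentSeries (ZMod p))) (tP p) f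

/-- The coefficient `x_i` of `t^i` in `x ∈ 𝔽_p((1/t))`. -/
def coeffTP (x : LaurentSeries (ZMod p)) (i : ℤ) : ZMod p := x.coeff (-i)

/-- `e_p(x) = ψ(x_{-1})`. -/
def eP (x : LaurentSeries (ZMod p)) : ℂ := psiP p (coeffTP p x (-1))

/-- `|x| = p^j` where `j` is the largest index with `x_j ≠ 0`, and `|0| = 0`. -/
def normTP (x : LaurentSeries (ZMod p)) : ℝ :=
  if x = 0 then 0 else (p : ℝ) ^ (-x.order)

/-- The set `{r, r+1, …, r+s-1}` of `s` consecutive elements of `𝔽_p`. -/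
def consec (r : ZMod p) (s : ℕ) : Finset (ZMod p) :=
  (Finset.range s).image fun k => r + (k : ZMod p)

/-- `M_R(n)`: monic polynomials of degree `n` whose coefficients of degrees
`0, …, n-1` all lie outside `R`. -/
def MRP (R : Finset (ZMod p)) (n : ℕ) : Finset (Polynomial (ZMod p)) :=
  ((Finset.univ : Finset (Fin n → ZMod p)).filter fun c => ∀ i, c i ∉ R).image
    fun c => X ^ n + ∑ i : Fin n, C (c i) * X ^ (i : ℕ)

/-- `S_R(x) = ∑_{m ∈ M_R(n)} e_p(m x)`. -/
def SRP (R : Finset (ZMod p)) (n : ℕ) (x : LaurentSeries (ZMod p)) : ℂ :=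
  ∑ m ∈ MRP p R n, eP p (toLSP p m * x)

/-- The Fourier coefficient `1̂_A(r) = ∑_{a ∈ A} ψ(a r)`. -/
def fhatP (A : Finset (ZMod p)) (r : ZMod p) : ℂ := ∑ a ∈ A, psiP p (a * r)


namespace RC
variable {p}

/-! ### Digit sequences, monic polynomials and additive characters -/

/-- The left shift on sequences. -/
def shift : Module.End (ZMod p) (ℕ → ZMod p) :=
  LinearMap.funLeft (ZMod p) (ZMod p) Nat.succ

/-- The action of a polynomial on a sequence, `X` acting as the left shift. -/
def act (f : (ZMod p)[X]) (x : ℕ → ZMod p) : ℕ → ZMod p := aeval (shift (p := p)) f x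

lemma shift_pow (i : ℕ) (x : ℕ → ZMod p) (j : ℕ) : ((shift (p := p)) ^ i) x j = x (i + j) := by
  induction i generalizing j with
  | zero => simp
  | succ k ih =>
    rw [pow_succ']
    show ((shift (p := p)) ^ k) x (j + 1) = _
    rw [ih]; congr 1; ring

lemma act_mul (f g : (ZMod p)[X]) (x : ℕ → ZMod p) : act (f * g) x = act f (act g x) := by
  simp [act, Module.End.mul_apply]

lemma act_add (f g : (ZMod p)[X]) (x : ℕ → ZMod p) : act (f + g) x = act f x + act g x := by
  simp [act]

lemma act_sub (f g : (ZMod p)[X]) (x : ℕ → ZMod p) : act (f - g) x = act f x - act g x := by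
  simp [act]

lemma act_smul (a : ZMod p) (f : (ZMod p)[X]) (x : ℕ → ZMod p) :
    act (a • f) x = a • act f x := by
  simp [act]

@[simp] lemma act_zero (x : ℕ → ZMod p) : act 0 x = 0 := by simp [act]
@[simp] lemma act_one (x : ℕ → ZMod p) : act 1 x = x := by simp [act]

lemma act_sub_right (f : (ZMod p)[X]) (x y : ℕ → ZMod p) :
    act f (x - y) = act f x - act f y := by simp [act]

lemma act_X_pow (k : ℕ) (x : ℕ → ZMod p) (j : ℕ) : act (X ^ k) x j = x (k + j) := by
  simp [act, shift_pow]

lemma act_apply (f : (ZMod p)[X]) (x : ℕ → ZMod p) (j : ℕ) {N : ℕ} (h : f.natDegree < N) :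
    act f x j = ∑ i ∈ Finset.range N, f.coeff i * x (i + j) := by
  unfold act
  rw [aeval_eq_sum_range' h]
  simp [LinearMap.sum_apply, Finset.sum_apply, shift_pow]

lemma act_comm (f g : (ZMod p)[X]) (x : ℕ → ZMod p) : act f (act g x) = act g (act f x) := by
  rw [← act_mul, ← act_mul, mul_comm]

lemma act_congr {f : (ZMod p)[X]} {x y : ℕ → ZMod p} {j N : ℕ} (hf : f.natDegree ≤ N)
    (h : ∀ i ≤ N, x (i + j) = y (i + j)) : act f x j = act f y j := by
  rw [act_apply f x j (Nat.lt_succ_of_le hf), act_apply f y j (Nat.lt_succ_of_le hf)]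
  refine Finset.sum_congr rfl fun i hi => ?_
  rw [h i (by simpa [Nat.lt_succ_iff] using hi)]

/-- The polynomial of degree less than `k` with coefficient vector `c`. -/
def low {k : ℕ} (c : Fin k → ZMod p) : (ZMod p)[X] := ∑ i : Fin k, C (c i) * X ^ (i : ℕ)

/-- The monic polynomial of degree `k` with non-leading coefficient vector `c`. -/
def mon {k : ℕ} (c : Fin k → ZMod p) : (ZMod p)[X] := X ^ k + low c

/-- Extension by zero of a finite digit vector. -/
def ext {k : ℕ} (c : Fin k → ZMod p) : ℕ → ZMod p := fun j => if h : j < k then c ⟨j, h⟩ else 0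

@[simp] lemma ext_val {k : ℕ} (c : Fin k → ZMod p) (i : Fin k) : ext c i = c i := by simp [ext]

lemma low_coeff {k : ℕ} (c : Fin k → ZMod p) (j : ℕ) : (low c).coeff j = ext c j := by
  unfold low ext
  rw [finsetSum_coeff]
  simp only [coeff_C_mul, coeff_X_pow]
  split_ifs with h
  · rw [Finset.sum_eq_single ⟨j, h⟩] <;> simp +contextual [Fin.ext_iff, eq_comm]
  · refine Finset.sum_eq_zero fun i _ => ?_
    have : j ≠ i := by have := i.2; omega
    simp [this]

lemma low_degree_lt {k : ℕ} (c : Fin k → ZMod p) : (low c).degree < k := by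
  rw [degree_lt_iff_coeff_zero]
  intro m hm
  rw [low_coeff]; simp [ext, not_lt.mpr hm]

lemma low_injective {k : ℕ} : Function.Injective (low (p := p) (k := k)) := by
  intro c d h
  funext i
  have := congrArg (fun f => f.coeff (i : ℕ)) h
  simpa [low_coeff] using this

lemma exists_low {k : ℕ} {f : (ZMod p)[X]} (h : f.degree < k) : ∃ c : Fin k → ZMod p, low c = f := by
  refine ⟨fun i => f.coeff i, ?_⟩
  ext j
  rw [low_coeff]
  unfold ext
  split_ifs with hj
  · rfl
  · exact ((degree_lt_iff_coeff_zero _ _).1 h j (not_lt.1 hj)).symm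

lemma mon_monic {k : ℕ} (c : Fin k → ZMod p) : (mon c).Monic :=
  monic_X_pow_add (low_degree_lt c)

lemma mon_natDegree {k : ℕ} (c : Fin k → ZMod p) : (mon c).natDegree = k :=
  natDegree_eq_of_degree_eq_some (by
    unfold mon
    rw [degree_add_eq_left_of_degree_lt, degree_X_pow]
    rw [degree_X_pow]; exact low_degree_lt c)

lemma mon_injective {k : ℕ} : Function.Injective (mon (p := p) (k := k)) := by
  intro c d h
  exact low_injective (add_left_cancel h)

lemma exists_mon {k : ℕ} {f : (ZMod p)[X]} (h : f.Monic) (hk : f.natDegree = k) :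
    ∃ c : Fin k → ZMod p, mon c = f := by
  obtain ⟨c, hc⟩ := exists_low (k := k) (f := f - X ^ k) (by
    have h0 : f ≠ 0 := h.ne_zero
    have : f.degree = k := by rw [degree_eq_natDegree h0, hk]
    rw [← this]
    apply degree_sub_lt_left
    · rw [this, degree_X_pow]
    · exact h0
    · simp [h.leadingCoeff])
  exact ⟨c, by rw [mon, hc]; ring⟩

variable (p) in
/-- The monic polynomials of degree `k`. -/
def monics (k : ℕ) : Finset (ZMod p)[X] := Finset.univ.image (mon (p := p) (k := k))

lemma mem_monics {k : ℕ} {f : (ZMod p)[X]} : f ∈ monics p k ↔ f.Monic ∧ f.natDegree = k := by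
  unfold monics
  simp only [Finset.mem_image, Finset.mem_univ, true_and]
  constructor
  · rintro ⟨c, rfl⟩; exact ⟨mon_monic c, mon_natDegree c⟩
  · rintro ⟨h, h'⟩; exact exists_mon h h'

lemma sum_monics {M : Type*} [AddCommMonoid M] (k : ℕ) (g : (ZMod p)[X] → M) :
    ∑ f ∈ monics p k, g f = ∑ c : Fin k → ZMod p, g (mon c) := by
  unfold monics
  rw [Finset.sum_image (fun _ _ _ _ h => mon_injective h)]

lemma card_monics (k : ℕ) : (monics p k).card = p ^ k := by
  unfold monics
  rw [Finset.card_image_of_injective _ mon_injective]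
  simp [ZMod.card]

variable (p) in
/-- The standard additive character of `𝔽_p`. -/
abbrev ψ : AddChar (ZMod p) ℂ := ZMod.stdAddChar

lemma norm_ψ (a : ZMod p) : ‖ψ p a‖ = 1 := by
  exact AddChar.norm_apply _ _

lemma sum_ψ_mul (a : ZMod p) : ∑ x : ZMod p, ψ p (x * a) = if a = 0 then (p : ℂ) else 0 := by
  have := AddChar.sum_mulShift a (ZMod.isPrimitive_stdAddChar p)
  simpa [ZMod.card] using this

lemma ψ_sum {ι : Type*} (s : Finset ι) (g : ι → ZMod p) :
    ψ p (∑ i ∈ s, g i) = ∏ i ∈ s, ψ p (g i) := by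
  induction s using Finset.induction_on with
  | empty => simp
  | insert a s ha ih => rw [Finset.sum_insert ha, Finset.prod_insert ha, AddChar.map_add_eq_mul, ih]

/-- Orthogonality on `𝔽_p^k`. -/
lemma sum_ψ_pi {k : ℕ} (y : Fin k → ZMod p) :
    ∑ c : Fin k → ZMod p, ψ p (∑ i, c i * y i) = if ∀ i, y i = 0 then (p : ℂ) ^ k else 0 := by
  simp_rw [ψ_sum]
  have := Finset.prod_univ_sum (fun _ : Fin k => (Finset.univ : Finset (ZMod p)))
    (fun i x => ψ p (x * y i))
  rw [Fintype.piFinset_univ] at this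
  rw [← this]
  simp_rw [sum_ψ_mul]
  split_ifs with h
  · simp [h]
  · push Not at h
    obtain ⟨i, hi⟩ := h
    exact Finset.prod_eq_zero (Finset.mem_univ i) (by simp [hi])

/-- The additive character `f ↦ ψ(∑ f_i x_i)` attached to a sequence `x`. -/
def E (x : ℕ → ZMod p) (f : (ZMod p)[X]) : ℂ := ψ p (act f x 0)

lemma norm_E (x : ℕ → ZMod p) (f : (ZMod p)[X]) : ‖E x f‖ = 1 := norm_ψ _

lemma E_mul (x : ℕ → ZMod p) (f g : (ZMod p)[X]) : E x (f * g) = E (act g x) f := by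
  simp [E, act_mul]

lemma E_add (x : ℕ → ZMod p) (f g : (ZMod p)[X]) : E x (f + g) = E x f * E x g := by
  simp [E, act_add, AddChar.map_add_eq_mul]

lemma act_low {k : ℕ} (c : Fin k → ZMod p) (x : ℕ → ZMod p) (j : ℕ) :
    act (low c) x j = ∑ i : Fin k, c i * x (i + j) := by
  have h : (low c).natDegree < k ∨ low c = 0 := by
    by_cases h0 : low c = 0
    · exact Or.inr h0
    · left; exact (natDegree_lt_iff_degree_lt h0).2 (low_degree_lt c)
  rcases h with h | h
  · rw [act_apply _ _ _ h, Finset.sum_range]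
    simp [low_coeff]
  · have hc : c = 0 := low_injective (h.trans (by simp [low]))
    subst hc; simp [low, act]

lemma sum_E_low (k : ℕ) (x : ℕ → ZMod p) :
    ∑ c : Fin k → ZMod p, E x (low c) = if ∀ i < k, x i = 0 then (p : ℂ) ^ k else 0 := by
  have := sum_ψ_pi (k := k) (fun i => x i)
  simp only [E, act_low, add_zero]
  rw [this]
  congr 1
  simp only [eq_iff_iff]
  exact ⟨fun h i hi => h ⟨i, hi⟩, fun h i => h i i.2⟩

/-- The character sum over all monic polynomials of degree `k`. -/
lemma sum_E_monics (k : ℕ) (x : ℕ → ZMod p) :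
    ∑ f ∈ monics p k, E x f = if ∀ i < k, x i = 0 then E x (X ^ k) * (p : ℂ) ^ k else 0 := by
  rw [sum_monics]
  simp only [mon, E_add, ← Finset.mul_sum, sum_E_low]
  split_ifs <;> simp

lemma norm_sum_E_monics (k : ℕ) (x : ℕ → ZMod p) :
    ‖∑ f ∈ monics p k, E x f‖ = if ∀ i < k, x i = 0 then (p : ℝ) ^ k else 0 := by
  rw [sum_E_monics]
  split_ifs
  · simp [norm_E]
  · simp

/-! ### Hankel ranks and linear recurrences -/

/-- The polynomials of degree less than `a` which annihilate the digits `0, …, b-1` of `x`: the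
kernel of an `a × b` Hankel matrix of `x`. -/
def Ann (a b : ℕ) (x : ℕ → ZMod p) : Submodule (ZMod p) (ZMod p)[X] where
  carrier := {w | w.degree < a ∧ ∀ j < b, act w x j = 0}
  add_mem' := by
    rintro u v ⟨hu, hu'⟩ ⟨hv, hv'⟩
    refine ⟨(degree_add_le _ _).trans_lt (max_lt hu hv), fun j hj => ?_⟩
    simp [act_add, hu' j hj, hv' j hj]
  zero_mem' := by simp
  smul_mem' := by
    rintro c u ⟨hu, hu'⟩
    refine ⟨(degree_smul_le _ _).trans_lt hu, fun j hj => ?_⟩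
    simp [act_smul, hu' j hj]

lemma mem_Ann {a b : ℕ} {x : ℕ → ZMod p} {w : (ZMod p)[X]} :
    w ∈ Ann a b x ↔ w.degree < a ∧ ∀ j < b, act w x j = 0 := Iff.rfl

lemma Ann_le (a b : ℕ) (x : ℕ → ZMod p) : Ann a b x ≤ degreeLT (ZMod p) a := fun _ h =>
  mem_degreeLT.2 h.1

instance finite_degreeLT (a : ℕ) : Module.Finite (ZMod p) (degreeLT (ZMod p) a) :=
  Module.Finite.equiv (degreeLTEquiv (ZMod p) a).symm

instance finite_Ann (a b : ℕ) (x : ℕ → ZMod p) : Module.Finite (ZMod p) (Ann a b x) :=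
  Module.Finite.of_injective (Submodule.inclusion (Ann_le a b x))
    (Submodule.inclusion_injective _)

/-- The number of polynomials of degree less than `a` annihilating the first `b` digits. -/
def annCard (a b : ℕ) (x : ℕ → ZMod p) : ℕ :=
  (Finset.univ.filter fun c : Fin a → ZMod p => ∀ j < b, act (low c) x j = 0).card

lemma annCard_eq (a b : ℕ) (x : ℕ → ZMod p) :
    annCard a b x = p ^ Module.finrank (ZMod p) (Ann a b x) := by
  have e : {c : Fin a → ZMod p // ∀ j < b, act (low c) x j = 0} ≃ Ann a b x :=
    Equiv.ofBijective (fun c => ⟨low c.1, low_degree_lt _, c.2⟩) (by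
      constructor
      · intro c d h
        exact Subtype.ext (low_injective (congrArg Subtype.val h))
      · rintro ⟨w, hw, hw'⟩
        obtain ⟨c, rfl⟩ := exists_low hw
        exact ⟨⟨c, hw'⟩, rfl⟩)
  have h1 := Module.natCard_eq_pow_finrank (K := ZMod p) (V := Ann a b x)
  rw [Nat.card_zmod] at h1
  rw [← h1, ← Nat.card_congr e, Nat.card_eq_fintype_card, Fintype.card_subtype]
  rfl

/-- Transposing a Hankel matrix: both sides evaluate the double sum of `E x (low c * low d)`. -/
lemma annCard_symm (a b : ℕ) (x : ℕ → ZMod p) :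
    annCard a b x * p ^ b = annCard b a x * p ^ a := by
  have key : ∀ a b : ℕ, ∑ c : Fin a → ZMod p, ∑ d : Fin b → ZMod p, E x (low c * low d)
      = ((annCard a b x * p ^ b : ℕ) : ℂ) := by
    intro a b
    have : ∀ c : Fin a → ZMod p, ∑ d : Fin b → ZMod p, E x (low c * low d)
        = if ∀ j < b, act (low c) x j = 0 then (p : ℂ) ^ b else 0 := by
      intro c
      rw [← sum_E_low]
      refine Finset.sum_congr rfl fun d _ => ?_
      rw [mul_comm, E_mul]
    simp_rw [this]
    rw [← Finset.sum_filter, Finset.sum_const, annCard]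
    simp
  have h1 := key a b
  rw [Finset.sum_comm] at h1
  simp_rw [fun (c : Fin a → ZMod p) (d : Fin b → ZMod p) => mul_comm (low c) (low d)] at h1
  rw [key b a] at h1
  exact_mod_cast h1.symm

lemma finrank_le_of_degree {V : Submodule (ZMod p) (ZMod p)[X]} {a k : ℕ}
    (h : ∀ v ∈ V, v ≠ 0 → a ≤ v.natDegree ∧ v.natDegree < a + k) :
    Module.finrank (ZMod p) V ≤ k := by
  let T : V →ₗ[ZMod p] (Fin k → ZMod p) :=
    LinearMap.pi fun i => (lcoeff (ZMod p) (a + i)).comp V.subtype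
  have hT : Function.Injective T := by
    rw [← LinearMap.ker_eq_bot, LinearMap.ker_eq_bot']
    intro v hv
    by_contra hne
    have hne' : (v : (ZMod p)[X]) ≠ 0 := by simpa using hne
    obtain ⟨h1, h2⟩ := h v v.2 hne'
    have := congrFun hv ⟨(v : (ZMod p)[X]).natDegree - a, by omega⟩
    have h3 : (v : (ZMod p)[X]).coeff (a + ((v : (ZMod p)[X]).natDegree - a)) = 0 := this
    rw [Nat.add_sub_cancel' h1] at h3
    exact hne' (leadingCoeff_eq_zero.1 h3)
  simpa using LinearMap.finrank_le_finrank_of_injective hT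

lemma finrank_Ann_le (a b : ℕ) (x : ℕ → ZMod p) : Module.finrank (ZMod p) (Ann a b x) ≤ a :=
  finrank_le_of_degree (a := 0) fun v hv h0 =>
    ⟨Nat.zero_le _, by rw [zero_add]; exact (natDegree_lt_iff_degree_lt h0).2 hv.1⟩

lemma X_mul_mem {a b : ℕ} {x : ℕ → ZMod p} {w : (ZMod p)[X]} (h : w ∈ Ann a (b + 1) x) :
    X * w ∈ Ann (a + 1) b x := by
  refine ⟨?_, fun j hj => ?_⟩
  · by_cases h0 : w = 0
    · subst h0; simp
    · have := (natDegree_lt_iff_degree_lt h0).2 h.1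
      rw [← natDegree_lt_iff_degree_lt (mul_ne_zero X_ne_zero h0), natDegree_X_mul h0]
      omega
  · rw [act_mul]
    have := act_X_pow 1 (act w x) j
    rw [pow_one] at this
    rw [this]; exact h.2 _ (by omega)

/-- Passing from an `a × (b+1)` to an `(a+1) × b` Hankel matrix enlarges a nonzero kernel, since
a nonzero space of polynomials of bounded degree is not stable under multiplication by `X`. -/
lemma finrank_Ann_succ {a b : ℕ} {x : ℕ → ZMod p} (h : Ann a (b + 1) x ≠ ⊥) :
    Module.finrank (ZMod p) (Ann a (b + 1) x) + 1 ≤ Module.finrank (ZMod p) (Ann (a + 1) b x) := by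
  have hle : Ann a (b + 1) x ≤ Ann (a + 1) b x := fun w hw =>
    ⟨hw.1.trans (by exact_mod_cast Nat.lt_succ_self a), fun j hj => hw.2 j (by omega)⟩
  have hne : Ann a (b + 1) x ≠ Ann (a + 1) b x := by
    intro heq
    obtain ⟨w, hw, h0⟩ := (Submodule.ne_bot_iff _).1 h
    have : ∀ k : ℕ, X ^ k * w ∈ Ann a (b + 1) x := by
      intro k
      induction k with
      | zero => simpa using hw
      | succ k ih =>
        rw [pow_succ', mul_assoc, heq]
        exact X_mul_mem ih
    have h1 := (natDegree_lt_iff_degree_lt (mul_ne_zero (pow_ne_zero _ X_ne_zero) h0)).2 (this a).1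
    rw [natDegree_X_pow_mul _ h0] at h1
    omega
  exact Submodule.finrank_lt_finrank_of_lt (lt_of_le_of_ne hle hne)

lemma Ann_mono_ne_bot {a b : ℕ} {x : ℕ → ZMod p} (k : ℕ) (h : Ann a (b + k) x ≠ ⊥) :
    Module.finrank (ZMod p) (Ann a (b + k) x) + k ≤ Module.finrank (ZMod p) (Ann (a + k) b x) := by
  induction k generalizing b with
  | zero => simp
  | succ k ih =>
    have e : b + (k + 1) = (b + 1) + k := by ring
    rw [e] at h ⊢
    have h1 := ih h
    have h2 : Ann (a + k) (b + 1) x ≠ ⊥ := by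
      intro h2
      have h3 : 0 < Module.finrank (ZMod p) (Ann a (b + 1 + k) x) :=
        Module.finrank_pos_iff.2 ((Submodule.nontrivial_iff_ne_bot).2 h)
      rw [h2, finrank_bot] at h1
      omega
    have h3 := finrank_Ann_succ h2
    rw [show a + (k + 1) = a + k + 1 by ring]
    omega

/-- The rank of the most nearly square Hankel matrix formed from the digits `0, …, n-1`. -/
def rk (n : ℕ) (x : ℕ → ZMod p) : ℕ := n / 2 - Module.finrank (ZMod p) (Ann (n / 2) (n - n / 2) x)

lemma rk_le (n : ℕ) (x : ℕ → ZMod p) : rk n x ≤ n / 2 := Nat.sub_le _ _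

lemma finrank_add_rk (n : ℕ) (x : ℕ → ZMod p) :
    Module.finrank (ZMod p) (Ann (n / 2) (n - n / 2) x) + rk n x = n / 2 := by
  have := finrank_Ann_le (n / 2) (n - n / 2) x
  unfold rk; omega

lemma finrank_Ann_rk {n e v : ℕ} (hn : e + v = n) (he : e ≤ n / 2) {x : ℕ → ZMod p}
    (h : Ann e v x ≠ ⊥) : Module.finrank (ZMod p) (Ann e v x) + rk n x ≤ e := by
  have h1 := Ann_mono_ne_bot (a := e) (b := n - n / 2) (n / 2 - e) (x := x) (by
    rw [show n - n / 2 + (n / 2 - e) = v by omega]; exact h)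
  rw [show n - n / 2 + (n / 2 - e) = v by omega, show e + (n / 2 - e) = n / 2 by omega] at h1
  have := finrank_add_rk n x
  omega

lemma annCard_bound_aux {n e v : ℕ} (hn : e + v = n) (he : e ≤ n / 2) (x : ℕ → ZMod p) :
    annCard e v x * p ^ min e (rk n x) ≤ p ^ e := by
  have hp : 0 < p := (Fact.out : p.Prime).pos
  rw [annCard_eq, ← pow_add]
  apply Nat.pow_le_pow_right hp
  by_cases h : Ann e v x = ⊥
  · rw [h, finrank_bot]; omega
  · have := finrank_Ann_rk hn he h; omega

/-- Few polynomials annihilate `x` when its rank is large. -/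
lemma annCard_bound {n e v : ℕ} (hn : e + v = n) (x : ℕ → ZMod p) :
    annCard e v x * p ^ min (min e v) (rk n x) ≤ p ^ e := by
  have hp : 0 < p := (Fact.out : p.Prime).pos
  have hr := rk_le n x
  by_cases he : e ≤ n / 2
  · refine le_trans ?_ (annCard_bound_aux hn he x)
    exact Nat.mul_le_mul_left _ (Nat.pow_le_pow_right hp (by omega))
  · have h1 := annCard_bound_aux (n := n) (e := v) (v := e) (by omega) (by omega) x
    have h2 := annCard_symm e v x
    rw [show min (min e v) (rk n x) = min v (rk n x) by omega]
    have h3 : p ^ v * (annCard e v x * p ^ min v (rk n x)) ≤ p ^ v * p ^ e := by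
      calc p ^ v * (annCard e v x * p ^ min v (rk n x))
          = (annCard e v x * p ^ v) * p ^ min v (rk n x) := by ring
        _ = (annCard v e x * p ^ min v (rk n x)) * p ^ e := by rw [h2]; ring
        _ ≤ p ^ v * p ^ e := Nat.mul_le_mul_right _ h1
    exact Nat.le_of_mul_le_mul_left h3 (pow_pos hp v)

/-- The number of monic polynomials of degree `e` annihilating the first `v` digits. -/
def monCard (e v : ℕ) (x : ℕ → ZMod p) : ℕ :=
  ((monics p e).filter fun w => ∀ i < v, act w x i = 0).card

lemma monCard_le_annCard (e v : ℕ) (x : ℕ → ZMod p) : monCard e v x ≤ annCard e v x := by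
  unfold monCard
  by_cases h : ((monics p e).filter fun w => ∀ i < v, act w x i = 0).Nonempty
  · obtain ⟨w₀, h₀⟩ := h
    rw [Finset.mem_filter, mem_monics] at h₀
    obtain ⟨c₀, rfl⟩ := exists_mon h₀.1.1 h₀.1.2
    unfold monics annCard
    rw [Finset.filter_image, Finset.card_image_of_injective _ mon_injective]
    refine Finset.card_le_card_of_injOn (fun c => c - c₀) ?_ ?_
    · intro c hc
      simp only [Finset.coe_filter, Finset.mem_univ, true_and, Set.mem_ofPred_eq] at hc ⊢
      intro j hj
      have : low (c - c₀) = mon c - mon c₀ := by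
        simp [mon, low, sub_mul, Finset.sum_sub_distrib]
      rw [this, act_sub, Pi.sub_apply, hc j hj, h₀.2 j hj, sub_zero]
    · intro c _ d _ h
      exact sub_left_injective h
  · rw [Finset.not_nonempty_iff_eq_empty] at h
    rw [h]; simp

lemma monCard_bound {n e v : ℕ} (hn : e + v = n) (x : ℕ → ZMod p) :
    monCard e v x * p ^ min v (rk n x) ≤ p ^ e := by
  have hp : 0 < p := (Fact.out : p.Prime).pos
  have hr := rk_le n x
  by_cases he : rk n x ≤ e ∨ v ≤ e
  · refine le_trans (Nat.mul_le_mul_right _ (monCard_le_annCard e v x)) ?_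
    have := annCard_bound hn x
    rwa [show min (min e v) (rk n x) = min v (rk n x) by omega] at this
  · push Not at he
    have : monCard e v x = 0 := by
      unfold monCard
      rw [Finset.card_eq_zero, Finset.filter_eq_empty_iff]
      intro w hw h
      rw [mem_monics] at hw
      have hmem : w ∈ Ann (e + 1) (v - 1) x := by
        refine ⟨?_, fun j hj => h j (by omega)⟩
        rw [← natDegree_lt_iff_degree_lt hw.1.ne_zero]; omega
      have hne : Ann (e + 1) (v - 1) x ≠ ⊥ := fun hb => hw.1.ne_zero (by simpa [hb] using hmem)
      have h1 := finrank_Ann_rk (n := n) (by omega) (by omega) hne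
      have h3 : 0 < Module.finrank (ZMod p) (Ann (e + 1) (v - 1) x) :=
        Module.finrank_pos_iff.2 ((Submodule.nontrivial_iff_ne_bot).2 hne)
      omega
    rw [this]; simp

/-- `g` is a monic element of least degree `d` in the kernel of the square Hankel matrix of `x`. -/
def IsMin (n d : ℕ) (x : ℕ → ZMod p) (g : (ZMod p)[X]) : Prop :=
  g.Monic ∧ g.natDegree = d ∧ g ∈ Ann (n / 2) (n - n / 2) x ∧
    ∀ w ∈ Ann (n / 2) (n - n / 2) x, w ≠ 0 → d ≤ w.natDegree

lemma exists_isMin {n : ℕ} {x : ℕ → ZMod p} (h : rk n x < n / 2) : ∃ d g, IsMin n d x g := by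
  have hne : Ann (n / 2) (n - n / 2) x ≠ ⊥ := by
    intro hb
    have := finrank_add_rk n x
    rw [hb, finrank_bot] at this; omega
  have hex : ∃ d, ∃ w ∈ Ann (n / 2) (n - n / 2) x, w ≠ 0 ∧ w.natDegree = d := by
    obtain ⟨w, hw, h0⟩ := (Submodule.ne_bot_iff _).1 hne
    exact ⟨_, w, hw, h0, rfl⟩
  obtain ⟨w, hw, h0, hd⟩ := Nat.find_spec hex
  refine ⟨Nat.find hex, C w.leadingCoeff⁻¹ * w, ?_, ?_, ?_, ?_⟩
  · have := monic_mul_leadingCoeff_inv h0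
    rwa [mul_comm] at this
  · rw [natDegree_C_mul (inv_ne_zero (leadingCoeff_ne_zero.2 h0)), hd]
  · rw [← smul_eq_C_mul]; exact Submodule.smul_mem _ _ hw
  · intro v hv hv0
    exact Nat.find_min' hex ⟨v, hv, hv0, rfl⟩

lemma IsMin.le_rk {n d : ℕ} {x : ℕ → ZMod p} {g : (ZMod p)[X]} (h : IsMin n d x g) :
    d ≤ rk n x := by
  obtain ⟨hg, hd, hmem, hmin⟩ := h
  have hdlt : d < n / 2 := by
    rw [← hd]; exact (natDegree_lt_iff_degree_lt hg.ne_zero).2 hmem.1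
  have := finrank_le_of_degree (V := Ann (n / 2) (n - n / 2) x) (a := d) (k := n / 2 - d)
    (fun v hv h0 => ⟨hmin v hv h0, by
      have := (natDegree_lt_iff_degree_lt h0).2 hv.1; omega⟩)
  have := finrank_add_rk n x
  omega

lemma act_top {v : (ZMod p)[X]} {y : ℕ → ZMod p} {j : ℕ} (h : ∀ i < v.natDegree, y (i + j) = 0) :
    act v y j = v.leadingCoeff * y (v.natDegree + j) := by
  rw [act_apply v y j (Nat.lt_succ_self _), Finset.sum_range_succ, Finset.sum_eq_zero]
  · rw [zero_add]; rfl
  · intro i hi; rw [h i (Finset.mem_range.1 hi), mul_zero]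

lemma act_eq_zero {v : (ZMod p)[X]} {y : ℕ → ZMod p} {j : ℕ}
    (h : ∀ i ≤ v.natDegree, y (i + j) = 0) : act v y j = 0 := by
  rw [act_top (fun i hi => h i hi.le), h _ le_rfl, mul_zero]

/-- Sequences of small rank are linear recurrent, up to a short final block of digits. -/
lemma IsMin.recurrence {n d : ℕ} {x : ℕ → ZMod p} {g : (ZMod p)[X]} (h : IsMin n d x g) :
    ∀ j, j + rk n x + 1 < n → act g x j = 0 := by
  have hle := h.le_rk
  obtain ⟨hg, hd, hmem, hmin⟩ := h
  have hdlt : d < n / 2 := by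
    rw [← hd]; exact (natDegree_lt_iff_degree_lt hg.ne_zero).2 hmem.1
  by_contra! hcon
  let s := Nat.find hcon
  obtain ⟨hs1, hs2⟩ := Nat.find_spec hcon
  change s + rk n x + 1 < n at hs1
  change act g x s ≠ 0 at hs2
  have hs3 : ∀ j < s, act g x j = 0 := by
    intro j hj
    by_contra hne
    exact Nat.find_min hcon hj ⟨by omega, hne⟩
  have hs4 : n - n / 2 ≤ s := by
    by_contra hlt
    exact hs2 (hmem.2 s (by omega))
  have hdeg : ∀ v ∈ Ann (n / 2) (n - n / 2) x, v ≠ 0 → v.natDegree ≤ s + d - (n - n / 2) := by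
    intro v hv h0
    by_contra! hlt
    have hvlt := (natDegree_lt_iff_degree_lt h0).2 hv.1
    have h1 : act v (act g x) (s - v.natDegree) = v.leadingCoeff * act g x s := by
      rw [act_top]
      · rw [Nat.add_sub_cancel' (by omega)]
      · intro i hi; exact hs3 _ (by omega)
    have h2 : act g (act v x) (s - v.natDegree) = 0 := by
      apply act_eq_zero
      intro i hi
      exact hv.2 _ (by omega)
    rw [act_comm, h2] at h1
    exact mul_ne_zero (leadingCoeff_ne_zero.2 h0) hs2 h1.symm
  have := finrank_le_of_degree (V := Ann (n / 2) (n - n / 2) x) (a := d) (k := s + 1 - (n - n / 2))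
    (fun v hv h0 => ⟨hmin v hv h0, by have := hdeg v hv h0; omega⟩)
  have := finrank_add_rk n x
  omega

lemma eq_zero_of_recurrence {g : (ZMod p)[X]} {y : ℕ → ZMod p} {d N : ℕ} (hg : g.Monic)
    (hd : g.natDegree = d) (h0 : ∀ j < d, y j = 0) (h : ∀ j, j + d < N → act g y j = 0) :
    ∀ j < N, y j = 0 := by
  intro j
  induction j using Nat.strong_induction_on with
  | _ j ih =>
    intro hj
    by_cases hjd : j < d
    · exact h0 j hjd
    · have h1 := h (j - d) (by omega)
      rw [act_top, hg.leadingCoeff, one_mul, hd, Nat.add_sub_cancel' (by omega)] at h1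
      · exact h1
      · intro i hi; exact ih _ (by omega) (by omega)

/-- A sequence of rank `r < n/2` and minimal recurrence length `d` is determined by `2d` initial
and `r + 1 - d` final digits. -/
lemma eq_of_digits {n d : ℕ} {x x' : ℕ → ZMod p} {g g' : (ZMod p)[X]} (h : IsMin n d x g)
    (h' : IsMin n d x' g') (hr : rk n x = rk n x') (hlt : rk n x < n / 2)
    (h1 : ∀ j < 2 * d, x j = x' j) (h2 : ∀ j, n ≤ j + rk n x + 1 - d → j < n → x j = x' j) :
    ∀ j < n, x j = x' j := by
  have hle := h.le_rk
  have hrec := h.recurrence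
  have hrec' := h'.recurrence
  rw [← hr] at hrec'
  obtain ⟨hg, hd, hmem, hmin⟩ := h
  obtain ⟨hg', hd', hmem', hmin'⟩ := h'
  have hz : ∀ j < n - rk n x - 1, act g' x j = 0 := by
    apply eq_zero_of_recurrence hg hd
    · intro j hj
      rw [← hrec' j (by omega)]
      exact act_congr hd'.le (fun i hi => h1 _ (by omega))
    · intro j hj
      rw [act_comm]
      exact act_eq_zero (fun i hi => hrec _ (by omega))
  have hg'K : g' ∈ Ann (n / 2) (n - n / 2) x := ⟨hmem'.1, fun j hj => hz j (by omega)⟩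
  have heq : g = g' := by
    by_contra hne
    have hsub := Submodule.sub_mem _ hmem hg'K
    have h3 := hmin _ hsub (sub_ne_zero.2 hne)
    have h4 : (g - g').degree < g.degree := by
      apply degree_sub_lt_left
      · rw [degree_eq_natDegree hg.ne_zero, degree_eq_natDegree hg'.ne_zero, hd, hd']
      · exact hg.ne_zero
      · rw [hg.leadingCoeff, hg'.leadingCoeff]
    have h5 := natDegree_lt_natDegree (sub_ne_zero.2 hne) h4
    omega
  subst heq
  intro j hj
  by_cases hj2 : n ≤ j + rk n x + 1 - d
  · exact h2 j hj2 hj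
  · have := eq_zero_of_recurrence (y := x - x') (N := n - rk n x - 1 + d) hg hd
      (fun j hj => by simp [h1 j (by omega)])
      (fun j hj => by
        rw [act_sub_right, Pi.sub_apply, hrec j (by omega), hrec' j (by omega), sub_zero]) j (by omega)
    simpa [sub_eq_zero] using this

/-- If restriction to the coordinates in `J` is injective on `S`, then a product weight bounded by
one has total mass on `S` at most the `|J|`-th power of its one-dimensional mass. -/
lemma sum_prod_le {n : ℕ} {f : ZMod p → ℝ} (hf0 : ∀ a, 0 ≤ f a) (hf1 : ∀ a, f a ≤ 1)
    (S : Finset (Fin n → ZMod p)) (J : Finset (Fin n))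
    (hinj : ∀ ξ ∈ S, ∀ η ∈ S, (∀ i ∈ J, ξ i = η i) → ξ = η) :
    ∑ ξ ∈ S, ∏ i, f (ξ i) ≤ (∑ a, f a) ^ J.card := by
  have h1 : ∀ ξ : Fin n → ZMod p, ∏ i, f (ξ i) ≤ ∏ i : J, f (ξ i) := by
    intro ξ
    rw [Finset.prod_coe_sort J (fun i => f (ξ i))]
    exact Finset.prod_le_prod_of_subset_of_le_one (Finset.subset_univ _)
      (fun i _ => hf0 _) (fun i _ _ => hf1 _)
  have h2 := Finset.prod_univ_sum (fun _ : J => (Finset.univ : Finset (ZMod p))) (fun _ a => f a)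
  rw [Fintype.piFinset_univ] at h2
  simp only [Finset.prod_const, Finset.card_univ, Fintype.card_coe] at h2
  rw [h2]
  calc ∑ ξ ∈ S, ∏ i, f (ξ i) ≤ ∑ ξ ∈ S, ∏ i : J, f (ξ i) := Finset.sum_le_sum fun ξ _ => h1 ξ
    _ = ∑ η ∈ S.image (fun ξ (i : J) => ξ i), ∏ i : J, f (η i) := by
        rw [Finset.sum_image]
        intro ξ hξ η hη h
        exact hinj ξ hξ η hη (fun i hi => congrFun h ⟨i, hi⟩)
    _ ≤ ∑ η : J → ZMod p, ∏ i : J, f (η i) :=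
        Finset.sum_le_sum_of_subset_of_nonneg (Finset.subset_univ _)
          (fun η _ _ => Finset.prod_nonneg fun i _ => hf0 _)

lemma card_digits_le {n a b : ℕ} : (Finset.univ.filter
    (fun i : Fin n => (i : ℕ) < a ∨ n ≤ (i : ℕ) + b)).card ≤ a + b := by
  have h1 : ((Finset.univ.filter (fun i : Fin n => (i : ℕ) < a ∨ n ≤ (i : ℕ) + b)).image
      (fun i : Fin n => (i : ℕ))) ⊆ Finset.range a ∪ Finset.Ico (n - b) n := by
    intro j hj
    simp only [Finset.mem_image, Finset.mem_filter, Finset.mem_univ, true_and] at hj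
    obtain ⟨i, hi, rfl⟩ := hj
    have := i.2
    simp only [Finset.mem_union, Finset.mem_range, Finset.mem_Ico]
    omega
  rw [← Finset.card_image_of_injective _ (Fin.val_injective (n := n))]
  refine (Finset.card_le_card h1).trans ((Finset.card_union_le _ _).trans ?_)
  simp; omega

lemma sum_biUnion_le' {ι κ : Type*} [DecidableEq κ] (s : Finset ι) (t : ι → Finset κ) (f : κ → ℝ)
    (hf : ∀ x, 0 ≤ f x) : ∑ x ∈ s.biUnion t, f x ≤ ∑ i ∈ s, ∑ x ∈ t i, f x := by
  induction s using Finset.induction_on with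
  | empty => simp
  | insert a s ha ih =>
    rw [Finset.biUnion_insert, Finset.sum_insert ha]
    have := Finset.sum_union_inter (s₁ := t a) (s₂ := s.biUnion t) (f := f)
    have := Finset.sum_nonneg (s := t a ∩ s.biUnion t) (fun x _ => hf x)
    linarith

/-- The total mass of the digit vectors of rank `r` with recurrence length `d`. -/
lemma sum_class_le {n r d : ℕ} (hr : r < n / 2) {f : ZMod p → ℝ} (hf0 : ∀ a, 0 ≤ f a)
    (hf1 : ∀ a, f a ≤ 1) (hf : 1 ≤ ∑ a, f a) :
    ∑ ξ ∈ Finset.univ.filter (fun ξ : Fin n → ZMod p => rk n (ext ξ) = r ∧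
      ∃ g, IsMin n d (ext ξ) g), ∏ i, f (ξ i) ≤ (∑ a, f a) ^ (2 * r + 1) := by
  by_cases hd : d ≤ r
  · refine (sum_prod_le hf0 hf1 _ (Finset.univ.filter
      (fun i => (i : ℕ) < 2 * d ∨ n ≤ (i : ℕ) + (r + 1 - d))) ?_).trans ?_
    · intro ξ hξ η hη h
      simp only [Finset.mem_filter, Finset.mem_univ, true_and] at hξ hη h
      obtain ⟨h1, g, hg⟩ := hξ
      obtain ⟨h1', g', hg'⟩ := hη
      have := eq_of_digits hg hg' (h1.trans h1'.symm) (by omega)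
        (fun j hj => by
          have := h ⟨j, by omega⟩ (Or.inl hj)
          simpa [ext, show j < n by omega] using this)
        (fun j hj hjn => by
          have := h ⟨j, hjn⟩ (Or.inr (by simp only; omega))
          simpa [ext, hjn] using this)
      funext i
      simpa using this i i.2
    · exact pow_le_pow_right₀ hf ((card_digits_le (a := 2 * d) (b := r + 1 - d)).trans (by omega))
  · rw [Finset.filter_false_of_mem, Finset.sum_empty]
    · positivity
    · rintro ξ - ⟨h1, g, hg⟩
      have := hg.le_rk
      omega

lemma sum_rk_le {n r : ℕ} (hr : r < n / 2) {f : ZMod p → ℝ} (hf0 : ∀ a, 0 ≤ f a)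
    (hf1 : ∀ a, f a ≤ 1) (hf : 1 ≤ ∑ a, f a) :
    ∑ ξ ∈ Finset.univ.filter (fun ξ : Fin n → ZMod p => rk n (ext ξ) = r), ∏ i, f (ξ i)
      ≤ (r + 1) * (∑ a, f a) ^ (2 * r + 1) := by
  calc _ ≤ ∑ ξ ∈ (Finset.range (r + 1)).biUnion (fun d => Finset.univ.filter
        (fun ξ : Fin n → ZMod p => rk n (ext ξ) = r ∧ ∃ g, IsMin n d (ext ξ) g)), ∏ i, f (ξ i) := by
        refine Finset.sum_le_sum_of_subset_of_nonneg ?_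
          (fun ξ _ _ => Finset.prod_nonneg fun i _ => hf0 _)
        intro ξ hξ
        simp only [Finset.mem_filter, Finset.mem_univ, true_and, Finset.mem_biUnion,
          Finset.mem_range] at hξ ⊢
        obtain ⟨d, g, hg⟩ := exists_isMin (n := n) (x := ext ξ) (by omega)
        exact ⟨d, by have := hg.le_rk; omega, hξ, g, hg⟩
    _ ≤ ∑ d ∈ Finset.range (r + 1), ∑ ξ ∈ Finset.univ.filter
        (fun ξ : Fin n → ZMod p => rk n (ext ξ) = r ∧ ∃ g, IsMin n d (ext ξ) g), ∏ i, f (ξ i) :=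
        sum_biUnion_le' _ _ _ (fun ξ => Finset.prod_nonneg fun i _ => hf0 _)
    _ ≤ ∑ d ∈ Finset.range (r + 1), (∑ a, f a) ^ (2 * r + 1) :=
        Finset.sum_le_sum fun d _ => sum_class_le hr hf0 hf1 hf
    _ = _ := by simp

/-- The total mass of the digit vectors annihilated by a fixed nonzero polynomial. -/
lemma sum_annihilated_le {n k : ℕ} {v : (ZMod p)[X]} (hv : v ≠ 0) (hd : v.natDegree + k < n)
    {f : ZMod p → ℝ} (hf0 : ∀ a, 0 ≤ f a)
    (hf1 : ∀ a, f a ≤ 1) (hf : 1 ≤ ∑ a, f a) :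
    ∑ ξ ∈ Finset.univ.filter (fun ξ : Fin n → ZMod p => ∀ j < k, act v (ext ξ) j = 0),
      ∏ i, f (ξ i) ≤ (∑ a, f a) ^ (n - k) := by
  refine (sum_prod_le hf0 hf1 _ (Finset.univ.filter
      (fun i => (i : ℕ) < v.natDegree ∨ n ≤ (i : ℕ) + (n - k - v.natDegree))) ?_).trans ?_
  · intro ξ hξ η hη h
    simp only [Finset.mem_filter, Finset.mem_univ, true_and] at hξ hη h
    have key : ∀ j < k + v.natDegree, (ext ξ - ext η) j = 0 := by
      apply eq_zero_of_recurrence (g := C v.leadingCoeff⁻¹ * v)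
      · have := monic_mul_leadingCoeff_inv hv
        rwa [mul_comm] at this
      · rw [natDegree_C_mul (inv_ne_zero (leadingCoeff_ne_zero.2 hv))]
      · intro j hj
        have := h ⟨j, by omega⟩ (Or.inl hj)
        simp [ext, show j < n by omega, this]
      · intro j hj
        rw [← smul_eq_C_mul, act_smul, act_sub_right]
        simp [hξ j (by omega), hη j (by omega)]
    funext i
    by_cases hi : (i : ℕ) < k + v.natDegree
    · simpa [sub_eq_zero] using key i hi
    · exact h i (Or.inr (by omega))
  · exact pow_le_pow_right₀ hf ((card_digits_le (a := v.natDegree)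
      (b := n - k - v.natDegree)).trans (by omega))

/-! ### Möbius and von Mangoldt functions -/

open UniqueFactorizationMonoid in
/-- The multiset of monic irreducible factors. -/
abbrev nf (f : (ZMod p)[X]) : Multiset (ZMod p)[X] := normalizedFactors f

lemma nf_prod {f : (ZMod p)[X]} (hf : f.Monic) : (nf f).prod = f := by
  rw [nf, UniqueFactorizationMonoid.prod_normalizedFactors_eq hf.ne_zero, hf.normalize_eq_self]

lemma nf_irreducible {f P : (ZMod p)[X]} (h : P ∈ nf f) : Irreducible P :=
  UniqueFactorizationMonoid.irreducible_of_normalized_factor P h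

lemma nf_monic {f P : (ZMod p)[X]} (h : P ∈ nf f) : P.Monic := by
  rw [← UniqueFactorizationMonoid.normalize_normalized_factor P h]
  exact monic_normalize (nf_irreducible h).ne_zero

lemma nf_of_prod {s : Multiset (ZMod p)[X]} (h : ∀ P ∈ s, P.Monic ∧ Irreducible P) :
    nf s.prod = s := by
  rw [nf, UniqueFactorizationMonoid.normalizedFactors_prod_eq s (fun P hP => (h P hP).2)]
  conv_rhs => rw [← Multiset.map_id s]
  exact Multiset.map_congr rfl fun P hP => (h P hP).1.normalize_eq_self

lemma monic_prod {s : Multiset (ZMod p)[X]} (h : ∀ P ∈ s, P.Monic ∧ Irreducible P) :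
    s.prod.Monic := monic_multisetProd_of_monic' s h
where
  monic_multisetProd_of_monic' (s : Multiset (ZMod p)[X])
      (h : ∀ P ∈ s, P.Monic ∧ Irreducible P) : s.prod.Monic := by
    have := monic_multiset_prod_of_monic s id (fun P hP => (h P hP).1)
    simpa using this

lemma natDegree_eq_sum_nf {f : (ZMod p)[X]} (hf : f.Monic) :
    f.natDegree = ((nf f).map natDegree).sum := by
  conv_lhs => rw [← nf_prod hf]
  exact natDegree_multiset_prod_of_monic _ (fun P hP => nf_monic hP)

lemma card_nf_le {f : (ZMod p)[X]} (hf : f.Monic) : (nf f).card ≤ f.natDegree := by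
  rw [natDegree_eq_sum_nf hf]
  have := Multiset.card_nsmul_le_sum (s := (nf f).map natDegree) (a := 1) (by
    intro x hx
    obtain ⟨P, hP, rfl⟩ := Multiset.mem_map.1 hx
    exact (nf_irreducible hP).natDegree_pos)
  simpa using this

/-- The monic divisors of a monic polynomial. -/
def mdiv (h : (ZMod p)[X]) : Finset (ZMod p)[X] := (nf h).powerset.toFinset.image Multiset.prod

lemma mem_mdiv {h d : (ZMod p)[X]} (hh : h.Monic) : d ∈ mdiv h ↔ d.Monic ∧ d ∣ h := by
  unfold mdiv
  simp only [Finset.mem_image, Multiset.mem_toFinset, Multiset.mem_powerset]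
  constructor
  · rintro ⟨s, hs, rfl⟩
    refine ⟨monic_prod fun P hP => ⟨nf_monic (Multiset.mem_of_le hs hP),
      nf_irreducible (Multiset.mem_of_le hs hP)⟩, ?_⟩
    have := Multiset.prod_dvd_prod_of_le hs
    rwa [nf_prod hh] at this
  · rintro ⟨hd, hdvd⟩
    refine ⟨nf d, ?_, nf_prod hd⟩
    exact (UniqueFactorizationMonoid.dvd_iff_normalizedFactors_le_normalizedFactors hd.ne_zero
      hh.ne_zero).1 hdvd

lemma card_mdiv_le {h : (ZMod p)[X]} (hh : h.Monic) : (mdiv h).card ≤ 2 ^ h.natDegree := by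
  refine Finset.card_image_le.trans ((Multiset.toFinset_card_le _).trans ?_)
  rw [Multiset.card_powerset]
  exact Nat.pow_le_pow_right (by norm_num) (card_nf_le hh)

/-- The Möbius function of `𝔽_p[X]`. -/
def mu (f : (ZMod p)[X]) : ℂ := if Squarefree f then (-1) ^ (nf f).card else 0

/-- The von Mangoldt function of `𝔽_p[X]`: the degree of `P` at a power of the monic irreducible
`P`, and zero elsewhere. -/
def vM (f : (ZMod p)[X]) : ℕ :=
  if (nf f).toFinset.card = 1 then (nf f).toFinset.sum natDegree else 0

lemma norm_mu_le (f : (ZMod p)[X]) : ‖mu f‖ ≤ 1 := by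
  unfold mu; split_ifs <;> simp

lemma sum_mu {h : (ZMod p)[X]} (hh : h.Monic) :
    ∑ d ∈ mdiv h, mu d = if h = 1 then 1 else 0 := by
  unfold mu
  rw [← Finset.sum_filter]
  have key : ∑ d ∈ (mdiv h).filter Squarefree, ((-1 : ℂ)) ^ (nf d).card
      = ∑ T ∈ (nf h).toFinset.powerset, (-1 : ℂ) ^ T.card := by
    have hT : ∀ T ∈ (nf h).toFinset.powerset, ∀ P ∈ T.val, P.Monic ∧ Irreducible P := by
      intro T hT P hP
      have := Multiset.mem_toFinset.1 (Finset.mem_powerset.1 hT hP)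
      exact ⟨nf_monic this, nf_irreducible this⟩
    refine Finset.sum_bij' (fun d _ => (nf d).toFinset) (fun T _ => T.val.prod) ?_ ?_ ?_ ?_ ?_
    · intro d hd
      obtain ⟨hd, -⟩ := Finset.mem_filter.1 hd
      obtain ⟨hd, hdvd⟩ := (mem_mdiv hh).1 hd
      rw [Finset.mem_powerset]
      exact Multiset.toFinset_subset.2 (Multiset.subset_of_le
        ((UniqueFactorizationMonoid.dvd_iff_normalizedFactors_le_normalizedFactors hd.ne_zero
          hh.ne_zero).1 hdvd))
    · intro T hT'
      rw [Finset.mem_filter, mem_mdiv hh]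
      refine ⟨⟨monic_prod (hT T hT'), ?_⟩, ?_⟩
      · have : T.val ≤ nf h := by
          rw [Multiset.le_iff_subset T.nodup]
          intro P hP
          exact Multiset.mem_toFinset.1 (Finset.mem_powerset.1 hT' hP)
        have := Multiset.prod_dvd_prod_of_le this
        rwa [nf_prod hh] at this
      · rw [UniqueFactorizationMonoid.squarefree_iff_nodup_normalizedFactors
          (monic_prod (hT T hT')).ne_zero]
        have := nf_of_prod (hT T hT')
        rw [nf] at this
        rw [this]; exact T.nodup
    · intro d hd
      obtain ⟨hd, hsq⟩ := Finset.mem_filter.1 hd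
      obtain ⟨hd, hdvd⟩ := (mem_mdiv hh).1 hd
      rw [Multiset.toFinset_val, Multiset.dedup_eq_self.2, nf_prod hd]
      exact (UniqueFactorizationMonoid.squarefree_iff_nodup_normalizedFactors hd.ne_zero).1 hsq
    · intro T hT'
      simp only [nf_of_prod (hT T hT')]
      exact Finset.val_toFinset T
    · intro d hd
      obtain ⟨hd, hsq⟩ := Finset.mem_filter.1 hd
      obtain ⟨hd, hdvd⟩ := (mem_mdiv hh).1 hd
      rw [Multiset.toFinset_card_of_nodup]
      exact (UniqueFactorizationMonoid.squarefree_iff_nodup_normalizedFactors hd.ne_zero).1 hsq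
  rw [key]
  have h2 := Finset.sum_powerset_neg_one_pow_card (x := (nf h).toFinset)
  have h3 : ((nf h).toFinset = ∅) ↔ h = 1 := by
    rw [Multiset.toFinset_eq_empty]
    constructor
    · intro h0; rw [← nf_prod hh, h0, Multiset.prod_zero]
    · rintro rfl; exact UniqueFactorizationMonoid.normalizedFactors_one
  have h4 := congrArg (Int.cast : ℤ → ℂ) h2
  push_cast at h4
  rw [h4]
  simp only [h3]

lemma nf_pow {P : (ZMod p)[X]} (hP : P.Monic) (hi : Irreducible P) (k : ℕ) :
    nf (P ^ k) = Multiset.replicate k P := by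
  have := nf_of_prod (s := Multiset.replicate k P) (by
    intro Q hQ; rw [Multiset.eq_of_mem_replicate hQ]; exact ⟨hP, hi⟩)
  rwa [Multiset.prod_replicate] at this

lemma vM_pow {P : (ZMod p)[X]} (hP : P.Monic) (hi : Irreducible P) {k : ℕ} (hk : k ≠ 0) :
    vM (P ^ k) = P.natDegree := by
  unfold vM
  rw [nf_pow hP hi, Multiset.toFinset_replicate, if_neg hk]
  simp

lemma vM_eq {f : (ZMod p)[X]} (hf : f.Monic) (h : (nf f).toFinset.card = 1) :
    ∃ P k, P.Monic ∧ Irreducible P ∧ k ≠ 0 ∧ f = P ^ k := by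
  obtain ⟨P, hP⟩ := Finset.card_eq_one.1 h
  have hmem : P ∈ nf f := by rw [← Multiset.mem_toFinset, hP]; simp
  have h2 : nf f = Multiset.replicate (nf f).card P := by
    rw [Multiset.eq_replicate]
    refine ⟨rfl, fun Q hQ => ?_⟩
    rw [← Multiset.mem_toFinset, hP] at hQ
    simpa using hQ
  refine ⟨P, (nf f).card, nf_monic hmem, nf_irreducible hmem, ?_, ?_⟩
  · intro h0; rw [Multiset.card_eq_zero] at h0; simp [h0] at hmem
  · conv_lhs => rw [← nf_prod hf, h2]
    rw [Multiset.prod_replicate]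

lemma sum_vM {h : (ZMod p)[X]} (hh : h.Monic) : ∑ d ∈ mdiv h, vM d = h.natDegree := by
  unfold vM
  rw [← Finset.sum_filter]
  have key : ∑ d ∈ (mdiv h).filter (fun d => (nf d).toFinset.card = 1), (nf d).toFinset.sum natDegree
      = ∑ x ∈ (nf h).toFinset.sigma (fun P => Finset.Icc 1 ((nf h).count P)), x.1.natDegree := by
    symm
    refine Finset.sum_bij (fun x _ => x.1 ^ x.2) ?_ ?_ ?_ ?_
    · rintro ⟨P, k⟩ hx
      simp only [Finset.mem_sigma, Multiset.mem_toFinset, Finset.mem_Icc] at hx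
      obtain ⟨hP, hk1, hk2⟩ := hx
      rw [Finset.mem_filter, mem_mdiv hh, nf_pow (nf_monic hP) (nf_irreducible hP)]
      refine ⟨⟨(nf_monic hP).pow _, ?_⟩, ?_⟩
      · have := Multiset.prod_dvd_prod_of_le (Multiset.le_count_iff_replicate_le.1 hk2)
        rwa [nf_prod hh, Multiset.prod_replicate] at this
      · rw [Multiset.toFinset_replicate, if_neg (by simp only; omega)]; simp
    · rintro ⟨P, k⟩ hx ⟨Q, l⟩ hy hxy
      simp only [Finset.mem_sigma, Multiset.mem_toFinset, Finset.mem_Icc] at hx hy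
      simp only at hxy
      have h1 := congrArg nf hxy
      rw [nf_pow (nf_monic hx.1) (nf_irreducible hx.1),
        nf_pow (nf_monic hy.1) (nf_irreducible hy.1)] at h1
      have h2 := congrArg Multiset.card h1
      simp only [Multiset.card_replicate] at h2
      subst h2
      have : P = Q := (Multiset.replicate_right_inj (by omega)).1 h1
      rw [this]
    · intro d hd
      obtain ⟨hd, hc⟩ := Finset.mem_filter.1 hd
      obtain ⟨hd, hdvd⟩ := (mem_mdiv hh).1 hd
      obtain ⟨P, k, hP, hi, hk, rfl⟩ := vM_eq hd hc
      have hle := (UniqueFactorizationMonoid.dvd_iff_normalizedFactors_le_normalizedFactors hd.ne_zero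
          hh.ne_zero).1 hdvd
      change nf (P ^ k) ≤ nf h at hle
      rw [nf_pow hP hi, ← Multiset.le_count_iff_replicate_le] at hle
      refine ⟨⟨P, k⟩, ?_, rfl⟩
      simp only [Finset.mem_sigma, Multiset.mem_toFinset, Finset.mem_Icc]
      exact ⟨Multiset.count_pos.1 (by omega), by omega, hle⟩
    · rintro ⟨P, k⟩ hx
      simp only [Finset.mem_sigma, Multiset.mem_toFinset, Finset.mem_Icc] at hx
      obtain ⟨hP, hk1, hk2⟩ := hx
      rw [nf_pow (nf_monic hP) (nf_irreducible hP), Multiset.toFinset_replicate,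
        if_neg (by simp only; omega)]
      simp
  rw [key, Finset.sum_sigma, natDegree_eq_sum_nf hh, Finset.sum_multiset_map_count]
  refine Finset.sum_congr rfl fun P _ => ?_
  simp

lemma one_mem_mdiv {h : (ZMod p)[X]} (hh : h.Monic) : (1 : (ZMod p)[X]) ∈ mdiv h :=
  (mem_mdiv hh).2 ⟨monic_one, one_dvd _⟩

lemma vM_le {f : (ZMod p)[X]} (hf : f.Monic) : vM f ≤ f.natDegree := by
  conv_rhs => rw [← sum_vM hf]
  exact Finset.single_le_sum (f := fun d => vM d) (fun _ _ => Nat.zero_le _)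
    ((mem_mdiv hf).2 ⟨hf, dvd_rfl⟩)

/-! ### The algebra of formal Dirichlet series -/

variable (p) in
/-- Formal combinations of polynomials. -/
abbrev FA := MonoidAlgebra ℂ (ZMod p)[X]

/-- The part of degree `k` of the formal Dirichlet series with coefficients `a`. -/
def dpart (a : (ZMod p)[X] → ℂ) (k : ℕ) : FA p := ∑ f ∈ monics p k, MonoidAlgebra.single f (a f)

/-- The formal Dirichlet series with coefficients `a`, graded by degree. -/
def dser (a : (ZMod p)[X] → ℂ) : PowerSeries (FA p) := PowerSeries.mk (dpart a)

/-- Dirichlet convolution. -/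
def conv (a b : (ZMod p)[X] → ℂ) (h : (ZMod p)[X]) : ℂ := ∑ d ∈ mdiv h, a d * b (h /ₘ d)

lemma mul_divByMonic {d e : (ZMod p)[X]} (hd : d.Monic) : (d * e) /ₘ d = e :=
  mul_divByMonic_cancel_left e hd

lemma sum_mul_eq_conv {M : Type*} [AddCommMonoid M] (i j : ℕ)
    (F : (ZMod p)[X] → (ZMod p)[X] → M) :
    ∑ f ∈ monics p i, ∑ g ∈ monics p j, F f g
      = ∑ h ∈ monics p (i + j), ∑ d ∈ (mdiv h).filter (fun d => d.natDegree = i), F d (h /ₘ d) := by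
  rw [Finset.sum_sigma', Finset.sum_sigma']
  refine Finset.sum_bij' (fun x _ => ⟨x.1 * x.2, x.1⟩) (fun x _ => ⟨x.2, x.1 /ₘ x.2⟩) ?_ ?_ ?_ ?_ ?_
  · rintro ⟨f, g⟩ h
    simp only [Finset.mem_sigma, mem_monics, Finset.mem_filter] at h ⊢
    obtain ⟨⟨hf, hfi⟩, hg, hgj⟩ := h
    refine ⟨⟨hf.mul hg, by rw [hf.natDegree_mul hg, hfi, hgj]⟩, ?_, hfi⟩
    rw [mem_mdiv (hf.mul hg)]
    exact ⟨hf, dvd_mul_right _ _⟩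
  · rintro ⟨h, d⟩ hx
    simp only [Finset.mem_sigma, mem_monics, Finset.mem_filter] at hx ⊢
    obtain ⟨⟨hh, hij⟩, hd, hdi⟩ := hx
    rw [mem_mdiv hh] at hd
    obtain ⟨hd, e, rfl⟩ := hd
    rw [mul_divByMonic hd]
    have he := hd.of_mul_monic_left hh
    rw [hd.natDegree_mul he] at hij
    exact ⟨⟨hd, hdi⟩, he, by omega⟩
  · rintro ⟨f, g⟩ h
    simp only [Finset.mem_sigma, mem_monics] at h
    simp only [mul_divByMonic h.1.1]
  · rintro ⟨h, d⟩ hx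
    simp only [Finset.mem_sigma, mem_monics, Finset.mem_filter] at hx
    obtain ⟨⟨hh, hij⟩, hd, hdi⟩ := hx
    rw [mem_mdiv hh] at hd
    obtain ⟨hd, e, rfl⟩ := hd
    simp only [mul_divByMonic hd]
  · rintro ⟨f, g⟩ h
    simp only [Finset.mem_sigma, mem_monics] at h
    simp only [mul_divByMonic h.1.1]

lemma dpart_mul (a b : (ZMod p)[X] → ℂ) (i j : ℕ) : dpart a i * dpart b j
    = dpart (fun h => ∑ d ∈ (mdiv h).filter (fun d => d.natDegree = i), a d * b (h /ₘ d)) (i + j) := by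
  unfold dpart
  rw [Finset.sum_mul_sum]
  simp only [MonoidAlgebra.single_mul_single]
  rw [sum_mul_eq_conv i j (fun f g => MonoidAlgebra.single (f * g) (a f * b g))]
  refine Finset.sum_congr rfl fun h hh => ?_
  rw [mem_monics] at hh
  have : ∀ d ∈ (mdiv h).filter (fun d => d.natDegree = i),
      MonoidAlgebra.single (d * (h /ₘ d)) (a d * b (h /ₘ d))
        = (MonoidAlgebra.singleAddHom h (a d * b (h /ₘ d)) : FA p) := by
    intro d hd
    have := (mem_mdiv hh.1).1 (Finset.mem_filter.1 hd).1
    obtain ⟨hd', e, rfl⟩ := this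
    rw [mul_divByMonic hd']; rfl
  rw [Finset.sum_congr rfl this, ← map_sum]
  rfl

lemma dser_mul (a b : (ZMod p)[X] → ℂ) : dser a * dser b = dser (conv a b) := by
  ext1 n
  rw [PowerSeries.coeff_mul]
  simp only [dser, PowerSeries.coeff_mk, dpart_mul]
  have : ∀ x ∈ Finset.HasAntidiagonal.antidiagonal n,
      dpart (fun h => ∑ d ∈ (mdiv h).filter (fun d => d.natDegree = x.1), a d * b (h /ₘ d))
        (x.1 + x.2)
      = dpart (fun h => ∑ d ∈ (mdiv h).filter (fun d => d.natDegree = x.1), a d * b (h /ₘ d)) n := by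
    intro x hx; rw [Finset.HasAntidiagonal.mem_antidiagonal.1 hx]
  rw [Finset.sum_congr rfl this]
  unfold dpart
  rw [Finset.sum_comm]
  refine Finset.sum_congr rfl fun h hh => ?_
  rw [mem_monics] at hh
  have e1 : ∀ c : ℂ, (MonoidAlgebra.single h c : FA p) = MonoidAlgebra.singleAddHom h c :=
    fun c => rfl
  simp only [e1]
  rw [← map_sum]
  congr 1
  rw [Finset.Nat.sum_antidiagonal_eq_sum_range_succ_mk]
  unfold conv
  refine Finset.sum_fiberwise_of_maps_to (s := mdiv h) (t := Finset.range n.succ)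
    (g := fun d => d.natDegree) ?_ _
  intro d hd
  rw [Finset.mem_range, Nat.lt_succ_iff, ← hh.2]
  exact natDegree_le_of_dvd ((mem_mdiv hh.1).1 hd).2 hh.1.ne_zero

lemma dser_congr {a b : (ZMod p)[X] → ℂ} (h : ∀ f, f.Monic → a f = b f) : dser a = dser b := by
  ext1 n
  simp only [dser, PowerSeries.coeff_mk, dpart]
  exact Finset.sum_congr rfl fun f hf => by rw [h f (mem_monics.1 hf).1]

lemma dser_sub (a b : (ZMod p)[X] → ℂ) : dser (fun f => a f - b f) = dser a - dser b := by
  ext1 n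
  simp only [dser, PowerSeries.coeff_mk, dpart, map_sub, ← Finset.sum_sub_distrib,
    MonoidAlgebra.single_sub]

lemma conv_comm_one (a : (ZMod p)[X] → ℂ) : dser (conv (fun _ => 1) a)
    = dser (fun h => ∑ d ∈ mdiv h, a d) := by
  rw [← dser_mul, mul_comm, dser_mul]
  refine dser_congr fun f _ => ?_
  simp [conv]

variable (p) in
/-- The formal zeta function. -/
def dZ : PowerSeries (FA p) := dser fun _ => 1
variable (p) in
/-- The formal inverse of the zeta function. -/
def dM : PowerSeries (FA p) := dser mu
variable (p) in
/-- The formal logarithmic derivative of the zeta function. -/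
def dV : PowerSeries (FA p) := dser fun f => (vM f : ℂ)
variable (p) in
/-- The formal derivative of the zeta function. -/
def dD : PowerSeries (FA p) := dser fun f => (f.natDegree : ℂ)

lemma dpart_zero (a : (ZMod p)[X] → ℂ) : dpart a 0 = MonoidAlgebra.single 1 (a 1) := by
  have : monics p 0 = {1} := by
    ext f
    rw [mem_monics, Finset.mem_singleton]
    exact ⟨fun h => (h.1.natDegree_eq_zero).1 h.2, fun h => by subst h; simp⟩
  rw [dpart, this, Finset.sum_singleton]

lemma dZ_mul_dM : dZ p * dM p = 1 := by
  rw [dZ, dM, dser_mul, conv_comm_one,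
    dser_congr (b := fun h => if h = 1 then 1 else 0) (fun f hf => sum_mu hf)]
  ext1 n
  simp only [dser, PowerSeries.coeff_mk, PowerSeries.coeff_one]
  split_ifs with hn
  · subst hn; rw [dpart_zero]; simp [MonoidAlgebra.one_def]
  · unfold dpart
    refine Finset.sum_eq_zero fun f hf => ?_
    beta_reduce
    rw [if_neg, MonoidAlgebra.single_zero]
    rintro rfl
    have := (mem_monics.1 hf).2
    simp at this; omega

lemma dZ_mul_dV : dZ p * dV p = dD p := by
  rw [dZ, dV, dser_mul, conv_comm_one]
  refine dser_congr fun f hf => ?_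
  have := congrArg (Nat.cast : ℕ → ℂ) (sum_vM hf)
  push_cast at this
  exact this

/-! ### Type I and Type II sums -/

/-- Evaluation of a formal combination at a function of polynomials. -/
def ev (φ : (ZMod p)[X] → ℂ) : FA p →+ ℂ := MonoidAlgebra.liftNC (AddMonoidHom.id ℂ) φ

lemma ev_single (φ : (ZMod p)[X] → ℂ) (f : (ZMod p)[X]) (c : ℂ) :
    ev φ (MonoidAlgebra.single f c) = c * φ f := by
  simp [ev, MonoidAlgebra.liftNC_single]

lemma ev_dpart (φ : (ZMod p)[X] → ℂ) (a : (ZMod p)[X] → ℂ) (k : ℕ) :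
    ev φ (dpart a k) = ∑ f ∈ monics p k, a f * φ f := by
  simp [dpart, map_sum, ev_single]

lemma ev_dpart_mul (φ : (ZMod p)[X] → ℂ) (a b : (ZMod p)[X] → ℂ) (i j : ℕ) :
    ev φ (dpart a i * dpart b j)
      = ∑ f ∈ monics p i, ∑ g ∈ monics p j, a f * b g * φ (f * g) := by
  simp [dpart, map_sum, ev_single, Finset.sum_mul_sum, MonoidAlgebra.single_mul_single]

lemma ev_coeff_dser_mul (φ : (ZMod p)[X] → ℂ) (a b : (ZMod p)[X] → ℂ) (n : ℕ) :
    ev φ (PowerSeries.coeff n (dser a * dser b))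
      = ∑ x ∈ Finset.HasAntidiagonal.antidiagonal n, ev φ (dpart a x.1 * dpart b x.2) := by
  rw [PowerSeries.coeff_mul, map_sum]
  simp [dser]

lemma p_pos : (0 : ℝ) < p := by exact_mod_cast (Fact.out : p.Prime).pos

/-- A Type I sum: the sum over the smooth variable of degree `j` is evaluated exactly, and vanishes
unless the rough variable annihilates the first `j` digits of `x`. -/
lemma typeI (x : ℕ → ZMod p) {n i j : ℕ} (hn : i + j = n) {a : (ZMod p)[X] → ℂ} {B : ℝ}
    (ha : ∀ f ∈ monics p i, ‖a f‖ ≤ B) (hB : 0 ≤ B) (c : ℂ) :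
    ‖ev (E x) (dpart a i * dpart (fun _ => c) j)‖
      ≤ B * ‖c‖ * ((p : ℝ) ^ n / (p : ℝ) ^ min j (rk n x)) := by
  rw [ev_dpart_mul]
  have h1 : ∀ f ∈ monics p i, ‖∑ g ∈ monics p j, a f * c * E x (f * g)‖
      ≤ if ∀ t < j, act f x t = 0 then B * ‖c‖ * (p : ℝ) ^ j else 0 := by
    intro f hf
    rw [← Finset.mul_sum, norm_mul, norm_mul]
    simp_rw [fun g => mul_comm f g, E_mul]
    rw [norm_sum_E_monics]
    split_ifs with h
    · have := ha f hf
      gcongr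
    · simp
  have h2 := (norm_sum_le (monics p i) (fun f => ∑ g ∈ monics p j, a f * c * E x (f * g))).trans
    (Finset.sum_le_sum h1)
  refine h2.trans ?_
  rw [← Finset.sum_filter, Finset.sum_const, nsmul_eq_mul]
  change (monCard i j x : ℝ) * _ ≤ _
  have h3 : (monCard i j x : ℝ) * (p : ℝ) ^ min j (rk n x) ≤ (p : ℝ) ^ i := by
    exact_mod_cast monCard_bound hn x
  have hp := p_pos (p := p)
  have h4 : (monCard i j x : ℝ) ≤ (p : ℝ) ^ i / (p : ℝ) ^ min j (rk n x) := by
    rw [le_div_iff₀ (by positivity)]; exact h3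
  calc _ ≤ ((p : ℝ) ^ i / (p : ℝ) ^ min j (rk n x)) * (B * ‖c‖ * (p : ℝ) ^ j) := by gcongr
    _ = _ := by rw [← hn, pow_add]; ring

lemma E_sub_seq (x y : ℕ → ZMod p) (g : (ZMod p)[X]) :
    E x g * (starRingEnd ℂ) (E y g) = E (x - y) g := by
  unfold E
  rw [act_sub_right, Pi.sub_apply, sub_eq_add_neg, AddChar.map_add_eq_mul, AddChar.map_neg_eq_conj]

/-- The dispersion inequality: Cauchy's inequality over `g`, followed by exact evaluation of
the resulting complete sums. -/
lemma bilin {ι : Type*} (I : Finset ι) (c : ι → ℂ) (y : ι → ℕ → ZMod p) (j : ℕ)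
    {b : (ZMod p)[X] → ℂ} {B : ℝ} (hb : ∀ g ∈ monics p j, ‖b g‖ ≤ B) :
    ‖∑ g ∈ monics p j, b g * ∑ i ∈ I, c i * E (y i) g‖ ^ 2
      ≤ B ^ 2 * (p : ℝ) ^ (2 * j) * ∑ i ∈ I, ∑ i' ∈ I, ‖c i‖ * ‖c i'‖ *
        (if ∀ t < j, y i t = y i' t then 1 else 0) := by
  set S : (ZMod p)[X] → ℂ := fun g => ∑ i ∈ I, c i * E (y i) g with hS
  have h1 : ‖∑ g ∈ monics p j, b g * S g‖ ^ 2
      ≤ (∑ g ∈ monics p j, ‖b g‖ ^ 2) * ∑ g ∈ monics p j, ‖S g‖ ^ 2 := by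
    refine le_trans ?_ (Finset.sum_mul_sq_le_sq_mul_sq _ _ _)
    gcongr
    exact (norm_sum_le _ _).trans_eq (Finset.sum_congr rfl fun g _ => norm_mul _ _)
  have h2 : ∑ g ∈ monics p j, ‖b g‖ ^ 2 ≤ B ^ 2 * (p : ℝ) ^ j := by
    calc _ ≤ ∑ g ∈ monics p j, B ^ 2 := Finset.sum_le_sum fun g hg => by
          have := hb g hg; gcongr
      _ = _ := by rw [Finset.sum_const, card_monics]; simp [mul_comm]
  have h3 : ((∑ g ∈ monics p j, ‖S g‖ ^ 2 : ℝ) : ℂ) = ∑ i ∈ I, ∑ i' ∈ I,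
      c i * (starRingEnd ℂ) (c i') * ∑ g ∈ monics p j, E (y i - y i') g := by
    push_cast
    simp_rw [← Complex.mul_conj', hS, map_sum, Finset.sum_mul_sum, Finset.mul_sum]
    rw [Finset.sum_comm]
    refine Finset.sum_congr rfl fun i _ => ?_
    rw [Finset.sum_comm]
    refine Finset.sum_congr rfl fun i' _ => Finset.sum_congr rfl fun g _ => ?_
    rw [map_mul, ← E_sub_seq]; ring
  have h4 : ∑ g ∈ monics p j, ‖S g‖ ^ 2 ≤ (p : ℝ) ^ j * ∑ i ∈ I, ∑ i' ∈ I, ‖c i‖ * ‖c i'‖ *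
        (if ∀ t < j, y i t = y i' t then 1 else 0) := by
    have h5 : ∑ g ∈ monics p j, ‖S g‖ ^ 2 = ‖((∑ g ∈ monics p j, ‖S g‖ ^ 2 : ℝ) : ℂ)‖ := by
      rw [Complex.norm_real, Real.norm_of_nonneg (Finset.sum_nonneg fun _ _ => by positivity)]
    rw [h5, h3, Finset.mul_sum]
    refine (norm_sum_le _ _).trans (Finset.sum_le_sum fun i _ => ?_)
    rw [Finset.mul_sum]
    refine (norm_sum_le _ _).trans (Finset.sum_le_sum fun i' _ => ?_)
    rw [norm_mul, norm_mul, norm_sum_E_monics, RCLike.norm_conj]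
    simp only [Pi.sub_apply, sub_eq_zero]
    split_ifs <;> simp [mul_comm]
  calc _ ≤ _ := h1
    _ ≤ (B ^ 2 * (p : ℝ) ^ j) * ((p : ℝ) ^ j * ∑ i ∈ I, ∑ i' ∈ I, ‖c i‖ * ‖c i'‖ *
        (if ∀ t < j, y i t = y i' t then 1 else 0)) := by
        gcongr
    _ = _ := by rw [two_mul, pow_add]; ring

lemma low_sub {k : ℕ} (c d : Fin k → ZMod p) : low (c - d) = mon c - mon d := by
  simp [mon, low, sub_mul, Finset.sum_sub_distrib]

lemma ev_dpart_mul_E (x : ℕ → ZMod p) (a b : (ZMod p)[X] → ℂ) (i j : ℕ) :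
    ev (E x) (dpart a i * dpart b j)
      = ∑ g ∈ monics p j, b g * ∑ f ∈ monics p i, a f * E (act f x) g := by
  rw [ev_dpart_mul, Finset.sum_comm]
  refine Finset.sum_congr rfl fun g _ => ?_
  rw [Finset.mul_sum]
  refine Finset.sum_congr rfl fun f _ => ?_
  rw [mul_comm f g, E_mul]; ring

/-- A bilinear sum, by Cauchy's inequality: the coincidences between multiples of `x` are the
elements of the kernel of a Hankel matrix of `x`, of which there are few when the rank is large. -/
lemma typeII (x : ℕ → ZMod p) {n i j : ℕ} (hn : i + j = n) {a b : (ZMod p)[X] → ℂ} {A B : ℝ}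
    (ha : ∀ f ∈ monics p i, ‖a f‖ ≤ A) (hb : ∀ f ∈ monics p j, ‖b f‖ ≤ B) :
    ‖ev (E x) (dpart a i * dpart b j)‖ ^ 2
      ≤ (A * B) ^ 2 * ((p : ℝ) ^ (2 * n) / (p : ℝ) ^ min (min i j) (rk n x)) := by
  rw [ev_dpart_mul_E]
  refine (bilin (monics p i) a (fun f => act f x) j hb).trans ?_
  have hp := p_pos (p := p)
  have h1 : ∑ f ∈ monics p i, ∑ f' ∈ monics p i, ‖a f‖ * ‖a f'‖ *
        (if ∀ t < j, act f x t = act f' x t then (1 : ℝ) else 0)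
      ≤ A ^ 2 * ((p : ℝ) ^ i * annCard i j x) := by
    calc _ ≤ ∑ f ∈ monics p i, ∑ f' ∈ monics p i, A ^ 2 *
          (if ∀ t < j, act f x t = act f' x t then (1 : ℝ) else 0) := by
          refine Finset.sum_le_sum fun f hf => Finset.sum_le_sum fun f' hf' => ?_
          have h1 := ha f hf
          have h2 := ha f' hf'
          rw [sq]
          have : 0 ≤ A := (norm_nonneg _).trans h1
          gcongr
      _ = A ^ 2 * ∑ c : Fin i → ZMod p, ∑ d : Fin i → ZMod p,
          (if ∀ t < j, act (low (d - c)) x t = 0 then (1 : ℝ) else 0) := by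
          simp_rw [sum_monics, ← Finset.mul_sum]
          congr 1
          refine Finset.sum_congr rfl fun c _ => Finset.sum_congr rfl fun d _ => ?_
          congr 1
          simp only [low_sub, act_sub, Pi.sub_apply, sub_eq_zero, eq_iff_iff]
          exact ⟨fun h t ht => (h t ht).symm, fun h t ht => (h t ht).symm⟩
      _ = A ^ 2 * ∑ c : Fin i → ZMod p, (annCard i j x : ℝ) := by
          congr 1
          refine Finset.sum_congr rfl fun c _ => ?_
          refine ((Equiv.subRight c).sum_comp
            (fun d => (if ∀ t < j, act (low d) x t = 0 then (1 : ℝ) else 0))).trans ?_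
          simp [annCard]
      _ = _ := by simp [ZMod.card]
  have h2 : (annCard i j x : ℝ) * (p : ℝ) ^ min (min i j) (rk n x) ≤ (p : ℝ) ^ i := by
    exact_mod_cast annCard_bound hn x
  have h4 : (annCard i j x : ℝ) ≤ (p : ℝ) ^ i / (p : ℝ) ^ min (min i j) (rk n x) := by
    rw [le_div_iff₀ (by positivity)]; exact h2
  calc _ ≤ B ^ 2 * (p : ℝ) ^ (2 * j) * (A ^ 2 * ((p : ℝ) ^ i * ((p : ℝ) ^ i /
        (p : ℝ) ^ min (min i j) (rk n x)))) := by
        gcongr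
        exact h1.trans (by gcongr)
    _ = _ := by rw [← hn]; ring

lemma sum_sum_sum_mul {κ ι : Type*} [Fintype κ] (S : Finset ι) (a b : κ → ι → ℂ) :
    ∑ f ∈ S, ∑ f' ∈ S, ∑ v, a v f * b v f' = ∑ v, (∑ f ∈ S, a v f) * ∑ f ∈ S, b v f := by
  simp_rw [Finset.sum_mul_sum]
  rw [Finset.sum_comm]
  conv_rhs => rw [Finset.sum_comm]
  rw [Finset.sum_comm]
  exact Finset.sum_congr rfl fun _ _ => Finset.sum_comm

lemma sum_sum_mul_sum {κ ι : Type*} [Fintype κ] (S : Finset ι) (w : ι → ℝ) (g : κ → ι → ℝ)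
    (c : ℝ) : ∑ x ∈ S, ∑ y ∈ S, w x * w y * (c * ∑ v, g v x * g v y)
      = c * ∑ v, (∑ x ∈ S, w x * g v x) ^ 2 := by
  simp_rw [sq, Finset.sum_mul_sum, Finset.mul_sum]
  conv_rhs => rw [Finset.sum_comm]
  refine Finset.sum_congr rfl fun x _ => ?_
  conv_rhs => rw [Finset.sum_comm]
  exact Finset.sum_congr rfl fun y _ => Finset.sum_congr rfl fun v _ => by ring

/-- The number of coincidences between multiples of two digit vectors, bounded by duality. -/
lemma coincidence (k l : ℕ) (x y : ℕ → ZMod p) :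
    ∑ f ∈ monics p k, ∑ f' ∈ monics p k, (if ∀ t < l, act f x t = act f' y t then (1 : ℝ) else 0)
      ≤ (p : ℝ) ^ (2 * k) / (p : ℝ) ^ l * ∑ v : Fin l → ZMod p,
        (if ∀ t < k, act (low v) x t = 0 then (1 : ℝ) else 0) *
        (if ∀ t < k, act (low v) y t = 0 then (1 : ℝ) else 0) := by
  have hp := p_pos (p := p)
  have h1 : ∀ f f' : (ZMod p)[X],
      ((if ∀ t < l, act f x t = act f' y t then (p : ℂ) ^ l else 0))
        = ∑ v : Fin l → ZMod p, E (act (low v) x) f * (starRingEnd ℂ) (E (act (low v) y) f') := by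
    intro f f'
    have := sum_E_low l (act f x - act f' y)
    simp only [Pi.sub_apply, sub_eq_zero] at this
    rw [← this]
    refine Finset.sum_congr rfl fun v _ => ?_
    rw [← E_sub_seq, ← E_mul, ← E_mul, ← E_mul, ← E_mul, mul_comm f, mul_comm f']
  have h2 : ((∑ f ∈ monics p k, ∑ f' ∈ monics p k,
      (if ∀ t < l, act f x t = act f' y t then (p : ℝ) ^ l else 0) : ℝ) : ℂ)
      = ∑ v : Fin l → ZMod p, (∑ f ∈ monics p k, E (act (low v) x) f) *
        (starRingEnd ℂ) (∑ f' ∈ monics p k, E (act (low v) y) f') := by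
    push_cast
    have : ∀ f f' : (ZMod p)[X],
      (((if ∀ t < l, act f x t = act f' y t then (p : ℝ) ^ l else 0) : ℝ) : ℂ) =
      ((if ∀ t < l, act f x t = act f' y t then (p : ℂ) ^ l else 0)) := by
      intro f f'; split_ifs <;> simp
    simp_rw [map_sum]
    rw [← sum_sum_sum_mul]
    refine Finset.sum_congr rfl fun f _ => Finset.sum_congr rfl fun f' _ => ?_
    rw [this, h1]
  have h3 : ∑ f ∈ monics p k, ∑ f' ∈ monics p k,
      (if ∀ t < l, act f x t = act f' y t then (p : ℝ) ^ l else 0)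
      ≤ ∑ v : Fin l → ZMod p, (p : ℝ) ^ (2 * k) *
        ((if ∀ t < k, act (low v) x t = 0 then (1 : ℝ) else 0) *
        (if ∀ t < k, act (low v) y t = 0 then (1 : ℝ) else 0)) := by
    have h5 : ∑ f ∈ monics p k, ∑ f' ∈ monics p k,
      (if ∀ t < l, act f x t = act f' y t then (p : ℝ) ^ l else 0) =
      ‖((∑ f ∈ monics p k, ∑ f' ∈ monics p k,
      (if ∀ t < l, act f x t = act f' y t then (p : ℝ) ^ l else 0) : ℝ) : ℂ)‖ := by
      rw [Complex.norm_real, Real.norm_of_nonneg]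
      refine Finset.sum_nonneg fun _ _ => Finset.sum_nonneg fun _ _ => ?_
      split_ifs <;> positivity
    rw [h5, h2]
    refine (norm_sum_le _ _).trans (Finset.sum_le_sum fun v _ => ?_)
    rw [norm_mul, RCLike.norm_conj, norm_sum_E_monics, norm_sum_E_monics]
    rw [two_mul, pow_add]
    split_ifs <;> simp
  have h4 : ∑ f ∈ monics p k, ∑ f' ∈ monics p k,
      (if ∀ t < l, act f x t = act f' y t then (p : ℝ) ^ l else 0)
      = (p : ℝ) ^ l * ∑ f ∈ monics p k, ∑ f' ∈ monics p k,
      (if ∀ t < l, act f x t = act f' y t then (1 : ℝ) else 0) := by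
    simp_rw [Finset.mul_sum]
    refine Finset.sum_congr rfl fun f _ => Finset.sum_congr rfl fun f' _ => ?_
    split_ifs <;> simp
  rw [h4, ← Finset.mul_sum] at h3
  rw [div_mul_eq_mul_div, le_div_iff₀ (by positivity)]
  linarith

lemma exists_phase (z : ℂ) : ∃ ε : ℂ, ‖ε‖ ≤ 1 ∧ ε * z = ‖z‖ := by
  by_cases h : z = 0
  · exact ⟨0, by simp, by simp [h]⟩
  · refine ⟨(starRingEnd ℂ) z / ‖z‖, ?_, ?_⟩
    · rw [norm_div, RCLike.norm_conj, Complex.norm_real, norm_norm, div_self (norm_ne_zero_iff.2 h)]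
    · have : (‖z‖ : ℂ) ≠ 0 := by exact_mod_cast norm_ne_zero_iff.2 h
      rw [div_mul_eq_mul_div, mul_comm, Complex.mul_conj']
      field_simp

lemma sum_prod_le_pow {n : ℕ} {f : ZMod p → ℝ} (hf0 : ∀ a, 0 ≤ f a) (hf1 : ∀ a, f a ≤ 1)
    (S : Finset (Fin n → ZMod p)) : ∑ ξ ∈ S, ∏ i, f (ξ i) ≤ (∑ a, f a) ^ n := by
  have h := sum_prod_le hf0 hf1 S Finset.univ
    (fun ξ _ η _ h => funext fun i => h i (Finset.mem_univ i))
  simpa using h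

/-- Bilinear sums on average over the digit vectors of large rank. The saving combines the duality
estimate for coincidences with the bound for the mass of the vectors annihilated by a given
polynomial. -/
lemma typeII_avg {n k l t : ℕ} (hn : k + l = n) (hkl : k ≤ l) (ht : t ≤ k) (hk : 0 < n)
    {f : ZMod p → ℝ} (hf0 : ∀ a, 0 ≤ f a) (hf1 : ∀ a, f a ≤ 1) (hf : 1 ≤ ∑ a, f a)
    (Ξ : Finset (Fin n → ZMod p)) (hΞ : ∀ ξ ∈ Ξ, t ≤ rk n (ext ξ))
    {a b : (ZMod p)[X] → ℂ} {A B : ℝ}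
    (ha : ∀ f ∈ monics p k, ‖a f‖ ≤ A) (hb : ∀ f ∈ monics p l, ‖b f‖ ≤ B) :
    (∑ ξ ∈ Ξ, (∏ i, f (ξ i)) * ‖ev (E (ext ξ)) (dpart a k * dpart b l)‖) ^ 2
      ≤ (A * B) ^ 2 * (p : ℝ) ^ (2 * n) * ((∑ a, f a) ^ (2 * n) / (p : ℝ) ^ l
          + (∑ a, f a) ^ (l + n) / (p : ℝ) ^ t) := by
  have hp := p_pos (p := p)
  set L := ∑ a, f a with hL
  set w : (Fin n → ZMod p) → ℝ := fun ξ => ∏ i, f (ξ i) with hw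
  have hw0 : ∀ ξ, 0 ≤ w ξ := fun ξ => Finset.prod_nonneg fun i _ => hf0 _
  choose ε hε1 hε2 using fun ξ : Fin n → ZMod p =>
    exists_phase (ev (E (ext ξ)) (dpart a k * dpart b l))
  have h1 : ((∑ ξ ∈ Ξ, w ξ * ‖ev (E (ext ξ)) (dpart a k * dpart b l)‖ : ℝ) : ℂ)
      = ∑ g ∈ monics p l, b g * ∑ x ∈ Ξ ×ˢ monics p k,
          (w x.1 * ε x.1 * a x.2) * E (act x.2 (ext x.1)) g := by
    push_cast
    simp_rw [← hε2, ev_dpart_mul_E, Finset.sum_product, Finset.mul_sum]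
    rw [Finset.sum_comm]
    refine Finset.sum_congr rfl fun g _ => Finset.sum_congr rfl fun ξ _ =>
      Finset.sum_congr rfl fun u _ => ?_
    ring
  have h2 := bilin (Ξ ×ˢ monics p k) (fun x => (w x.1 * ε x.1 * a x.2))
    (fun x => act x.2 (ext x.1)) l hb
  rw [← h1, Complex.norm_real, Real.norm_of_nonneg
    (Finset.sum_nonneg fun ξ _ => mul_nonneg (hw0 ξ) (norm_nonneg _))] at h2
  refine h2.trans ?_
  -- the weighted count of coincidences
  set G : (Fin l → ZMod p) → ℝ := fun v => ∑ ξ ∈ Ξ,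
    w ξ * (if ∀ t < k, act (low v) (ext ξ) t = 0 then (1 : ℝ) else 0) with hG
  have hG0 : ∀ v, 0 ≤ G v := fun v => Finset.sum_nonneg fun ξ _ =>
    mul_nonneg (hw0 ξ) (by split_ifs <;> norm_num)
  have h3 : ∑ x ∈ Ξ ×ˢ monics p k, ∑ x' ∈ Ξ ×ˢ monics p k,
      ‖(w x.1 * ε x.1 * a x.2 : ℂ)‖ * ‖(w x'.1 * ε x'.1 * a x'.2 : ℂ)‖ *
        (if ∀ t < l, act x.2 (ext x.1) t = act x'.2 (ext x'.1) t then (1 : ℝ) else 0)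
      ≤ A ^ 2 * ((p : ℝ) ^ (2 * k) / (p : ℝ) ^ l * ∑ v, G v ^ 2) := by
    calc _ ≤ ∑ x ∈ Ξ ×ˢ monics p k, ∑ x' ∈ Ξ ×ˢ monics p k, (w x.1 * A) * (w x'.1 * A) *
        (if ∀ t < l, act x.2 (ext x.1) t = act x'.2 (ext x'.1) t then (1 : ℝ) else 0) := by
          have hx : ∀ x ∈ Ξ ×ˢ monics p k, ‖(w x.1 * ε x.1 * a x.2 : ℂ)‖ ≤ w x.1 * A := by
            intro x hx
            have h4 := ha x.2 (Finset.mem_product.1 hx).2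
            rw [norm_mul, norm_mul, Complex.norm_real, Real.norm_of_nonneg (hw0 _)]
            have h5 : w x.1 * ‖ε x.1‖ ≤ w x.1 := mul_le_of_le_one_right (hw0 _) (hε1 _)
            exact mul_le_mul h5 h4 (norm_nonneg _) (hw0 _)
          refine Finset.sum_le_sum fun x h => Finset.sum_le_sum fun x' h' => ?_
          have := hx x h
          have := hx x' h'
          have : 0 ≤ w x.1 * A := (norm_nonneg _).trans (hx x h)
          gcongr
      _ = A ^ 2 * ∑ ξ ∈ Ξ, ∑ ξ' ∈ Ξ, w ξ * w ξ' * ∑ u ∈ monics p k, ∑ u' ∈ monics p k,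
        (if ∀ t < l, act u (ext ξ) t = act u' (ext ξ') t then (1 : ℝ) else 0) := by
          simp_rw [Finset.sum_product, Finset.mul_sum]
          refine Finset.sum_congr rfl fun ξ _ => ?_
          rw [Finset.sum_comm]
          refine Finset.sum_congr rfl fun ξ' _ => Finset.sum_congr rfl fun u _ =>
            Finset.sum_congr rfl fun u' _ => ?_
          ring
      _ ≤ A ^ 2 * ∑ ξ ∈ Ξ, ∑ ξ' ∈ Ξ, w ξ * w ξ' * ((p : ℝ) ^ (2 * k) / (p : ℝ) ^ l *
        ∑ v : Fin l → ZMod p,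
        (if ∀ t < k, act (low v) (ext ξ) t = 0 then (1 : ℝ) else 0) *
        (if ∀ t < k, act (low v) (ext ξ') t = 0 then (1 : ℝ) else 0)) := by
          refine mul_le_mul_of_nonneg_left ?_ (sq_nonneg A)
          refine Finset.sum_le_sum fun ξ _ => Finset.sum_le_sum fun ξ' _ => ?_
          exact mul_le_mul_of_nonneg_left (coincidence k l _ _) (mul_nonneg (hw0 _) (hw0 _))
      _ = _ := by
          congr 1
          exact sum_sum_mul_sum Ξ w _ _
  have hL1 : ∀ ξ, w ξ ≤ 1 := fun ξ => Finset.prod_le_one (fun i _ => hf0 _) (fun i _ => hf1 _)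
  have h4 : ∑ v, G v ≤ L ^ n * ((p : ℝ) ^ l / (p : ℝ) ^ t) := by
    have h5 : ∑ v, G v = ∑ ξ ∈ Ξ, w ξ * annCard l k (ext ξ) := by
      simp_rw [hG]
      rw [Finset.sum_comm]
      refine Finset.sum_congr rfl fun ξ _ => ?_
      rw [← Finset.mul_sum]
      simp [annCard]
    have h6 : ∑ ξ ∈ Ξ, w ξ * annCard l k (ext ξ) ≤ ∑ ξ ∈ Ξ, w ξ * ((p : ℝ) ^ l / (p : ℝ) ^ t) := by
      refine Finset.sum_le_sum fun ξ hξ => mul_le_mul_of_nonneg_left ?_ (hw0 _)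
      have h7 : (annCard l k (ext ξ) : ℝ) * (p : ℝ) ^ min (min l k) (rk n (ext ξ))
          ≤ (p : ℝ) ^ l := by
        exact_mod_cast annCard_bound (by omega) (ext ξ)
      rw [le_div_iff₀ (by positivity)]
      refine le_trans ?_ h7
      have h8 : t ≤ min (min l k) (rk n (ext ξ)) := by
        have := hΞ ξ hξ; omega
      have h9 : (1 : ℝ) ≤ p := by exact_mod_cast (Fact.out : p.Prime).one_lt.le
      gcongr
    rw [h5]
    refine h6.trans ?_
    rw [← Finset.sum_mul]
    gcongr
    exact sum_prod_le_pow hf0 hf1 Ξ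
  have h10 : G 0 ≤ L ^ n := by
    refine le_trans ?_ (sum_prod_le_pow hf0 hf1 Ξ)
    refine Finset.sum_le_sum fun ξ _ => ?_
    refine mul_le_of_le_one_right (hw0 _) ?_
    split_ifs <;> norm_num
  have h11 : ∀ v, v ≠ 0 → G v ≤ L ^ l := by
    intro v hv
    have hv0 : low v ≠ 0 := by
      intro h
      apply hv
      apply low_injective
      rw [h]; simp [low]
    have hvd : (low v).natDegree < l := by
      have := low_degree_lt v
      rwa [← natDegree_lt_iff_degree_lt hv0] at this
    have h12 := sum_annihilated_le (n := n) (k := k) (v := low v) hv0 (by omega) hf0 hf1 hf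
    rw [show n - k = l by omega] at h12
    refine le_trans ?_ h12
    simp_rw [hG, mul_ite, mul_one, mul_zero, ← Finset.sum_filter]
    exact Finset.sum_le_sum_of_subset_of_nonneg
      (Finset.filter_subset_filter _ (Finset.subset_univ _)) fun ξ _ _ => hw0 ξ
  have hL0 : 0 ≤ L := zero_le_one.trans hf
  have h13 : ∑ v, G v ^ 2 ≤ L ^ (2 * n) + L ^ l * (L ^ n * ((p : ℝ) ^ l / (p : ℝ) ^ t)) := by
    calc ∑ v, G v ^ 2 ≤ ∑ v, ((if v = 0 then L ^ (2 * n) else 0) + L ^ l * G v) := by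
          refine Finset.sum_le_sum fun v _ => ?_
          have := hG0 v
          split_ifs with h
          · have h14 : G v ^ 2 ≤ L ^ (2 * n) := by
              rw [mul_comm 2 n, pow_mul, h]
              exact pow_le_pow_left₀ (hG0 0) h10 2
            have : 0 ≤ L ^ l * G v := by positivity
            linarith
          · rw [zero_add, sq]
            exact mul_le_mul_of_nonneg_right (h11 v h) this
      _ = L ^ (2 * n) + L ^ l * ∑ v, G v := by
          rw [Finset.sum_add_distrib, Finset.mul_sum]; simp
      _ ≤ _ := by gcongr
  calc _ ≤ B ^ 2 * (p : ℝ) ^ (2 * l) * (A ^ 2 * ((p : ℝ) ^ (2 * k) / (p : ℝ) ^ l *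
        (L ^ (2 * n) + L ^ l * (L ^ n * ((p : ℝ) ^ l / (p : ℝ) ^ t))))) := by
        refine mul_le_mul_of_nonneg_left (h3.trans ?_) (by positivity)
        gcongr
    _ = _ := by
        rw [← hn]; field_simp; ring

/-! ### Vaughan's identity -/

/-- The restriction of `a` to polynomials of degree at most `U`. -/
def cut (a : (ZMod p)[X] → ℂ) (U : ℕ) (f : (ZMod p)[X]) : ℂ := if f.natDegree ≤ U then a f else 0

lemma dser_split (a : (ZMod p)[X] → ℂ) (U : ℕ) :
    dser (fun f => a f - cut a U f) = dser a - dser (cut a U) := dser_sub _ _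

lemma dpart_eq_zero {a : (ZMod p)[X] → ℂ} {k : ℕ} (h : ∀ f ∈ monics p k, a f = 0) :
    dpart a k = 0 :=
  Finset.sum_eq_zero fun f hf => by rw [h f hf, MonoidAlgebra.single_zero]

lemma dpart_congr {a b : (ZMod p)[X] → ℂ} {k : ℕ} (h : ∀ f ∈ monics p k, a f = b f) :
    dpart a k = dpart b k :=
  Finset.sum_congr rfl fun f hf => by rw [h f hf]

lemma vaughan (U : ℕ) : dV p = dser (cut (fun f => (vM f : ℂ)) U)
    + dD p * dser (cut mu U)
    - dZ p * dser (conv (cut (fun f => (vM f : ℂ)) U) (cut mu U))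
    + dser (fun f => mu f - cut mu U f)
      * dser (conv (fun _ => 1) (fun f => (vM f : ℂ) - cut (fun f => (vM f : ℂ)) U f)) := by
  rw [← dser_mul, ← dser_mul, dser_split, dser_split]
  change _ = _ + _ - _ + (dM p - _) * (dZ p * (dV p - _))
  have h1 : dZ p * dM p = 1 := dZ_mul_dM
  have h2 : dZ p * dV p = dD p := dZ_mul_dV
  generalize dser (cut (mu (p := p)) U) = M1
  generalize dser (cut (fun f : (ZMod p)[X] => (vM f : ℂ)) U) = V1
  linear_combination (V1 - dV p) * h1 + M1 * h2

lemma norm_conv_le {a b : (ZMod p)[X] → ℂ} (ha : ∀ f, ‖a f‖ ≤ vM f) (hb : ∀ f, ‖b f‖ ≤ 1)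
    {h : (ZMod p)[X]} (hh : h.Monic) : ‖conv a b h‖ ≤ h.natDegree := by
  unfold conv
  refine (norm_sum_le _ _).trans ?_
  have : (h.natDegree : ℝ) = ∑ d ∈ mdiv h, (vM d : ℝ) := by exact_mod_cast (sum_vM hh).symm
  rw [this]
  refine Finset.sum_le_sum fun d _ => ?_
  rw [norm_mul]
  calc _ ≤ (vM d : ℝ) * 1 := mul_le_mul (ha d) (hb _) (norm_nonneg _) (by positivity)
    _ = _ := mul_one _

lemma conv_comm (a b : (ZMod p)[X] → ℂ) (k : ℕ) : dpart (conv a b) k = dpart (conv b a) k := by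
  have h : dser (conv a b) = dser (conv b a) := by rw [← dser_mul, ← dser_mul, mul_comm]
  have := congrArg (PowerSeries.coeff k) h
  simpa [dser] using this

lemma norm_cut_le {a : (ZMod p)[X] → ℂ} {B : ℝ} (U : ℕ) (f : (ZMod p)[X]) (h : ‖a f‖ ≤ B) :
    ‖cut a U f‖ ≤ B := by
  unfold cut
  split_ifs
  · exact h
  · rw [norm_zero]; exact (norm_nonneg _).trans h

lemma norm_sub_cut_le {a : (ZMod p)[X] → ℂ} {B : ℝ} (U : ℕ) (f : (ZMod p)[X]) (h : ‖a f‖ ≤ B) :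
    ‖a f - cut a U f‖ ≤ B := by
  unfold cut
  split_ifs
  · rw [sub_self, norm_zero]; exact (norm_nonneg _).trans h
  · rwa [sub_zero]

lemma natDegree_mdiv {d h : (ZMod p)[X]} (hh : h.Monic) (hd : d ∈ mdiv h) :
    d.natDegree + (h /ₘ d).natDegree = h.natDegree := by
  obtain ⟨hd1, e, he⟩ := (mem_mdiv hh).1 hd
  have he1 : e.Monic := by
    rw [he] at hh; exact hd1.of_mul_monic_left hh
  rw [he, mul_divByMonic hd1, hd1.natDegree_mul he1]

lemma one_le_p : (1 : ℝ) ≤ p := by exact_mod_cast (Fact.out : p.Prime).one_lt.le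

lemma norm_ev_coeff_le (φ : (ZMod p)[X] → ℂ) (a b : (ZMod p)[X] → ℂ) (n : ℕ) {K : ℝ}
    (h : ∀ i j, i + j = n → ‖ev φ (dpart a i * dpart b j)‖ ≤ K) :
    ‖ev φ (PowerSeries.coeff n (dser a * dser b))‖ ≤ (n + 1) * K := by
  rw [ev_coeff_dser_mul]
  refine (norm_sum_le _ _).trans ?_
  calc _ ≤ ∑ x ∈ Finset.HasAntidiagonal.antidiagonal n, K := Finset.sum_le_sum fun x hx =>
        h _ _ (Finset.HasAntidiagonal.mem_antidiagonal.1 hx)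
    _ = _ := by simp [Finset.Nat.card_antidiagonal]

lemma div_p_pow_le {n s t : ℕ} (h : s ≤ t) : (p : ℝ) ^ n / (p : ℝ) ^ t ≤ (p : ℝ) ^ n / (p : ℝ) ^ s := by
  have := p_pos (p := p)
  have := one_le_p (p := p)
  gcongr

lemma abs_le_of_sq_le {x y : ℝ} (hy : 0 ≤ y) (h : x ^ 2 ≤ y ^ 2) : x ≤ y :=
  (abs_le_of_sq_le_sq' h hy).2

/-- The pointwise bound for the exponential sum over prime powers: it is small at digit vectors of
large, but not too large, rank. -/
lemma norm_sum_vM_le {n : ℕ} (hn : 0 < n) (x : ℕ → ZMod p) (hr : 5 * rk n x ≤ 2 * n) :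
    ‖ev (E x) (dpart (fun f => (vM f : ℂ)) n)‖
      ≤ 3 * n * (n + 1) * ((p : ℝ) ^ n / (p : ℝ) ^ (rk n x / 2)) := by
  have hp := p_pos (p := p)
  set r := rk n x with hrdef
  set Q : ℝ := (p : ℝ) ^ n / (p : ℝ) ^ (r / 2) with hQ
  have hQ0 : 0 ≤ Q := by positivity
  have hnr : (1 : ℝ) ≤ n := by exact_mod_cast hn
  have h0 : ∀ f : (ZMod p)[X], ‖(vM f : ℂ)‖ ≤ vM f := fun f => by simp
  have h1 : dpart (fun f => (vM f : ℂ)) n = PowerSeries.coeff n (dV p) := by simp [dV, dser]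
  rw [h1, vaughan r, map_add, map_sub, map_add, map_add, map_sub, map_add]
  have t1 : PowerSeries.coeff n (dser (cut (fun f : (ZMod p)[X] => (vM f : ℂ)) r)) = 0 := by
    simp only [dser, PowerSeries.coeff_mk]
    refine dpart_eq_zero fun f hf => ?_
    rw [cut, if_neg]
    rw [(mem_monics.1 hf).2]; omega
  have t2 : ‖ev (E x) (PowerSeries.coeff n (dD p * dser (cut mu r)))‖ ≤ (n + 1) * (n * Q) := by
    rw [mul_comm, dD]
    refine norm_ev_coeff_le _ _ _ _ fun i j hij => ?_
    by_cases hi : i ≤ r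
    · rw [dpart_congr (b := fun _ => (j : ℂ)) (k := j) fun f hf => by rw [(mem_monics.1 hf).2]]
      refine (typeI x hij (B := 1) (fun f _ => norm_cut_le r f (norm_mu_le f)) zero_le_one _).trans ?_
      rw [one_mul, Complex.norm_natCast]
      have : (j : ℝ) ≤ n := by exact_mod_cast (by omega : j ≤ n)
      have h2 := div_p_pow_le (p := p) (n := n) (s := r / 2) (t := min j (rk n x)) (by omega)
      gcongr
    · rw [dpart_eq_zero (a := cut mu r) fun f hf => by
        rw [cut, if_neg]; rw [(mem_monics.1 hf).2]; exact hi]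
      simp; positivity
  have t3 : ‖ev (E x) (PowerSeries.coeff n (dZ p * dser (conv (cut (fun f => (vM f : ℂ)) r)
      (cut mu r))))‖ ≤ (n + 1) * (n * Q) := by
    rw [mul_comm, dZ]
    refine norm_ev_coeff_le _ _ _ _ fun i j hij => ?_
    by_cases hi : i ≤ 2 * r
    · have h3 : ∀ f ∈ monics p i, ‖conv (cut (fun f => (vM f : ℂ)) r) (cut mu r) f‖ ≤ i := by
        intro f hf
        refine (norm_conv_le (fun f => norm_cut_le r f (h0 f))
          (fun f => norm_cut_le r f (norm_mu_le f)) (mem_monics.1 hf).1).trans ?_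
        rw [(mem_monics.1 hf).2]
      refine (typeI x hij h3 (by positivity) _).trans ?_
      rw [norm_one, mul_one]
      have : (i : ℝ) ≤ n := by exact_mod_cast (by omega : i ≤ n)
      have h2 := div_p_pow_le (p := p) (n := n) (s := r / 2) (t := min j (rk n x)) (by omega)
      gcongr
    · rw [dpart_eq_zero (k := i) fun f hf => ?_]
      · simp; positivity
      · refine Finset.sum_eq_zero fun d hd => ?_
        have h4 := natDegree_mdiv (mem_monics.1 hf).1 hd
        rw [(mem_monics.1 hf).2] at h4
        unfold cut
        by_cases h5 : d.natDegree ≤ r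
        · rw [if_neg (c := (f /ₘ d).natDegree ≤ r) (by omega), mul_zero]
        · rw [if_neg h5, zero_mul]
  have t4 : ‖ev (E x) (PowerSeries.coeff n (dser (fun f => mu f - cut mu r f)
      * dser (conv (fun _ => 1) (fun f => (vM f : ℂ) - cut (fun f => (vM f : ℂ)) r f))))‖
      ≤ (n + 1) * (n * Q) := by
    obtain ⟨b, hb⟩ : ∃ b : (ZMod p)[X] → ℂ,
      (fun f => (vM f : ℂ) - cut (fun f => (vM f : ℂ)) r f) = b := ⟨_, rfl⟩
    have hb1 : ∀ f, ‖b f‖ ≤ vM f := fun f => by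
      rw [← hb]; exact norm_sub_cut_le (a := fun f => (vM f : ℂ)) r f (h0 f)
    have hb2 : ∀ f : (ZMod p)[X], f.natDegree ≤ r → b f = 0 := fun f hf => by
      simp [← hb, cut, hf]
    rw [hb]
    refine norm_ev_coeff_le _ _ _ _ fun i j hij => ?_
    have hz : ∀ a : (ZMod p)[X] → ℂ, ∀ f : (ZMod p)[X], f.natDegree ≤ r → a f - cut a r f = 0 :=
      fun a f hf => by rw [cut, if_pos hf, sub_self]
    by_cases hi : i ≤ r
    · rw [dpart_eq_zero (k := i) fun f hf => hz _ _ (by rwa [(mem_monics.1 hf).2])]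
      simp; positivity
    by_cases hj : j ≤ r
    · rw [dpart_eq_zero (k := j) fun f hf => ?_]
      · simp; positivity
      · refine Finset.sum_eq_zero fun d hd => ?_
        have h4 := natDegree_mdiv (mem_monics.1 hf).1 hd
        rw [(mem_monics.1 hf).2] at h4
        rw [hb2, mul_zero]
        omega
    have h6 : ∀ f ∈ monics p j,
        ‖conv b (fun _ => 1) f‖ ≤ j := by
      intro f hf
      refine (norm_conv_le hb1
        (fun f => by simp) (mem_monics.1 hf).1).trans ?_
      rw [(mem_monics.1 hf).2]
    rw [conv_comm]
    have h7 := typeII x hij (A := 1) (fun f _ => norm_sub_cut_le r f (norm_mu_le f)) h6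
    have hjn : (j : ℝ) ≤ n := by exact_mod_cast (by omega : j ≤ n)
    refine abs_le_of_sq_le (by positivity) (h7.trans ?_)
    rw [one_mul, mul_pow]
    have h8 := div_p_pow_le (p := p) (n := 2 * n) (s := 2 * (r / 2))
      (t := min (min i j) (rk n x)) (by omega)
    have h9 : Q ^ 2 = (p : ℝ) ^ (2 * n) / (p : ℝ) ^ (2 * (r / 2)) := by
      rw [hQ, div_pow, ← pow_mul, ← pow_mul, mul_comm n, mul_comm (r / 2)]
    rw [h9]
    gcongr
  rw [t1, map_zero, zero_add]
  calc _ ≤ (n + 1) * (n * Q) + (n + 1) * (n * Q) + (n + 1) * (n * Q) :=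
        (norm_add_le _ _).trans (add_le_add ((norm_sub_le _ _).trans (add_le_add t2 t3)) t4)
    _ = _ := by ring

/-! ### Heath-Brown's identity and the average over large ranks -/

/-- A family of nonnegative integers with sum `n`, each at most `n / 4`, has a subfamily with sum
between `2n / 5` and `3n / 5`. -/
lemma exists_subsum {ι : Type*} [Fintype ι] {n : ℕ} (hn : 0 < n) (l : ι → ℕ) (hl : ∑ i, l i = n)
    (h4 : ∀ i, 4 * l i ≤ n) : ∃ T : Finset ι, 2 * n ≤ 5 * ∑ i ∈ T, l i ∧ 5 * ∑ i ∈ T, l i ≤ 3 * n := by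
  obtain ⟨T, hT, hmax⟩ := Finset.exists_max_image
    ((Finset.univ : Finset (Finset ι)).filter fun T => 5 * ∑ i ∈ T, l i ≤ 3 * n)
    (fun T => ∑ i ∈ T, l i) ⟨∅, by simp⟩
  simp only [Finset.mem_filter, Finset.mem_univ, true_and] at hT hmax
  by_cases h : 2 * n ≤ 5 * ∑ i ∈ T, l i
  · exact ⟨T, h, hT⟩
  -- by maximality the positive elements outside `T` exceed `n / 5`, and two of them suffice
  have hbig : ∀ i ∉ T, l i ≠ 0 → n < 5 * l i := by
    intro i hi h0
    by_contra hc
    have h1 := Finset.sum_insert hi (f := l)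
    have h2 := hmax (insert i T) (by rw [h1]; omega)
    rw [h1] at h2
    omega
  have hsum : ∑ i ∈ T, l i + ∑ i ∈ Tᶜ, l i = n := by rw [Finset.sum_add_sum_compl, hl]
  obtain ⟨i, hi, hi0⟩ := Finset.exists_ne_zero_of_sum_ne_zero
    (show ∑ i ∈ Tᶜ, l i ≠ 0 by omega)
  have h5 := Finset.add_sum_erase _ l hi
  have h6 := h4 i
  obtain ⟨j, hj, hj0⟩ := Finset.exists_ne_zero_of_sum_ne_zero
    (show ∑ j ∈ Tᶜ.erase i, l j ≠ 0 by omega)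
  have h7 := h4 j
  rw [Finset.mem_erase] at hj
  have h8 := hbig i (by simpa using hi) hi0
  have h9 := hbig j (by simpa using hj.2) hj0
  refine ⟨{i, j}, ?_⟩
  rw [Finset.sum_pair hj.1.symm]
  omega

/-- `x` is the part of degree `k` of a Dirichlet series with coefficients of size at most `B`. -/
def IsHom (x : FA p) (k : ℕ) (B : ℝ) : Prop :=
  ∃ a : (ZMod p)[X] → ℂ, (∀ f ∈ monics p k, ‖a f‖ ≤ B) ∧ x = dpart a k

lemma IsHom.mono {x : FA p} {k : ℕ} {B B' : ℝ} (h : IsHom x k B) (hB : B ≤ B') : IsHom x k B' := by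
  obtain ⟨a, ha, rfl⟩ := h
  exact ⟨a, fun f hf => (ha f hf).trans hB, rfl⟩

lemma IsHom.mul {x y : FA p} {k l : ℕ} {B B' : ℝ} (hB : 0 ≤ B) (hB' : 0 ≤ B') (hx : IsHom x k B)
    (hy : IsHom y l B') : IsHom (x * y) (k + l) (B * B' * 2 ^ (k + l)) := by
  obtain ⟨a, ha, rfl⟩ := hx
  obtain ⟨b, hb, rfl⟩ := hy
  refine ⟨_, ?_, dpart_mul a b k l⟩
  intro h hh
  obtain ⟨hm, hd⟩ := mem_monics.1 hh
  refine (norm_sum_le _ _).trans ?_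
  calc _ ≤ ∑ d ∈ (mdiv h).filter (fun d => d.natDegree = k), B * B' := by
        refine Finset.sum_le_sum fun d hdm => ?_
        obtain ⟨hd1, hd2⟩ := Finset.mem_filter.1 hdm
        have h3 := natDegree_mdiv hm hd1
        obtain ⟨hd4, e, he⟩ := (mem_mdiv hm).1 hd1
        have he1 : (h /ₘ d).Monic := by
          rw [he, mul_divByMonic hd4]
          rw [he] at hm; exact hd4.of_mul_monic_left hm
        rw [norm_mul]
        exact mul_le_mul (ha d (mem_monics.2 ⟨hd4, hd2⟩)) (hb _ (mem_monics.2 ⟨he1, by omega⟩))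
          (norm_nonneg _) hB
    _ = ((mdiv h).filter (fun d => d.natDegree = k)).card * (B * B') := by simp
    _ ≤ 2 ^ (k + l) * (B * B') := by
        gcongr
        have := (Finset.card_filter_le (mdiv h) (fun d => d.natDegree = k)).trans (card_mdiv_le hm)
        rw [hd] at this
        exact_mod_cast this
    _ = _ := by ring

lemma isHom_one : IsHom (1 : FA p) 0 1 := by
  refine ⟨fun _ => 1, by simp, ?_⟩
  rw [dpart_zero, MonoidAlgebra.one_def]

lemma isHom_prod {ι : Type*} {n : ℕ} {B : ℝ} (hB : 1 ≤ B) (x : ι → FA p) (l : ι → ℕ)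
    (h : ∀ i, IsHom (x i) (l i) B) (T : Finset ι) (hT : ∑ i ∈ T, l i ≤ n) :
    IsHom (∏ i ∈ T, x i) (∑ i ∈ T, l i) ((B * 2 ^ n) ^ T.card) := by
  induction T using Finset.induction_on with
  | empty => simpa using isHom_one
  | insert i T hi ih =>
    rw [Finset.sum_insert hi] at hT ⊢
    rw [Finset.prod_insert hi, Finset.card_insert_of_notMem hi]
    refine ((h i).mul (by linarith) (by positivity) (ih (by omega))).mono ?_
    have h2 : (2 : ℝ) ^ (l i + ∑ i ∈ T, l i) ≤ 2 ^ n := pow_le_pow_right₀ (by norm_num) hT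
    calc _ ≤ B * (B * 2 ^ n) ^ T.card * 2 ^ n := by gcongr
      _ = _ := by rw [pow_succ]; ring

lemma pow_div_le {L G d : ℝ} (hL0 : 0 ≤ L) (hG4 : G ^ 4 = p) (hG : 1 ≤ G) (hd : 0 < d)
    (hL : L * d ≤ G) {m s : ℕ} (h : m ≤ 4 * s) : L ^ m / (p : ℝ) ^ s ≤ 1 / d ^ m := by
  have hp := p_pos (p := p)
  rw [div_le_div_iff₀ (by positivity) (by positivity), ← mul_pow, one_mul, ← hG4, ← pow_mul]
  exact (pow_le_pow_left₀ (by positivity) hL m).trans (pow_le_pow_right₀ hG h)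

lemma pow_div_le' {L G d : ℝ} (hL0 : 0 ≤ L) (hG4 : G ^ 4 = p) (hG : 1 ≤ G) (hd : 0 < d)
    (hL : L * d ≤ G) {m s : ℕ} (h : m ≤ 4 * s + 4) : L ^ m / (p : ℝ) ^ s ≤ p / d ^ m := by
  have hp := p_pos (p := p)
  have := pow_div_le (p := p) hL0 hG4 hG hd hL (m := m) (s := s + 1) (by omega)
  calc _ = p * (L ^ m / (p : ℝ) ^ (s + 1)) := by rw [pow_succ]; field_simp
    _ ≤ p * (1 / d ^ m) := by gcongr
    _ = _ := by ring

/-- Average over large ranks of a product of pieces, each of which is short or smooth: a long smooth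
piece gives a Type I sum, and otherwise the pieces group into a balanced bilinear sum. -/
lemma tuple_bound {ι : Type*} [Fintype ι] {n : ℕ} (hn : 0 < n) {f : ZMod p → ℝ}
    (hf0 : ∀ a, 0 ≤ f a) (hf1 : ∀ a, f a ≤ 1) (hf : 1 ≤ ∑ a, f a) {G d B : ℝ} (hG4 : G ^ 4 = p)
    (hG : 1 ≤ G) (hd : 1 ≤ d) (hL : (∑ a, f a) * d ^ 2 ≤ G) (hB : 1 ≤ B)
    (Ξ : Finset (Fin n → ZMod p)) (hΞ : ∀ ξ ∈ Ξ, 2 * n < 5 * rk n (ext ξ))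
    (x : ι → FA p) (l : ι → ℕ) (hl : ∑ i, l i = n) (hx : ∀ i, IsHom (x i) (l i) B)
    (hs : ∀ i, 4 * l i ≤ n ∨ (∃ c, ‖c‖ ≤ B ∧ x i = dpart (fun _ => c) (l i)) ∨ x i = 0) :
    ∑ ξ ∈ Ξ, (∏ i, f (ξ i)) * ‖ev (E (ext ξ)) (∏ i, x i)‖
      ≤ (B * 2 ^ n) ^ Fintype.card ι * (2 * p * ((p : ℝ) ^ n / d ^ n)) := by
  have hp := p_pos (p := p)
  have hp1 := one_le_p (p := p)
  set L := ∑ a, f a with hLdef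
  have hL0 : 0 ≤ L := zero_le_one.trans hf
  have hd2 : 0 < d ^ 2 := by positivity
  have hw0 : ∀ ξ : Fin n → ZMod p, 0 ≤ ∏ i, f (ξ i) := fun ξ => Finset.prod_nonneg fun i _ => hf0 _
  have h2n : (1 : ℝ) ≤ 2 ^ n := one_le_pow₀ (by norm_num)
  have hB2 : 1 ≤ B * 2 ^ n := one_le_mul_of_one_le_of_one_le hB h2n
  by_cases hz : ∃ i, x i = 0
  · obtain ⟨i, hi⟩ := hz
    rw [Finset.prod_eq_zero (Finset.mem_univ i) hi]
    simp; positivity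
  by_cases hi : ∃ i, n < 4 * l i
  · obtain ⟨i, hi⟩ := hi
    obtain ⟨c, hc, hxc⟩ : ∃ c, ‖c‖ ≤ B ∧ x i = dpart (fun _ => c) (l i) := by
      rcases hs i with h | h | h
      · omega
      · exact h
      · exact absurd ⟨i, h⟩ hz
    have hsum := Finset.sum_erase_add _ l (Finset.mem_univ i)
    rw [hl] at hsum
    obtain ⟨a, ha, hxa⟩ := isHom_prod hB x l hx (Finset.univ.erase i) (n := n) (by omega)
    have hprod : ∏ i, x i = dpart a (∑ j ∈ Finset.univ.erase i, l j) * dpart (fun _ => c) (l i) := by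
      rw [← hxa, ← hxc, Finset.prod_erase_mul _ _ (Finset.mem_univ i)]
    have hcard : (Finset.univ.erase i).card + 1 = Fintype.card ι := by
      rw [Finset.card_erase_add_one (Finset.mem_univ i), Finset.card_univ]
    have h1 : ∀ ξ ∈ Ξ, ‖ev (E (ext ξ)) (∏ i, x i)‖
        ≤ (B * 2 ^ n) ^ Fintype.card ι * ((p : ℝ) ^ n / (p : ℝ) ^ (n / 4)) := by
      intro ξ hξ
      rw [hprod]
      refine (typeI (ext ξ) hsum ha (by positivity) c).trans ?_
      rw [← hcard, pow_succ]
      have h3 := div_p_pow_le (p := p) (n := n) (s := n / 4) (t := min (l i) (rk n (ext ξ)))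
        (by have := hΞ ξ hξ; omega)
      have h4 : ‖c‖ ≤ B * 2 ^ n := hc.trans (le_mul_of_one_le_right (by linarith) h2n)
      gcongr
    calc _ ≤ ∑ ξ ∈ Ξ, (∏ i, f (ξ i)) *
          ((B * 2 ^ n) ^ Fintype.card ι * ((p : ℝ) ^ n / (p : ℝ) ^ (n / 4))) :=
          Finset.sum_le_sum fun ξ hξ => mul_le_mul_of_nonneg_left (h1 ξ hξ) (hw0 ξ)
      _ = (∑ ξ ∈ Ξ, ∏ i, f (ξ i)) *
          ((B * 2 ^ n) ^ Fintype.card ι * ((p : ℝ) ^ n / (p : ℝ) ^ (n / 4))) := by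
          rw [Finset.sum_mul]
      _ ≤ L ^ n * ((B * 2 ^ n) ^ Fintype.card ι * ((p : ℝ) ^ n / (p : ℝ) ^ (n / 4))) := by
          gcongr; exact sum_prod_le_pow hf0 hf1 Ξ
      _ = (B * 2 ^ n) ^ Fintype.card ι * ((p : ℝ) ^ n * (L ^ n / (p : ℝ) ^ (n / 4))) := by ring
      _ ≤ (B * 2 ^ n) ^ Fintype.card ι * ((p : ℝ) ^ n * (p / (d ^ 2) ^ n)) := by
          have := pow_div_le' (p := p) hL0 hG4 hG hd2 hL (m := n) (s := n / 4) (by omega)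
          gcongr
      _ ≤ (B * 2 ^ n) ^ Fintype.card ι * ((p : ℝ) ^ n * (2 * p / d ^ n)) := by
          have : d ≤ d ^ 2 := by nlinarith
          gcongr; linarith
      _ = _ := by ring
  · push Not at hi
    obtain ⟨T, hT1, hT2⟩ := exists_subsum hn l hl hi
    have hsum : ∑ i ∈ T, l i + ∑ i ∈ Tᶜ, l i = n := by rw [Finset.sum_add_sum_compl, hl]
    -- order the two factors by degree
    obtain ⟨S, hS1, hS2⟩ : ∃ S : Finset ι, 2 * n ≤ 5 * ∑ i ∈ S, l i ∧ 2 * ∑ i ∈ S, l i ≤ n := by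
      by_cases h : 2 * ∑ i ∈ T, l i ≤ n
      · exact ⟨T, hT1, h⟩
      · exact ⟨Tᶜ, by omega, by omega⟩
    have hsum : ∑ i ∈ S, l i + ∑ i ∈ Sᶜ, l i = n := by rw [Finset.sum_add_sum_compl, hl]
    obtain ⟨a, ha, hxa⟩ := isHom_prod hB x l hx S (n := n) (by omega)
    obtain ⟨b, hb, hxb⟩ := isHom_prod hB x l hx Sᶜ (n := n) (by omega)
    have hprod : ∏ i, x i = dpart a (∑ i ∈ S, l i) * dpart b (∑ i ∈ Sᶜ, l i) := by
      rw [← hxa, ← hxb, Finset.prod_mul_prod_compl]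
    rw [hprod]
    have h := typeII_avg (t := (2 * n + 4) / 5) hsum (by omega) (by omega) hn hf0 hf1 hf Ξ
      (fun ξ hξ => by have := hΞ ξ hξ; omega) ha hb
    refine abs_le_of_sq_le (by positivity) (h.trans ?_)
    rw [← pow_add, Finset.card_add_card_compl]
    have h1 := pow_div_le (p := p) hL0 hG4 hG hd2 hL (m := 2 * n) (s := ∑ i ∈ Sᶜ, l i) (by omega)
    have h2 := pow_div_le (p := p) hL0 hG4 hG hd2 hL (m := ∑ i ∈ Sᶜ, l i + n)
      (s := (2 * n + 4) / 5) (by omega)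
    have h3 : (1 : ℝ) / (d ^ 2) ^ (2 * n) ≤ 1 / d ^ (2 * n) := by
      have : d ≤ d ^ 2 := by nlinarith
      gcongr
    have h4 : (1 : ℝ) / (d ^ 2) ^ (∑ i ∈ Sᶜ, l i + n) ≤ 1 / d ^ (2 * n) := by
      rw [← pow_mul]
      have : 2 * n ≤ 2 * (∑ i ∈ Sᶜ, l i + n) := by omega
      gcongr
    calc _ ≤ ((B * 2 ^ n) ^ Fintype.card ι) ^ 2 * (p : ℝ) ^ (2 * n) *
          (1 / d ^ (2 * n) + 1 / d ^ (2 * n)) := by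
          exact mul_le_mul_of_nonneg_left (add_le_add (h1.trans h3) (h2.trans h4)) (by positivity)
      _ = 2 * (((B * 2 ^ n) ^ Fintype.card ι) * ((p : ℝ) ^ n / d ^ n)) ^ 2 := by
          rw [mul_comm 2 n, pow_mul, pow_mul, mul_pow _ ((p : ℝ) ^ n / d ^ n), div_pow]; ring
      _ ≤ (2 * p) ^ 2 * (((B * 2 ^ n) ^ Fintype.card ι) * ((p : ℝ) ^ n / d ^ n)) ^ 2 := by
          gcongr; nlinarith
      _ = _ := by ring

/-- A coefficient sequence whose parts of degree larger than `n / 4` are smooth. -/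
def Piece (n : ℕ) (a : (ZMod p)[X] → ℂ) : Prop :=
  (∀ k ≤ n, IsHom (dpart a k) k n) ∧
    ∀ k ≤ n, 4 * k ≤ n ∨ (∃ c : ℂ, ‖c‖ ≤ n ∧ dpart a k = dpart (fun _ => c) k) ∨ dpart a k = 0

lemma piece_const {n : ℕ} (hn : 0 < n) : Piece n (fun _ : (ZMod p)[X] => (1 : ℂ)) := by
  have hn1 : (1 : ℝ) ≤ n := by exact_mod_cast hn
  exact ⟨fun k hk => ⟨_, fun f _ => by simpa using hn1, rfl⟩,
    fun k hk => Or.inr (Or.inl ⟨1, by simpa using hn1, rfl⟩)⟩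

lemma piece_deg (n : ℕ) : Piece n (fun f : (ZMod p)[X] => (f.natDegree : ℂ)) := by
  refine ⟨fun k hk => ⟨_, fun f hf => ?_, rfl⟩, fun k hk => Or.inr (Or.inl ⟨k, ?_, ?_⟩)⟩
  · rw [(mem_monics.1 hf).2]; simpa using hk
  · simpa using hk
  · exact dpart_congr fun f hf => by rw [(mem_monics.1 hf).2]

lemma piece_cut {n : ℕ} (hn : 0 < n) : Piece n (cut (mu (p := p)) (n / 4)) := by
  have hn1 : (1 : ℝ) ≤ n := by exact_mod_cast hn
  refine ⟨fun k hk => ⟨_, fun f _ => (norm_cut_le _ f (norm_mu_le f)).trans hn1, rfl⟩,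
    fun k hk => ?_⟩
  by_cases h : 4 * k ≤ n
  · exact Or.inl h
  · refine Or.inr (Or.inr (dpart_eq_zero fun f hf => ?_))
    rw [cut, if_neg]
    rw [(mem_monics.1 hf).2]; omega

/-- The average over large ranks of the degree `n` part of a product of pieces: `tuple_bound`, summed
over the ways to distribute the degree among the pieces. -/
lemma prod_bound {ι : Type*} [Fintype ι] {n : ℕ} (hn : 0 < n) {f : ZMod p → ℝ}
    (hf0 : ∀ a, 0 ≤ f a) (hf1 : ∀ a, f a ≤ 1) (hf : 1 ≤ ∑ a, f a) {G d : ℝ} (hG4 : G ^ 4 = p)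
    (hG : 1 ≤ G) (hd : 1 ≤ d) (hL : (∑ a, f a) * d ^ 2 ≤ G)
    (Ξ : Finset (Fin n → ZMod p)) (hΞ : ∀ ξ ∈ Ξ, 2 * n < 5 * rk n (ext ξ))
    (a : ι → (ZMod p)[X] → ℂ) (ha : ∀ i, Piece n (a i)) :
    ∑ ξ ∈ Ξ, (∏ i, f (ξ i)) * ‖ev (E (ext ξ)) (PowerSeries.coeff n (∏ i, dser (a i)))‖
      ≤ 2 ^ (n + Fintype.card ι) *
        ((n * 2 ^ n) ^ Fintype.card ι * (2 * p * ((p : ℝ) ^ n / d ^ n))) := by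
  have hp := p_pos (p := p)
  have hw0 : ∀ ξ : Fin n → ZMod p, 0 ≤ ∏ i, f (ξ i) := fun ξ => Finset.prod_nonneg fun i _ => hf0 _
  rw [PowerSeries.coeff_prod]
  simp only [dser, PowerSeries.coeff_mk]
  set I := Finset.finsuppAntidiag (Finset.univ : Finset ι) n with hI
  have hcard : (I.card : ℝ) ≤ 2 ^ (n + Fintype.card ι) := by
    rw [hI, Finset.card_finsuppAntidiag_nat_eq_choose, Finset.card_univ]
    have h1 := (Nat.choose_le_two_pow (Fintype.card ι + n - 1) n).trans
      (Nat.pow_le_pow_right (n := 2) (by norm_num) (show _ ≤ n + Fintype.card ι by omega))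
    exact_mod_cast h1
  calc _ ≤ ∑ ξ ∈ Ξ, ∑ l ∈ I, (∏ i, f (ξ i)) * ‖ev (E (ext ξ)) (∏ i, dpart (a i) (l i))‖ := by
        refine Finset.sum_le_sum fun ξ _ => ?_
        rw [map_sum, ← Finset.mul_sum]
        exact mul_le_mul_of_nonneg_left (norm_sum_le _ _) (hw0 ξ)
    _ = ∑ l ∈ I, ∑ ξ ∈ Ξ, (∏ i, f (ξ i)) * ‖ev (E (ext ξ)) (∏ i, dpart (a i) (l i))‖ :=
        Finset.sum_comm
    _ ≤ ∑ l ∈ I, ((n * 2 ^ n) ^ Fintype.card ι * (2 * p * ((p : ℝ) ^ n / d ^ n))) := by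
        refine Finset.sum_le_sum fun l hl => ?_
        have hl1 : ∑ i, l i = n := (Finset.mem_finsuppAntidiag.1 hl).1
        have hl2 : ∀ i, l i ≤ n := fun i => by
          rw [← hl1]; exact Finset.single_le_sum (fun _ _ => Nat.zero_le _) (Finset.mem_univ i)
        exact tuple_bound hn hf0 hf1 hf hG4 hG hd hL (by exact_mod_cast hn) Ξ hΞ _ l hl1
          (fun i => (ha i).1 _ (hl2 i)) (fun i => (ha i).2 _ (hl2 i))
    _ ≤ _ := by
        rw [Finset.sum_const, nsmul_eq_mul]
        have hd0 : 0 < d := by linarith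
        gcongr

/-- Heath-Brown's identity with four factors, in degree `n`. -/
lemma heathBrown {n : ℕ} : PowerSeries.coeff n (dV p) = PowerSeries.coeff n
    (dD p * dser (cut mu (n / 4)) * (4 - 6 * (dZ p * dser (cut mu (n / 4)))
      + 4 * (dZ p * dser (cut mu (n / 4))) ^ 2 - (dZ p * dser (cut mu (n / 4))) ^ 3)) := by
  have h1 : dZ p * dM p = 1 := dZ_mul_dM
  have h2 : dZ p * dV p = dD p := dZ_mul_dV
  have h3 : (PowerSeries.X : PowerSeries (FA p)) ^ (n / 4 + 1) ∣ 1 - dZ p * dser (cut mu (n / 4)) := by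
    have h4 : 1 - dZ p * dser (cut (mu (p := p)) (n / 4))
        = dZ p * dser (fun f => mu f - cut mu (n / 4) f) := by
      rw [dser_split, ← h1]; change _ = dZ p * (dM p - _); ring
    rw [h4]
    refine Dvd.dvd.mul_left ?_ _
    rw [PowerSeries.X_pow_dvd_iff]
    intro m hm
    simp only [dser, PowerSeries.coeff_mk]
    refine dpart_eq_zero fun f hf => ?_
    rw [cut, if_pos, sub_self]
    rw [(mem_monics.1 hf).2]; omega
  generalize dser (cut (mu (p := p)) (n / 4)) = M at h3 ⊢
  have h5 : dV p = dD p * M * (4 - 6 * (dZ p * M) + 4 * (dZ p * M) ^ 2 - (dZ p * M) ^ 3)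
      + dV p * (1 - dZ p * M) ^ 4 := by
    rw [← h2]; ring
  have h6 : PowerSeries.coeff n (dV p * (1 - dZ p * M) ^ 4) = 0 := by
    have h7 : (PowerSeries.X : PowerSeries (FA p)) ^ ((n / 4 + 1) * 4) ∣ dV p * (1 - dZ p * M) ^ 4 := by
      rw [pow_mul]
      exact Dvd.dvd.mul_left (pow_dvd_pow_of_dvd h3 4) _
    exact PowerSeries.X_pow_dvd_iff.1 h7 n (by omega)
  conv_lhs => rw [h5]
  rw [map_add, h6, add_zero]

/-- The average of the exponential sum over prime powers over digit vectors of large rank. -/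
lemma largeRank_bound {n : ℕ} (hn : 0 < n) {f : ZMod p → ℝ}
    (hf0 : ∀ a, 0 ≤ f a) (hf1 : ∀ a, f a ≤ 1) (hf : 1 ≤ ∑ a, f a) {G d : ℝ} (hG4 : G ^ 4 = p)
    (hG : 1 ≤ G) (hd : 1 ≤ d) (hL : (∑ a, f a) * d ^ 2 ≤ G)
    (Ξ : Finset (Fin n → ZMod p)) (hΞ : ∀ ξ ∈ Ξ, 2 * n < 5 * rk n (ext ξ)) :
    ∑ ξ ∈ Ξ, (∏ i, f (ξ i)) * ‖ev (E (ext ξ)) (dpart (fun f => (vM f : ℂ)) n)‖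
      ≤ 15 * 2 ^ (n + 8) * ((n * 2 ^ n) ^ 8 * (2 * p * ((p : ℝ) ^ n / d ^ n))) := by
  have hp := p_pos (p := p)
  have hd0 : 0 < d := by linarith
  have hw0 : ∀ ξ : Fin n → ZMod p, 0 ≤ ∏ i, f (ξ i) := fun ξ => Finset.prod_nonneg fun i _ => hf0 _
  set M := dser (cut (mu (p := p)) (n / 4)) with hM
  set K : ℝ := 2 ^ (n + 8) * ((n * 2 ^ n) ^ 8 * (2 * p * ((p : ℝ) ^ n / d ^ n))) with hK
  have key : ∀ m : ℕ, m ≤ 3 → ∑ ξ ∈ Ξ, (∏ i, f (ξ i)) *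
      ‖ev (E (ext ξ)) (PowerSeries.coeff n (dD p * M * (dZ p * M) ^ m))‖ ≤ K := by
    intro m hm
    have h1 := prod_bound hn hf0 hf1 hf hG4 hG hd hL Ξ hΞ
      (ι := Fin (m + 1) ⊕ Fin (m + 1))
      (Sum.elim (fun _ => cut mu (n / 4))
        (Fin.cons (fun f => (f.natDegree : ℂ)) (fun _ _ => 1)))
      (by
        rintro (i | i)
        · exact piece_cut hn
        · refine Fin.cases ?_ (fun j => ?_) i
          · exact piece_deg n
          · exact piece_const hn)
    rw [Fintype.prod_sum_type, Fin.prod_univ_succ (n := m) (f := fun i => dser (Sum.elim _ _ (Sum.inr i)))] at h1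
    simp only [Sum.elim_inl, Sum.elim_inr, Fin.cons_zero, Fin.cons_succ, Finset.prod_const,
      Finset.card_univ, Fintype.card_fin, Fintype.card_sum] at h1
    have h2 : dD p * M * (dZ p * M) ^ m = M ^ (m + 1) *
        (dser (fun f : (ZMod p)[X] => (f.natDegree : ℂ)) * dser (fun _ : (ZMod p)[X] => (1 : ℂ)) ^ m) := by
      rw [dD, dZ]; ring
    rw [h2]
    refine h1.trans ?_
    have h3 : (1 : ℝ) ≤ n * 2 ^ n := by
      have : (1 : ℝ) ≤ n := by exact_mod_cast hn
      exact one_le_mul_of_one_le_of_one_le this (one_le_pow₀ (by norm_num))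
    rw [hK]
    have h4 : m + 1 + (m + 1) ≤ 8 := by omega
    gcongr
    norm_num
  have h1 : ∀ ξ : Fin n → ZMod p, ‖ev (E (ext ξ)) (dpart (fun f => (vM f : ℂ)) n)‖
      ≤ 4 * ‖ev (E (ext ξ)) (PowerSeries.coeff n (dD p * M * (dZ p * M) ^ 0))‖
      + 6 * ‖ev (E (ext ξ)) (PowerSeries.coeff n (dD p * M * (dZ p * M) ^ 1))‖
      + 4 * ‖ev (E (ext ξ)) (PowerSeries.coeff n (dD p * M * (dZ p * M) ^ 2))‖
      + 1 * ‖ev (E (ext ξ)) (PowerSeries.coeff n (dD p * M * (dZ p * M) ^ 3))‖ := by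
    intro ξ
    have h2 : dpart (fun f : (ZMod p)[X] => (vM f : ℂ)) n = PowerSeries.coeff n (dV p) := by
      simp [dV, dser]
    rw [h2, heathBrown, ← hM]
    have h3 : dD p * M * (4 - 6 * (dZ p * M) + 4 * (dZ p * M) ^ 2 - (dZ p * M) ^ 3)
      = (4 : ℕ) • (dD p * M * (dZ p * M) ^ 0) - (6 : ℕ) • (dD p * M * (dZ p * M) ^ 1)
        + (4 : ℕ) • (dD p * M * (dZ p * M) ^ 2) - (dD p * M * (dZ p * M) ^ 3) := by
      simp only [nsmul_eq_mul]; push_cast; ring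
    rw [h3]
    simp only [map_sub, map_add, map_nsmul]
    refine (norm_sub_le _ _).trans (add_le_add ((norm_add_le _ _).trans
      (add_le_add ((norm_sub_le _ _).trans (add_le_add ?_ ?_)) ?_)) ?_)
    · rw [nsmul_eq_mul, norm_mul]; simp
    · rw [nsmul_eq_mul, norm_mul]; simp
    · rw [nsmul_eq_mul, norm_mul]; simp
    · rw [one_mul]
  calc _ ≤ 4 * K + 6 * K + 4 * K + 1 * K := by
        refine le_trans ?_ (add_le_add (add_le_add (add_le_add
          (mul_le_mul_of_nonneg_left (key 0 (by norm_num)) (by norm_num))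
          (mul_le_mul_of_nonneg_left (key 1 (by norm_num)) (by norm_num)))
          (mul_le_mul_of_nonneg_left (key 2 (by norm_num)) (by norm_num)))
          (mul_le_mul_of_nonneg_left (key 3 (by norm_num)) (by norm_num)))
        simp only [Finset.mul_sum]
        rw [← Finset.sum_add_distrib, ← Finset.sum_add_distrib, ← Finset.sum_add_distrib]
        refine Finset.sum_le_sum fun ξ _ => ?_
        refine (mul_le_mul_of_nonneg_left (h1 ξ) (hw0 ξ)).trans_eq ?_
        ring
    _ = _ := by rw [hK]; ring

/-! ### Frequencies of small rank: dense or supported near the two ends -/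

/-- A sequence of rank `r` satisfies a linear recurrence of length at most `r`. A run of `r` zeros
propagates forwards through the leading coefficient of the recurrence, and backwards through its
lowest nonzero coefficient. -/
lemma sparse_or_dense {n R : ℕ} {x : ℕ → ZMod p} (hr : rk n x ≤ R) (hR : R < n / 2) :
    (∀ j, R ≤ j → j + R + 1 < n → x j = 0) ∨
      ∀ a, a + R + 1 ≤ n → ∃ j, a ≤ j ∧ j < a + R ∧ x j ≠ 0 := by
  by_contra! hcon
  obtain ⟨⟨j, hj1, hj2, hj⟩, a, ha, hz⟩ := hcon
  obtain ⟨d, g, hmin⟩ := exists_isMin (lt_of_le_of_lt hr hR)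
  have hd := hmin.le_rk
  have hrec := hmin.recurrence
  obtain ⟨hg, hgd, -, -⟩ := hmin
  have hfwd : ∀ i, a ≤ i → i + R + 1 < n → x i = 0 := by
    intro i hi1 hi2
    have := eq_zero_of_recurrence (y := fun j => x (a + j)) (N := n - (R + 1) - a + d) hg hgd
      (fun j hj => hz _ (by omega) (by omega)) (fun j hj => by
        have h1 := hrec (a + j) (by omega)
        rw [act_apply g _ _ (Nat.lt_succ_self _)] at h1 ⊢
        rw [← h1]
        refine Finset.sum_congr rfl fun i _ => ?_
        congr 2; ring)
      (i - a) (by omega)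
    simpa [Nat.add_sub_cancel' hi1] using this
  let m := g.natTrailingDegree
  have hm : g.coeff m ≠ 0 := trailingCoeff_nonzero_iff_nonzero.2 hg.ne_zero
  have hmd : m ≤ d := by rw [← hgd]; exact natTrailingDegree_le_natDegree g
  have hbwd : ∀ k i, 0 < k → i + k = a + R → m ≤ i → x i = 0 := by
    intro k
    induction k using Nat.strong_induction_on with
    | _ k ih =>
      intro i hk hi hmi
      by_cases hia : a ≤ i
      · exact hz i hia (by omega)
      · have h1 := hrec (i - m) (by omega)
        rw [act_apply g _ _ (Nat.lt_succ_self _), Finset.sum_eq_single m] at h1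
        · rw [Nat.add_sub_cancel' hmi] at h1
          exact (mul_eq_zero.1 h1).resolve_left hm
        · intro l hl hlm
          have hl' := Finset.mem_range.1 hl
          rcases lt_or_gt_of_ne hlm with h | h
          · rw [coeff_eq_zero_of_lt_natTrailingDegree h, zero_mul]
          · rw [ih (a + R - (l + (i - m))) (by omega) _ (by omega) (by omega) (by omega), mul_zero]
        · intro h; exact absurd (Finset.mem_range.2 (by omega)) h
  by_cases hja : a ≤ j
  · exact hj (hfwd j hja hj2)
  · exact hj (hbwd (a + R - j) j (by omega) (by omega) (by omega))

/-- If every block of `R` consecutive digits contains a nonzero one, then `K` disjoint blocks give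
`K` factors `ρ`. -/
lemma prod_le_of_dense {n R K : ℕ} (hK : K * R + 1 ≤ n) {ξ : Fin n → ZMod p}
    (h : ∀ a, a + R + 1 ≤ n → ∃ j, a ≤ j ∧ j < a + R ∧ ext ξ j ≠ 0) {f : ZMod p → ℝ}
    (hf0 : ∀ a, 0 ≤ f a) (hf1 : ∀ a, f a ≤ 1) {ρ : ℝ} (hρ : ∀ a, a ≠ 0 → f a ≤ ρ) :
    ∏ i, f (ξ i) ≤ ρ ^ K := by
  have hex : ∀ t : Fin K, ∃ i : Fin n, t * R ≤ (i : ℕ) ∧ (i : ℕ) < t * R + R ∧ ξ i ≠ 0 := by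
    intro t
    have ht : (t + 1 : ℕ) * R ≤ K * R := Nat.mul_le_mul_right _ t.2
    rw [add_one_mul] at ht
    obtain ⟨j, h1, h2, h3⟩ := h (t * R) (by omega)
    refine ⟨⟨j, by omega⟩, h1, h2, ?_⟩
    rwa [ext, dif_pos (by omega)] at h3
  choose e he1 he2 he3 using hex
  have hinj : Function.Injective e := by
    intro s t hst
    by_contra hne
    have key : ∀ s t : Fin K, s < t → e s ≠ e t := by
      intro s t hlt heq
      have h1 : (s + 1 : ℕ) * R ≤ t * R := Nat.mul_le_mul_right _ hlt
      rw [add_one_mul] at h1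
      have h2 := he2 s
      have h3 := he1 t
      rw [heq] at h2
      omega
    rcases lt_or_gt_of_ne hne with h | h
    · exact key s t h hst
    · exact key t s h hst.symm
  calc ∏ i, f (ξ i) ≤ ∏ i ∈ Finset.univ.image e, f (ξ i) :=
        Finset.prod_le_prod_of_subset_of_le_one (Finset.subset_univ _)
          (fun _ _ => hf0 _) (fun _ _ _ => hf1 _)
    _ = ∏ t, f (ξ (e t)) := Finset.prod_image (fun _ _ _ _ h => hinj h)
    _ ≤ ∏ _t : Fin K, ρ := Finset.prod_le_prod (fun _ _ => hf0 _) (fun t _ => hρ _ (he3 t))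
    _ = ρ ^ K := by simp

/-- There are few vectors of small rank, as one of rank `r` and recurrence length `d ≤ r` is
determined by `r + d + 1` of its digits. -/
lemma card_rk_le {n R : ℕ} (hR : R < n / 2) :
    ((Finset.univ.filter (fun ξ : Fin n → ZMod p => rk n (ext ξ) ≤ R)).card : ℝ)
      ≤ (R + 1) ^ 2 * (p : ℝ) ^ (2 * R + 1) := by
  have hp := one_le_p (p := p)
  have hsub : Finset.univ.filter (fun ξ : Fin n → ZMod p => rk n (ext ξ) ≤ R)
      ⊆ (Finset.range (R + 1)).biUnion
        (fun r => Finset.univ.filter (fun ξ : Fin n → ZMod p => rk n (ext ξ) = r)) := by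
    intro ξ hξ
    simp only [Finset.mem_filter, Finset.mem_univ, true_and, Finset.mem_biUnion,
      Finset.mem_range] at hξ ⊢
    exact ⟨_, by omega, rfl⟩
  have h1 : ∀ r ∈ Finset.range (R + 1),
      ((Finset.univ.filter (fun ξ : Fin n → ZMod p => rk n (ext ξ) = r)).card : ℝ)
        ≤ (R + 1) * (p : ℝ) ^ (2 * R + 1) := by
    intro r hr
    have hr' := Finset.mem_range.1 hr
    have := sum_rk_le (p := p) (n := n) (r := r) (by omega) (f := fun _ => 1) (by simp) (by simp)
      (by simpa [ZMod.card] using hp)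
    simp only [Finset.prod_const_one, Finset.sum_const, nsmul_eq_mul, mul_one, Finset.card_univ,
      ZMod.card] at this
    refine this.trans ?_
    have hrR : (r : ℝ) ≤ R := by exact_mod_cast Nat.lt_succ_iff.1 hr'
    have : (p : ℝ) ^ (2 * r + 1) ≤ (p : ℝ) ^ (2 * R + 1) := pow_le_pow_right₀ hp (by omega)
    gcongr
  calc _ ≤ (((Finset.range (R + 1)).biUnion (fun r => Finset.univ.filter
        (fun ξ : Fin n → ZMod p => rk n (ext ξ) = r))).card : ℝ) := by
        exact_mod_cast Finset.card_le_card hsub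
    _ ≤ ∑ r ∈ Finset.range (R + 1),
        ((Finset.univ.filter (fun ξ : Fin n → ZMod p => rk n (ext ξ) = r)).card : ℝ) := by
        exact_mod_cast Finset.card_biUnion_le
    _ ≤ ∑ r ∈ Finset.range (R + 1), (R + 1) * (p : ℝ) ^ (2 * R + 1) := Finset.sum_le_sum h1
    _ = _ := by simp; ring

lemma norm_sum_vM_trivial (n : ℕ) (x : ℕ → ZMod p) :
    ‖ev (E x) (dpart (fun f => (vM f : ℂ)) n)‖ ≤ n * (p : ℝ) ^ n := by
  rw [ev_dpart]
  refine (norm_sum_le _ _).trans ?_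
  calc _ ≤ ∑ f ∈ monics p n, (n : ℝ) := by
        refine Finset.sum_le_sum fun f hf => ?_
        obtain ⟨h1, h2⟩ := mem_monics.1 hf
        rw [norm_mul, norm_E, mul_one, Complex.norm_natCast]
        exact_mod_cast h2 ▸ vM_le h1
    _ = _ := by simp [card_monics, mul_comm]

/-- For small rank a nonzero digit away from the two ends forces nonzero digits in every block, whose
factors `ρ ^ K` outweigh the number of such vectors. The exponential sum is bounded trivially. -/
lemma smallRank_bound {n R K : ℕ} (hR : R < n / 2) (hK : K * R + 1 ≤ n) {f : ZMod p → ℝ}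
    (hf0 : ∀ a, 0 ≤ f a) (hf1 : ∀ a, f a ≤ 1) {ρ : ℝ} (hρ0 : 0 ≤ ρ) (hρ : ∀ a, a ≠ 0 → f a ≤ ρ)
    (Ξ : Finset (Fin n → ZMod p)) (hΞ : ∀ ξ ∈ Ξ, rk n (ext ξ) ≤ R ∧
      ∃ j, R ≤ j ∧ j + R + 1 < n ∧ ext ξ j ≠ 0) :
    ∑ ξ ∈ Ξ, (∏ i, f (ξ i)) * ‖ev (E (ext ξ)) (dpart (fun f => (vM f : ℂ)) n)‖
      ≤ (R + 1) ^ 2 * (p : ℝ) ^ (2 * R + 1) * (ρ ^ K * (n * (p : ℝ) ^ n)) := by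
  have hp := p_pos (p := p)
  calc _ ≤ ∑ ξ ∈ Ξ, ρ ^ K * (n * (p : ℝ) ^ n) := by
        refine Finset.sum_le_sum fun ξ hξ => ?_
        obtain ⟨h1, j, h2, h3, h4⟩ := hΞ ξ hξ
        have hd := (sparse_or_dense h1 hR).resolve_left (fun h => h4 (h j h2 h3))
        exact mul_le_mul (prod_le_of_dense hK hd hf0 hf1 hρ) (norm_sum_vM_trivial _ _)
          (norm_nonneg _) (by positivity)
    _ = Ξ.card * (ρ ^ K * (n * (p : ℝ) ^ n)) := by simp
    _ ≤ _ := by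
        refine mul_le_mul_of_nonneg_right (le_trans ?_ (card_rk_le hR)) (by positivity)
        exact_mod_cast Finset.card_le_card fun ξ hξ =>
          Finset.mem_filter.2 ⟨Finset.mem_univ _, (hΞ ξ hξ).1⟩

/-- For medium rank `r` the pointwise saving `p ^ (r / 2)` beats the mass of the vectors of rank `r`,
which is about `(∑ a, f a) ^ (2 r + 1)`, by a factor `D ^ (2 r + 1) / p`. -/
lemma mediumRank_bound {n R : ℕ} (hn : 6 ≤ n) {f : ZMod p → ℝ}
    (hf0 : ∀ a, 0 ≤ f a) (hf1 : ∀ a, f a ≤ 1) (hf : 1 ≤ ∑ a, f a) {G D : ℝ} (hG4 : G ^ 4 = p)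
    (hG : 1 ≤ G) (hD : 1 ≤ D) (hL : (∑ a, f a) * D ≤ G)
    (Ξ : Finset (Fin n → ZMod p)) (hΞ : ∀ ξ ∈ Ξ, R < rk n (ext ξ) ∧ 5 * rk n (ext ξ) ≤ 2 * n) :
    ∑ ξ ∈ Ξ, (∏ i, f (ξ i)) * ‖ev (E (ext ξ)) (dpart (fun f => (vM f : ℂ)) n)‖
      ≤ n * (3 * n ^ 2 * (n + 1) * p * (p : ℝ) ^ n / D ^ R) := by
  have hp := p_pos (p := p)
  have hn' : (1 : ℝ) ≤ n := by exact_mod_cast (by omega : 1 ≤ n)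
  have hF : ∀ ξ : Fin n → ZMod p, 0 ≤ ∏ i, f (ξ i) := fun ξ => Finset.prod_nonneg fun _ _ => hf0 _
  let S : ℕ → Finset (Fin n → ZMod p) := fun r =>
    Finset.univ.filter (fun ξ : Fin n → ZMod p => rk n (ext ξ) = r)
  let T := (Finset.Ioc R n).filter (fun r => 5 * r ≤ 2 * n)
  have hsub : Ξ ⊆ T.biUnion S := by
    intro ξ hξ
    obtain ⟨h1, h2⟩ := hΞ ξ hξ
    simp only [S, T, Finset.mem_filter, Finset.mem_univ, true_and, Finset.mem_biUnion,
      Finset.mem_Ioc]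
    exact ⟨_, ⟨⟨h1, by omega⟩, h2⟩, rfl⟩
  have hterm : ∀ r ∈ T, ∑ ξ ∈ S r, (∏ i, f (ξ i)) *
      ‖ev (E (ext ξ)) (dpart (fun f => (vM f : ℂ)) n)‖
        ≤ 3 * n ^ 2 * (n + 1) * p * (p : ℝ) ^ n / D ^ R := by
    intro r hr
    simp only [T, Finset.mem_filter, Finset.mem_Ioc] at hr
    calc _ ≤ ∑ ξ ∈ S r, (∏ i, f (ξ i)) * (3 * n * (n + 1) * ((p : ℝ) ^ n / (p : ℝ) ^ (r / 2))) := by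
          refine Finset.sum_le_sum fun ξ hξ => mul_le_mul_of_nonneg_left ?_ (hF ξ)
          have hξ' : rk n (ext ξ) = r := (Finset.mem_filter.1 hξ).2
          have := norm_sum_vM_le (n := n) (by omega) (ext ξ) (by omega)
          rwa [hξ'] at this
      _ = (∑ ξ ∈ S r, ∏ i, f (ξ i)) * (3 * n * (n + 1) * ((p : ℝ) ^ n / (p : ℝ) ^ (r / 2))) := by
          rw [Finset.sum_mul]
      _ ≤ ((r + 1) * (∑ a, f a) ^ (2 * r + 1)) *
          (3 * n * (n + 1) * ((p : ℝ) ^ n / (p : ℝ) ^ (r / 2))) := by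
          refine mul_le_mul_of_nonneg_right ?_ (by positivity)
          exact sum_rk_le (by omega) hf0 hf1 hf
      _ = (r + 1) * (3 * n * (n + 1)) * (p : ℝ) ^ n *
          ((∑ a, f a) ^ (2 * r + 1) / (p : ℝ) ^ (r / 2)) := by ring
      _ ≤ n * (3 * n * (n + 1)) * (p : ℝ) ^ n * (p / D ^ R) := by
          have h1 : (∑ a, f a) ^ (2 * r + 1) / (p : ℝ) ^ (r / 2) ≤ p / D ^ R := by
            refine (pow_div_le' (by linarith) hG4 hG (by linarith) hL (by omega)).trans ?_
            have : D ^ R ≤ D ^ (2 * r + 1) := pow_le_pow_right₀ hD (by omega)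
            gcongr
          have h2 : (r : ℝ) + 1 ≤ n := by
            have : r + 1 ≤ n := by omega
            exact_mod_cast this
          have h3 : 0 ≤ (∑ a, f a) ^ (2 * r + 1) / (p : ℝ) ^ (r / 2) := by
            have : 0 ≤ ∑ a, f a := by linarith
            positivity
          gcongr
      _ = _ := by ring
  calc _ ≤ ∑ ξ ∈ T.biUnion S, (∏ i, f (ξ i)) *
        ‖ev (E (ext ξ)) (dpart (fun f => (vM f : ℂ)) n)‖ :=
        Finset.sum_le_sum_of_subset_of_nonneg hsub
          fun ξ _ _ => mul_nonneg (hF ξ) (norm_nonneg _)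
    _ ≤ ∑ r ∈ T, ∑ ξ ∈ S r, (∏ i, f (ξ i)) *
        ‖ev (E (ext ξ)) (dpart (fun f => (vM f : ℂ)) n)‖ :=
        sum_biUnion_le' _ _ _ fun ξ => mul_nonneg (hF ξ) (norm_nonneg _)
    _ ≤ ∑ r ∈ T, 3 * n ^ 2 * (n + 1) * p * (p : ℝ) ^ n / D ^ R := Finset.sum_le_sum hterm
    _ = T.card * (3 * n ^ 2 * (n + 1) * p * (p : ℝ) ^ n / D ^ R) := by simp
    _ ≤ _ := by
        refine mul_le_mul_of_nonneg_right ?_ (by positivity)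
        have : T.card ≤ n := (Finset.card_filter_le _ _).trans (by simp)
        exact_mod_cast this

/-! ### Polynomials with constant term one, and power sums of their reciprocal roots -/

/-- The polynomial `∏ (1 - α X)` with prescribed reciprocal roots. -/
def recip (s : Multiset ℂ) : ℂ[X] := (s.map fun α => 1 - C α * X).prod

lemma recip_cons (a : ℂ) (s : Multiset ℂ) : recip (a ::ₘ s) = (1 - C a * X) * recip s := by
  simp [recip]

lemma exists_recip {L : ℂ[X]} (h0 : L.coeff 0 = 1) :
    ∃ s : Multiset ℂ, L = recip s ∧ s.card = L.natDegree := by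
  have hs : L.Splits := IsAlgClosed.splits L
  have hL0 : L ≠ 0 := by rintro rfl; simp at h0
  refine ⟨L.roots.map fun ρ => ρ⁻¹, ?_, ?_⟩
  · have h1 := hs.eq_prod_roots
    have hρ : ∀ ρ ∈ L.roots, ρ ≠ 0 := by
      rintro ρ hρ rfl
      have := (mem_roots hL0).1 hρ
      rw [IsRoot, ← coeff_zero_eq_eval_zero, h0] at this
      exact one_ne_zero this
    have h2 : (L.roots.map fun ρ => X - C ρ).prod
        = (L.roots.map fun ρ => C (-ρ)).prod * recip (L.roots.map fun ρ => ρ⁻¹) := by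
      unfold recip
      rw [Multiset.map_map, ← Multiset.prod_map_mul]
      congr 1
      refine Multiset.map_congr rfl fun ρ h => ?_
      have h3 : C ρ * C ρ⁻¹ = (1 : ℂ[X]) := by rw [← C_mul, mul_inv_cancel₀ (hρ ρ h), C_1]
      simp only [Function.comp, C_neg]
      linear_combination (-X : ℂ[X]) * h3
    have h4 : ((L.roots.map fun ρ => C (-ρ)).prod : ℂ[X]) = C (L.roots.map fun ρ => -ρ).prod := by
      rw [map_multiset_prod, Multiset.map_map]; rfl
    have h5 : ∀ s : Multiset ℂ, (recip s).coeff 0 = 1 := by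
      intro s
      induction s using Multiset.induction_on with
      | empty => simp [recip]
      | cons a s ih => rw [recip_cons, mul_coeff_zero, ih]; simp
    rw [h2, h4, ← mul_assoc, ← C_mul] at h1
    have h6 := congrArg (fun f => f.coeff 0) h1
    simp only [coeff_C_mul, h5, h0, mul_one] at h6
    rw [← h6, C_1, one_mul] at h1
    exact h1
  · rw [Multiset.card_map, ← hs.natDegree_eq_card_roots]

/-- Newton's identities, through the logarithmic derivative. -/
lemma coeff_of_logDeriv {s : Multiset ℂ} {V : PowerSeries ℂ}
    (h : (recip s : PowerSeries ℂ) * V = ((X * derivative (recip s) : ℂ[X]) : PowerSeries ℂ))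
    {k : ℕ} (hk : 0 < k) : PowerSeries.coeff k V = -(s.map fun α => α ^ k).sum := by
  let W : Multiset ℂ → PowerSeries ℂ := fun s =>
    PowerSeries.mk fun k => if k = 0 then 0 else -(s.map fun α => α ^ k).sum
  have hW : ∀ s, (recip s : PowerSeries ℂ) * W s
      = ((X * derivative (recip s) : ℂ[X]) : PowerSeries ℂ) := by
    intro s
    induction s using Multiset.induction_on with
    | empty =>
      have : W 0 = 0 := by ext k; simp [W]
      simp [recip, this]
    | cons a s ih =>
      have h1 : W (a ::ₘ s) = W s + PowerSeries.mk fun k => if k = 0 then 0 else -a ^ k := by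
        ext k
        simp only [W, map_add, PowerSeries.coeff_mk, Multiset.map_cons, Multiset.sum_cons]
        split_ifs <;> ring
      have h2 : ((1 - C a * X : ℂ[X]) : PowerSeries ℂ) *
          (PowerSeries.mk fun k => if k = 0 then 0 else -a ^ k)
          = ((- C a * X : ℂ[X]) : PowerSeries ℂ) := by
        ext k
        simp only [Polynomial.coe_sub, Polynomial.coe_one, Polynomial.coe_mul, Polynomial.coe_C,
          Polynomial.coe_X, Polynomial.coe_neg, sub_mul, one_mul, map_sub, mul_assoc, neg_mul,
          map_neg, PowerSeries.coeff_C_mul, PowerSeries.coeff_mk]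
        rcases k with _ | _ | k
        · simp
        · simp [PowerSeries.coeff_succ_X_mul]
        · simp [PowerSeries.coeff_succ_X_mul, PowerSeries.coeff_X]; ring
      have h3 : derivative (recip (a ::ₘ s))
          = (1 - C a * X) * derivative (recip s) - C a * recip s := by
        rw [recip_cons, derivative_mul]; simp; ring
      rw [h1, h3, recip_cons]
      have e : ((X * ((1 - C a * X) * derivative (recip s) - C a * recip s) : ℂ[X]) : PowerSeries ℂ)
          = ((1 - C a * X : ℂ[X]) : PowerSeries ℂ) *
              ((X * derivative (recip s) : ℂ[X]) : PowerSeries ℂ)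
            + (recip s : PowerSeries ℂ) * ((- C a * X : ℂ[X]) : PowerSeries ℂ) := by
        rw [← Polynomial.coe_mul, ← Polynomial.coe_mul, ← Polynomial.coe_add]
        congr 1; ring
      rw [e, ← ih, ← h2, Polynomial.coe_mul]
      ring
  have h0 : (recip s : PowerSeries ℂ) ≠ 0 := by
    rw [Ne, Polynomial.coe_eq_zero_iff]
    refine Multiset.prod_ne_zero fun hmem => ?_
    obtain ⟨a, -, ha⟩ := Multiset.mem_map.1 hmem
    have := congrArg (fun f => f.coeff 0) ha
    simp at this
  have : V = W s := mul_left_cancel₀ h0 (h.trans (hW s).symm)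
  rw [this]
  simp [W, hk.ne']

/-- The reciprocal roots of a polynomial are bounded by the growth rate of its inverse series. -/
lemma norm_le_of_mem {s : Multiset ℂ} {M : PowerSeries ℂ} {q : ℝ} (hq : 0 < q)
    (h : (recip s : PowerSeries ℂ) * M = 1) (hM : ∀ k, ‖PowerSeries.coeff k M‖ ≤ q ^ k) :
    ∀ α ∈ s, ‖α‖ ≤ q := by
  intro α hα
  obtain ⟨t, rfl⟩ := Multiset.exists_cons_of_mem hα
  let G : PowerSeries ℂ := PowerSeries.mk fun k => α ^ k
  have hG : ((1 - C α * X : ℂ[X]) : PowerSeries ℂ) * G = 1 := by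
    ext k
    simp only [G, Polynomial.coe_sub, Polynomial.coe_one, Polynomial.coe_mul, Polynomial.coe_C,
      Polynomial.coe_X, sub_mul, one_mul, map_sub, mul_assoc, PowerSeries.coeff_C_mul,
      PowerSeries.coeff_mk]
    rcases k with _ | k
    · simp
    · simp [PowerSeries.coeff_succ_X_mul, PowerSeries.coeff_one]; ring
  have hGM : G = (recip t : PowerSeries ℂ) * M := by
    rw [recip_cons, Polynomial.coe_mul] at h
    calc G = G * (((1 - C α * X : ℂ[X]) : PowerSeries ℂ) * (recip t : PowerSeries ℂ) * M) := by
          rw [h, mul_one]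
      _ = (((1 - C α * X : ℂ[X]) : PowerSeries ℂ) * G) * ((recip t : PowerSeries ℂ) * M) := by ring
      _ = _ := by rw [hG, one_mul]
  let N := (recip t).natDegree
  let K : ℝ := ∑ i ∈ Finset.range (N + 1), ‖(recip t).coeff i‖ / q ^ i
  have hb : ∀ k, ‖α‖ ^ k ≤ K * q ^ k := by
    intro k
    have h1 : α ^ k = PowerSeries.coeff k ((recip t : PowerSeries ℂ) * M) := by
      rw [← hGM]; simp [G]
    rw [PowerSeries.coeff_mul] at h1
    rw [← norm_pow, h1, Finset.Nat.sum_antidiagonal_eq_sum_range_succ_mk]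
    have h2 : ∀ i ∈ Finset.range k.succ, ‖(PowerSeries.coeff i) (recip t : PowerSeries ℂ) *
        PowerSeries.coeff (k - i) M‖ ≤ ‖(recip t).coeff i‖ / q ^ i * q ^ k := by
      intro i hi
      have hik : i ≤ k := Nat.lt_succ_iff.1 (Finset.mem_range.1 hi)
      rw [norm_mul, Polynomial.coeff_coe]
      calc _ ≤ ‖(recip t).coeff i‖ * q ^ (k - i) := by gcongr; exact hM _
        _ = _ := by
          have : q ^ k = q ^ (k - i) * q ^ i := by rw [← pow_add]; congr 1; omega
          rw [this]; field_simp
    refine (norm_sum_le _ _).trans ((Finset.sum_le_sum h2).trans ?_)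
    rw [← Finset.sum_mul]
    refine mul_le_mul_of_nonneg_right ?_ (by positivity)
    have h3 : ∀ i, N < i → ‖(recip t).coeff i‖ / q ^ i = 0 := fun i hi => by
      rw [coeff_eq_zero_of_natDegree_lt hi]; simp
    calc _ ≤ ∑ i ∈ Finset.range k.succ ∪ Finset.range (N + 1), ‖(recip t).coeff i‖ / q ^ i :=
          Finset.sum_le_sum_of_subset_of_nonneg Finset.subset_union_left
            fun _ _ _ => by positivity
      _ = K := by
          symm
          refine Finset.sum_subset Finset.subset_union_right fun i _ hi => h3 i ?_
          simpa using hi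
  by_contra! hlt
  have h1 : 1 < ‖α‖ / q := by rwa [one_lt_div hq]
  obtain ⟨k, hk⟩ := pow_unbounded_of_one_lt K h1
  rw [div_pow, lt_div_iff₀ (by positivity)] at hk
  exact absurd (hb k) (not_le.2 hk)

/-! ### L-functions and the zero-free region -/

/-- A unimodular-or-zero function which is completely multiplicative on monic polynomials. -/
structure IsChar (φ : (ZMod p)[X] → ℂ) : Prop where
  mul : ∀ f g : (ZMod p)[X], f.Monic → g.Monic → φ (f * g) = φ f * φ g
  one : φ 1 = 1
  norm_le : ∀ f, ‖φ f‖ ≤ 1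

/-- The power series with coefficients `∑ a f * φ f`, summed over monic `f` of given degree. -/
def twist (φ a : (ZMod p)[X] → ℂ) : PowerSeries ℂ := PowerSeries.mk fun k => ev φ (dpart a k)

lemma coeff_twist (φ a : (ZMod p)[X] → ℂ) (k : ℕ) :
    PowerSeries.coeff k (twist φ a) = ∑ f ∈ monics p k, a f * φ f := by
  simp [twist, ev_dpart]

lemma IsChar.twist_mul {φ : (ZMod p)[X] → ℂ} (hφ : IsChar φ) (a b : (ZMod p)[X] → ℂ) (n : ℕ) :
    PowerSeries.coeff n (twist φ a * twist φ b)
      = ev φ (PowerSeries.coeff n (dser a * dser b)) := by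
  rw [ev_coeff_dser_mul, PowerSeries.coeff_mul]
  refine Finset.sum_congr rfl fun x _ => ?_
  rw [coeff_twist, coeff_twist, ev_dpart_mul, Finset.sum_mul_sum]
  refine Finset.sum_congr rfl fun f hf => Finset.sum_congr rfl fun g hg => ?_
  rw [hφ.mul f g (mem_monics.1 hf).1 (mem_monics.1 hg).1]
  ring

lemma IsChar.twist_one_mul_mu {φ : (ZMod p)[X] → ℂ} (hφ : IsChar φ) :
    twist φ (fun _ => 1) * twist φ mu = 1 := by
  ext n
  rw [hφ.twist_mul, show dser (fun _ => (1 : ℂ)) * dser (mu (p := p)) = 1 from dZ_mul_dM,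
    PowerSeries.coeff_one, PowerSeries.coeff_one]
  split_ifs
  · rw [MonoidAlgebra.one_def, ev_single, hφ.one, one_mul]
  · simp

lemma IsChar.twist_one_mul_vM {φ : (ZMod p)[X] → ℂ} (hφ : IsChar φ) :
    twist φ (fun _ => 1) * twist φ (fun f => (vM f : ℂ)) = twist φ (fun f => (f.natDegree : ℂ)) := by
  ext n
  rw [hφ.twist_mul, show dser (fun _ => (1 : ℂ)) * dser (fun f : (ZMod p)[X] => (vM f : ℂ))
    = dser (fun f => (f.natDegree : ℂ)) from dZ_mul_dV]
  simp [dser, twist]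

/-- If the L-function of `φ` is a polynomial of degree less than `B`, the prime sums of `φ` are
negated power sums of its fewer than `B` reciprocal roots, which have norm at most `p`. -/
lemma IsChar.exists_roots {φ : (ZMod p)[X] → ℂ} (hφ : IsChar φ) {B : ℕ}
    (h : ∀ k, B ≤ k → ∑ f ∈ monics p k, φ f = 0) :
    ∃ s : Multiset ℂ, s.card < B ∧ (∀ α ∈ s, ‖α‖ ≤ p) ∧ ∀ k, 0 < k →
      ∑ f ∈ monics p k, (vM f : ℂ) * φ f = -(s.map fun α => α ^ k).sum := by
  let A : ℕ → ℂ := fun k => ∑ f ∈ monics p k, φ f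
  let L : ℂ[X] := ∑ k ∈ Finset.range B, C (A k) * X ^ k
  have hL : ∀ k, L.coeff k = A k := by
    intro k
    simp only [L, finsetSum_coeff, coeff_C_mul, coeff_X_pow, mul_ite, mul_one, mul_zero,
      Finset.sum_ite_eq, Finset.mem_range]
    split_ifs with hk
    · rfl
    · exact (h k (not_lt.1 hk)).symm
  have hL' : (L : PowerSeries ℂ) = twist φ (fun _ => 1) := by
    ext k
    rw [Polynomial.coeff_coe, hL, coeff_twist]
    simp [A]
  have h0 : L.coeff 0 = 1 := by
    rw [hL]
    have : monics p 0 = {1} := by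
      ext f
      rw [mem_monics, Finset.mem_singleton]
      constructor
      · rintro ⟨h1, h2⟩; exact h1.natDegree_eq_zero.1 h2
      · rintro rfl; simp
    simp only [A, this, Finset.sum_singleton, hφ.one]
  have hdeg : L.natDegree < B := by
    by_contra! hc
    have hL0 : L ≠ 0 := by intro h1; rw [h1] at h0; simp at h0
    have := hL L.natDegree
    rw [coeff_natDegree, show A L.natDegree = 0 from h _ hc, leadingCoeff_eq_zero] at this
    exact hL0 this
  obtain ⟨s, hs, hcard⟩ := exists_recip h0
  refine ⟨s, hcard ▸ hdeg, ?_, fun k hk => ?_⟩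
  · refine norm_le_of_mem (M := twist φ mu) (p_pos (p := p)) ?_ fun k => ?_
    · rw [← hs, hL', hφ.twist_one_mul_mu]
    · rw [coeff_twist]
      refine (norm_sum_le _ _).trans ?_
      calc _ ≤ ∑ f ∈ monics p k, (1 : ℝ) := by
            refine Finset.sum_le_sum fun f _ => ?_
            rw [norm_mul]
            exact mul_le_one₀ (norm_mu_le f) (norm_nonneg _) (hφ.norm_le f)
        _ = _ := by simp [card_monics]
  · rw [← coeff_twist φ (fun f => (vM f : ℂ)) k]
    refine coeff_of_logDeriv ?_ hk
    rw [← hs, hL', hφ.twist_one_mul_vM]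
    ext k
    rw [coeff_twist, Polynomial.coeff_coe]
    have h1 : ∑ f ∈ monics p k, (f.natDegree : ℂ) * φ f = k * A k := by
      rw [Finset.mul_sum]
      exact Finset.sum_congr rfl fun f hf => by rw [(mem_monics.1 hf).2]
    rw [h1]
    rcases k with _ | k
    · simp
    · rw [coeff_X_mul, coeff_derivative, hL]; push_cast; ring

/-- The prime polynomial theorem, with prime powers weighted. -/
lemma sum_vM_monics {k : ℕ} (hk : 0 < k) : ∑ f ∈ monics p k, (vM f : ℝ) = (p : ℝ) ^ k := by
  let φ : (ZMod p)[X] → ℂ := fun _ => 1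
  have hφ : IsChar φ := ⟨by simp [φ], rfl, by simp [φ]⟩
  have h := hφ.twist_one_mul_vM
  have h1 : ∀ n, PowerSeries.coeff n (twist φ (fun _ => 1)) = (p : ℂ) ^ n := by
    intro n; simp [coeff_twist, φ, card_monics]
  have h2 : ∀ n, PowerSeries.coeff n (twist φ fun f => (f.natDegree : ℂ)) = n * (p : ℂ) ^ n := by
    intro n
    rw [coeff_twist]
    rw [Finset.sum_congr rfl fun f hf => by rw [(mem_monics.1 hf).2]]
    simp [φ, card_monics, mul_comm]
  have h3 : ∀ n, ∑ i ∈ Finset.range (n + 1), (p : ℂ) ^ (n - i) *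
      PowerSeries.coeff i (twist φ fun f => (vM f : ℂ)) = n * (p : ℂ) ^ n := by
    intro n
    rw [← h2, ← h, mul_comm, PowerSeries.coeff_mul, Finset.Nat.sum_antidiagonal_eq_sum_range_succ_mk]
    exact Finset.sum_congr rfl fun i _ => by simp only [h1]; ring
  obtain ⟨m, rfl⟩ : ∃ m, k = m + 1 := ⟨k - 1, by omega⟩
  have h4 := h3 (m + 1)
  rw [Finset.sum_range_succ] at h4
  have h5 : ∑ i ∈ Finset.range (m + 1), (p : ℂ) ^ (m + 1 - i) *
      PowerSeries.coeff i (twist φ fun f => (vM f : ℂ)) = p * (m * (p : ℂ) ^ m) := by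
    rw [← h3 m, Finset.mul_sum]
    refine Finset.sum_congr rfl fun i hi => ?_
    have := Finset.mem_range.1 hi
    rw [show m + 1 - i = (m - i) + 1 by omega, pow_succ]; ring
  rw [h5, Nat.sub_self, pow_zero, one_mul, coeff_twist] at h4
  have h6 : ∑ f ∈ monics p (m + 1), (vM f : ℂ) * φ f = (p : ℂ) ^ (m + 1) := by
    push_cast at h4
    linear_combination h4
  simp only [φ, mul_one] at h6
  exact_mod_cast h6

/-- The inequality `3 + 4 cos θ + cos 2θ ≥ 0`, extended to the unit disc. -/
lemma three_four_one {w : ℂ} (hw : ‖w‖ ≤ 1) : 0 ≤ 3 + 4 * w.re + (w ^ 2).re := by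
  have h1 : w.re * w.re + w.im * w.im ≤ 1 := by
    rw [← Complex.normSq_apply, Complex.normSq_eq_norm_sq]
    exact pow_le_one₀ (norm_nonneg _) hw
  rw [pow_two, Complex.mul_re]
  nlinarith [sq_nonneg (1 + w.re)]

lemma re_geom_ge {z : ℂ} (hz : ‖z‖ < 1) : -(1 / 2 : ℝ) ≤ (z / (1 - z)).re := by
  have h1 : z.re * z.re + z.im * z.im < 1 := by
    rw [← Complex.normSq_apply, Complex.normSq_eq_norm_sq]
    exact pow_lt_one₀ (norm_nonneg _) hz (by norm_num)
  have h2 : (1 : ℂ) - z ≠ 0 := by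
    intro h
    have : z = 1 := (sub_eq_zero.1 h).symm
    rw [this] at hz; simp at hz
  have h3 : 0 < Complex.normSq (1 - z) := Complex.normSq_pos.2 h2
  rw [Complex.div_re, ← add_div, le_div_iff₀ h3, Complex.normSq_apply]
  simp only [Complex.sub_re, Complex.one_re, Complex.sub_im, Complex.one_im]
  nlinarith

lemma hasSum_geom {z : ℂ} (hz : ‖z‖ < 1) :
    HasSum (fun k : ℕ => (z ^ (k + 1)).re) (z / (1 - z)).re := by
  have := (hasSum_geometric_of_norm_lt_one hz).mul_left z
  rw [← div_eq_mul_inv] at this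
  convert Complex.hasSum_re this using 2 with k
  rw [pow_succ']

lemma hasSum_power_sums {s : Multiset ℂ} {c : ℂ} (h : ∀ α ∈ s, ‖α * c‖ < 1) :
    HasSum (fun k : ℕ => (c ^ (k + 1) * (s.map fun α => α ^ (k + 1)).sum).re)
      (s.map fun α => (α * c / (1 - α * c)).re).sum := by
  induction s using Multiset.induction_on with
  | empty => simp
  | cons a s ih =>
    have h1 := hasSum_geom (h a (Multiset.mem_cons_self a s))
    have h2 := ih fun α hα => h α (Multiset.mem_cons_of_mem hα)
    simp only [Multiset.map_cons, Multiset.sum_cons]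
    convert h1.add h2 using 2 with k
    rw [mul_add, Complex.add_re, mul_pow, mul_comm (c ^ (k + 1))]

lemma sum_re_geom_ge {s : Multiset ℂ} {c : ℂ} (h : ∀ α ∈ s, ‖α * c‖ < 1) :
    -((s.card : ℝ) / 2) ≤ (s.map fun α => (α * c / (1 - α * c)).re).sum := by
  induction s using Multiset.induction_on with
  | empty => simp
  | cons a s ih =>
    have h1 := re_geom_ge (h a (Multiset.mem_cons_self a s))
    have h2 := ih fun α hα => h α (Multiset.mem_cons_of_mem hα)
    simp only [Multiset.map_cons, Multiset.sum_cons, Multiset.card_cons]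
    push_cast
    linarith

/-- The zero-free region, by the argument of de la Vallée Poussin at radius `(1 - 1 / (28 B)) / p`.
Here `s` and `t` are the reciprocal roots of the L-functions of `φ` and of its square. -/
lemma zeroFree {φ : (ZMod p)[X] → ℂ} (hφ : IsChar φ) {B : ℕ} (hB : 0 < B) {s t : Multiset ℂ}
    (hs : s.card ≤ B) (ht : t.card ≤ B) (hs1 : ∀ α ∈ s, ‖α‖ ≤ p) (ht1 : ∀ α ∈ t, ‖α‖ ≤ p)
    (hs2 : ∀ k, 0 < k → ∑ f ∈ monics p k, (vM f : ℂ) * φ f = -(s.map fun α => α ^ k).sum)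
    (ht2 : ∀ k, 0 < k → ∑ f ∈ monics p k, (vM f : ℂ) * φ f ^ 2 = -(t.map fun α => α ^ k).sum) :
    ∀ α ∈ s, ‖α‖ ≤ p * (1 - 1 / (125 * B)) := by
  intro α hα
  have hp := p_pos (p := p)
  have hB' : (1 : ℝ) ≤ B := by exact_mod_cast hB
  by_cases hα0 : α = 0
  · subst hα0
    rw [norm_zero]
    refine mul_nonneg hp.le ?_
    rw [sub_nonneg, div_le_one (by positivity)]; linarith
  have hnα : 0 < ‖α‖ := norm_pos_iff.2 hα0
  -- the rotation taking `α` to the positive real axis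
  let η : ℂ := (‖α‖ : ℂ) / α
  have hη : ‖η‖ = 1 := by simp [η, hα0]
  let ε : ℝ := 1 / (28 * B)
  have hε0 : 0 < ε := by positivity
  have hε1 : ε < 1 := by
    rw [div_lt_one (by positivity)]; linarith
  let r : ℝ := (1 - ε) / p
  have hr0 : 0 < r := div_pos (by linarith) hp
  have hrp : p * r = 1 - ε := by simp only [r]; field_simp
  have hc1 : ‖η * r‖ = r := by rw [norm_mul, hη, one_mul, Complex.norm_real, Real.norm_of_nonneg hr0.le]
  have hc2 : ‖η ^ 2 * r‖ = r := by
    rw [norm_mul, norm_pow, hη, one_pow, one_mul, Complex.norm_real, Real.norm_of_nonneg hr0.le]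
  have hlt : ∀ (c : ℂ), ‖c‖ = r → ∀ β : ℂ, ‖β‖ ≤ p → ‖β * c‖ < 1 := by
    intro c hc β hβ
    rw [norm_mul, hc]
    calc ‖β‖ * r ≤ p * r := by gcongr
      _ < 1 := by rw [hrp]; linarith
  have hS := hasSum_power_sums (s := s) (c := η * r) fun β hβ => hlt _ hc1 β (hs1 β hβ)
  have hT := hasSum_power_sums (s := t) (c := η ^ 2 * r) fun β hβ => hlt _ hc2 β (ht1 β hβ)
  have hP : HasSum (fun k : ℕ => (1 - ε) ^ (k + 1)) ((1 - ε) / ε) := by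
    have := (hasSum_geometric_of_lt_one (r := 1 - ε) (by linarith) (by linarith)).mul_left (1 - ε)
    rw [sub_sub_cancel, ← div_eq_mul_inv] at this
    simp only [← pow_succ'] at this
    exact this
  have hterm : ∀ k : ℕ, 0 ≤ 3 * (1 - ε) ^ (k + 1)
      - 4 * ((η * r) ^ (k + 1) * (s.map fun α => α ^ (k + 1)).sum).re
      - ((η ^ 2 * r) ^ (k + 1) * (t.map fun α => α ^ (k + 1)).sum).re := by
    intro k
    have h1 := hs2 (k + 1) (by omega)
    have h2 := ht2 (k + 1) (by omega)
    have h3 := sum_vM_monics (p := p) (k := k + 1) (by omega)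
    have e1 : (s.map fun α => α ^ (k + 1)).sum = -∑ f ∈ monics p (k + 1), (vM f : ℂ) * φ f := by
      rw [h1, neg_neg]
    have e2 : (t.map fun α => α ^ (k + 1)).sum
        = -∑ f ∈ monics p (k + 1), (vM f : ℂ) * φ f ^ 2 := by rw [h2, neg_neg]
    have e3 : (1 - ε) ^ (k + 1) = r ^ (k + 1) * ∑ f ∈ monics p (k + 1), (vM f : ℝ) := by
      rw [h3, ← mul_pow, mul_comm r, hrp]
    rw [e1, e2, e3]
    have e4 : 3 * (r ^ (k + 1) * ∑ f ∈ monics p (k + 1), (vM f : ℝ))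
        - 4 * ((η * r) ^ (k + 1) * -∑ f ∈ monics p (k + 1), (vM f : ℂ) * φ f).re
        - ((η ^ 2 * r) ^ (k + 1) * -∑ f ∈ monics p (k + 1), (vM f : ℂ) * φ f ^ 2).re
        = ∑ f ∈ monics p (k + 1), r ^ (k + 1) * (vM f : ℝ) *
          (3 + 4 * (η ^ (k + 1) * φ f).re + ((η ^ (k + 1) * φ f) ^ 2).re) := by
      have g1 : ((η * r) ^ (k + 1) * -∑ f ∈ monics p (k + 1), (vM f : ℂ) * φ f).re
          = -∑ f ∈ monics p (k + 1), r ^ (k + 1) * (vM f : ℝ) * (η ^ (k + 1) * φ f).re := by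
        rw [mul_neg, Complex.neg_re, Finset.mul_sum, Complex.re_sum]
        congr 1
        refine Finset.sum_congr rfl fun f _ => ?_
        rw [← Complex.re_ofReal_mul]
        congr 1; push_cast; ring
      have g2 : ((η ^ 2 * r) ^ (k + 1) * -∑ f ∈ monics p (k + 1), (vM f : ℂ) * φ f ^ 2).re
          = -∑ f ∈ monics p (k + 1), r ^ (k + 1) * (vM f : ℝ) * ((η ^ (k + 1) * φ f) ^ 2).re := by
        rw [mul_neg, Complex.neg_re, Finset.mul_sum, Complex.re_sum]
        congr 1
        refine Finset.sum_congr rfl fun f _ => ?_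
        rw [← Complex.re_ofReal_mul]
        congr 1; push_cast; ring
      rw [g1, g2, Finset.mul_sum, Finset.mul_sum, mul_neg, sub_neg_eq_add, sub_neg_eq_add,
        Finset.mul_sum, ← Finset.sum_add_distrib, ← Finset.sum_add_distrib]
      exact Finset.sum_congr rfl fun f _ => by ring
    rw [e4]
    refine Finset.sum_nonneg fun f _ => mul_nonneg (by positivity) (three_four_one ?_)
    rw [norm_mul, norm_pow, hη, one_pow, one_mul]
    exact hφ.norm_le f
  have htot := ((hP.mul_left 3).sub (hS.mul_left 4)).sub hT
  have hnn := htot.nonneg hterm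
  have hTge := sum_re_geom_ge (s := t) (c := η ^ 2 * r) fun β hβ => hlt _ hc2 β (ht1 β hβ)
  obtain ⟨s', rfl⟩ := Multiset.exists_cons_of_mem hα
  have hSge := sum_re_geom_ge (s := s') (c := η * r) fun β hβ =>
    hlt _ hc1 β (hs1 β (Multiset.mem_cons_of_mem hβ))
  rw [Multiset.map_cons, Multiset.sum_cons] at hnn
  have hzval : α * (η * r) = ((‖α‖ * r : ℝ) : ℂ) := by
    simp only [η]; push_cast; field_simp
  have hzre : (α * (η * r) / (1 - α * (η * r))).re = ‖α‖ * r / (1 - ‖α‖ * r) := by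
    rw [hzval]; norm_cast
  rw [hzre] at hnn
  have hz1 : ‖α‖ * r < 1 := by
    have := hlt _ hc1 α (hs1 α hα)
    rwa [norm_mul, hc1] at this
  rw [Multiset.card_cons] at hs
  have hs' : (s'.card : ℝ) + 1 ≤ B := by exact_mod_cast hs
  have ht' : (t.card : ℝ) ≤ B := by exact_mod_cast ht
  have h1 : ‖α‖ * r / (1 - ‖α‖ * r) = 1 / (1 - ‖α‖ * r) - 1 := by
    have : 1 - ‖α‖ * r ≠ 0 := by linarith
    field_simp; ring
  have h2 : (1 - ε) / ε = 28 * B - 1 := by simp only [ε]; field_simp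
  rw [h1, h2] at hnn
  have h3 : 1 / (1 - ‖α‖ * r) * 4 ≤ 91 * B := by linarith
  have h4 : 4 ≤ 91 * B * (1 - ‖α‖ * r) := by
    have hpos : 0 < 1 - ‖α‖ * r := by linarith
    rw [one_div, inv_mul_le_iff₀ hpos] at h3
    linarith
  by_contra! hcon
  have h5 : (1 - 1 / (125 * B)) * (1 - ε) < ‖α‖ * r := by
    calc _ = p * (1 - 1 / (125 * B)) * r := by rw [← hrp]; ring
      _ < _ := by gcongr
  have h6 : 91 * B * (1 - (1 - 1 / (125 * B)) * (1 - ε)) < 4 := by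
    have : (91 : ℝ) * B * (1 - (1 - 1 / (125 * B)) * (1 - ε))
        = 91 / 125 + 91 / 28 - 91 / (3500 * B) := by
      simp only [ε]; field_simp; ring
    rw [this]
    have : 0 < 91 / (3500 * (B : ℝ)) := by positivity
    linarith
  nlinarith

lemma norm_power_sum_le {s : Multiset ℂ} {q : ℝ} (h : ∀ α ∈ s, ‖α‖ ≤ q) (k : ℕ) :
    ‖(s.map fun α => α ^ k).sum‖ ≤ s.card * q ^ k := by
  induction s using Multiset.induction_on with
  | empty => simp
  | cons a s ih =>
    have h1 := ih fun α hα => h α (Multiset.mem_cons_of_mem hα)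
    have h2 : ‖a ^ k‖ ≤ q ^ k := by
      rw [norm_pow]
      exact pow_le_pow_left₀ (norm_nonneg _) (h a (Multiset.mem_cons_self a s)) k
    simp only [Multiset.map_cons, Multiset.sum_cons, Multiset.card_cons]
    refine (norm_add_le _ _).trans ?_
    push_cast
    linarith

/-- The prime sum of a character is small if the L-functions of the character and of its square
are polynomials of degree less than `B`. -/
lemma IsChar.norm_sum_vM_le {φ : (ZMod p)[X] → ℂ} (hφ : IsChar φ) {B : ℕ} (hB : 0 < B)
    (h1 : ∀ k, B ≤ k → ∑ f ∈ monics p k, φ f = 0)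
    (h2 : ∀ k, B ≤ k → ∑ f ∈ monics p k, φ f ^ 2 = 0) {k : ℕ} (hk : 0 < k) :
    ‖∑ f ∈ monics p k, (vM f : ℂ) * φ f‖ ≤ B * (p ^ k * (1 - 1 / (125 * B)) ^ k) := by
  have hφ2 : IsChar fun f => φ f ^ 2 :=
    ⟨fun f g hf hg => by simp only [hφ.mul f g hf hg, mul_pow], by simp only [hφ.one, one_pow],
      fun f => by rw [norm_pow]; exact pow_le_one₀ (norm_nonneg _) (hφ.norm_le f)⟩
  obtain ⟨s, hs, hs1, hs2⟩ := hφ.exists_roots h1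
  obtain ⟨t, ht, ht1, ht2⟩ := hφ2.exists_roots h2
  have hB' : (1 : ℝ) ≤ B := by exact_mod_cast hB
  have hp := p_pos (p := p)
  have h0 : 0 ≤ 1 - 1 / (125 * (B : ℝ)) := by
    rw [sub_nonneg, div_le_one (by positivity)]; linarith
  rw [hs2 k hk, norm_neg, ← mul_pow]
  refine (norm_power_sum_le (zeroFree hφ hB hs.le ht.le hs1 ht1 hs2 ht2) k).trans ?_
  refine mul_le_mul_of_nonneg_right ?_ (by positivity)
  exact_mod_cast hs.le

/-! ### Primes in classes of a finite abelian group -/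

/-- The monic polynomials with nonzero constant term. -/
def Good (f : (ZMod p)[X]) : Prop := f.Monic ∧ f.coeff 0 ≠ 0

lemma Good.mul {f g : (ZMod p)[X]} (hf : Good f) (hg : Good g) : Good (f * g) :=
  ⟨hf.1.mul hg.1, by rw [mul_coeff_zero]; exact mul_ne_zero hf.2 hg.2⟩

lemma good_one : Good (1 : (ZMod p)[X]) := ⟨monic_one, by simp⟩

lemma good_mul_iff {f g : (ZMod p)[X]} (hf : f.Monic) (hg : g.Monic) :
    Good (f * g) ↔ Good f ∧ Good g := by
  simp [Good, hf, hg, hf.mul hg, mul_coeff_zero]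

/-- A multiplicative map `Φ` from the good polynomials to a finite abelian group `S`, given with
junk values elsewhere, for which every class contains the same number of polynomials of each
degree `k ≥ B`, and which modulo elements of order dividing the odd number `N` depends only
on the constant term. -/
structure IsClassMap {S : Type} [CommGroup S] (Φ : (ZMod p)[X] → S) (B N : ℕ) : Prop where
  mul : ∀ f g, Good f → Good g → Φ (f * g) = Φ f * Φ g
  one : Φ 1 = 1
  equi : ∀ k, B ≤ k → ∀ s, ((monics p k).filter fun f => Good f ∧ Φ f = s).card = p ^ (k - B)
  odd : Odd N
  pow : ∀ f g, Good f → Good g → f.coeff 0 = g.coeff 0 → Φ f ^ N = Φ g ^ N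

/-- The function on polynomials induced by a character of the class group. -/
def chi {S : Type} [CommGroup S] (Φ : (ZMod p)[X] → S) (χ : AddChar (Additive S) ℂ)
    (f : (ZMod p)[X]) : ℂ := if Good f then χ (Additive.ofMul (Φ f)) else 0

section
variable {S : Type} [CommGroup S] {Φ : (ZMod p)[X] → S} {B N : ℕ}

lemma chi_sq (χ : AddChar (Additive S) ℂ) (f : (ZMod p)[X]) :
    chi Φ χ f ^ 2 = chi Φ (χ * χ) f := by
  unfold chi
  split_ifs <;> simp [AddChar.mul_apply, sq]

lemma sum_good_class [Fintype S] (h : IsClassMap Φ B N) {k : ℕ} (hk : B ≤ k)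
    {M : Type} [CommRing M] (g : S → M) :
    ∑ f ∈ monics p k, (if Good f then g (Φ f) else 0) = (p : M) ^ (k - B) * ∑ s, g s := by
  rw [Finset.mul_sum, ← Finset.sum_filter,
    ← Finset.sum_fiberwise_of_maps_to (t := Finset.univ) (g := Φ) (fun _ _ => Finset.mem_univ _)]
  refine Finset.sum_congr rfl fun s _ => ?_
  rw [Finset.filter_filter, Finset.sum_congr rfl (g := fun _ => g s), Finset.sum_const, h.equi k hk]
  · simp
  · intro f hf
    rw [(Finset.mem_filter.1 hf).2.2]

lemma card_class_mul [Fintype S] (h : IsClassMap Φ B N) {k : ℕ} (hk : B ≤ k) :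
    (p:ℝ) ^ (k - B) * Fintype.card S = ∑ f ∈ monics p k, (if Good f then 1 else 0) := by
  rw [sum_good_class h hk (fun _ => (1:ℝ))]
  simp

variable [Finite S]

lemma chi_isChar (h : IsClassMap Φ B N) (χ : AddChar (Additive S) ℂ) : IsChar (chi Φ χ) := by
  refine ⟨fun f g hf hg => ?_, ?_, fun f => ?_⟩
  · unfold chi
    by_cases h1 : Good f <;> by_cases h2 : Good g <;>
      simp [good_mul_iff hf hg, h1, h2, h.mul, AddChar.map_add_eq_mul]
  · simp [chi, good_one, h.one]
  · unfold chi
    split_ifs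
    · exact (AddChar.norm_apply χ _).le
    · simp

lemma sum_chi (h : IsClassMap Φ B N) {χ : AddChar (Additive S) ℂ} (hχ : χ ≠ 1) {k : ℕ}
    (hk : B ≤ k) : ∑ f ∈ monics p k, chi Φ χ f = 0 := by
  have := Fintype.ofFinite S
  have := sum_good_class h hk (fun s => χ (Additive.ofMul s))
  unfold chi
  rw [this, Fintype.sum_equiv Additive.ofMul (fun s => χ (Additive.ofMul s)) (fun a => χ a)
    fun _ => rfl, AddChar.sum_eq_zero_of_ne_one hχ, mul_zero]

/-- A nontrivial real character depends only on the constant term, so its sums vanish in every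
positive degree. -/
lemma sum_chi_real (h : IsClassMap Φ B N) {χ : AddChar (Additive S) ℂ} (hχ : χ ≠ 1)
    (hχ2 : χ * χ = 1) {k : ℕ} (hk : 1 ≤ k) : ∑ f ∈ monics p k, chi Φ χ f = 0 := by
  have hdep : ∀ f g, Good f → Good g → f.coeff 0 = g.coeff 0 → chi Φ χ f = chi Φ χ g := by
    intro f g hf hg hfg
    have key : ∀ s : S, χ (Additive.ofMul (s ^ N)) = χ (Additive.ofMul s) := by
      intro s
      obtain ⟨m, hm⟩ := h.odd
      have hs : χ (Additive.ofMul s) ^ 2 = 1 := by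
        rw [sq, ← AddChar.mul_apply, hχ2, AddChar.one_apply]
      rw [ofMul_pow, AddChar.map_nsmul_eq_pow, hm, pow_succ, pow_mul, hs, one_pow, one_mul]
    simp only [chi, hf, hg, if_true]
    rw [← key, h.pow f g hf hg hfg, key]
  obtain ⟨f₀, hf₀, hne⟩ : ∃ f, Good f ∧ chi Φ χ f ≠ 1 := by
    obtain ⟨s, hs⟩ := AddChar.ne_one_iff.1 hχ
    have hc := h.equi B le_rfl (Additive.toMul s)
    rw [Nat.sub_self, pow_zero] at hc
    obtain ⟨f, hf⟩ := Finset.card_pos.1 (by rw [hc]; exact one_pos)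
    obtain ⟨_, hf1, hf2⟩ := Finset.mem_filter.1 hf
    refine ⟨f, hf1, ?_⟩
    rw [chi, if_pos hf1, hf2]
    exact hs
  set a := f₀.coeff 0 with ha
  have hdeg : ∀ (f : (ZMod p)[X]) (c : ZMod p), f ∈ monics p k → f + C c ∈ monics p k := by
    intro f c hf
    rw [mem_monics] at hf ⊢
    have hlt : (C c).degree < f.degree :=
      lt_of_le_of_lt degree_C_le (by rw [← natDegree_pos_iff_degree_pos]; omega)
    exact ⟨hf.1.add_of_left hlt, by rw [natDegree_add_C]; exact hf.2⟩
  have hgood : ∀ f ∈ monics p k, (Good (f + C ((a - 1) * f.coeff 0)) ↔ Good f) := by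
    intro f hf
    have h1 := hdeg f ((a - 1) * f.coeff 0) hf
    rw [mem_monics] at h1 hf
    simp only [Good, h1.1, hf.1, true_and, coeff_add, coeff_C_zero]
    rw [show f.coeff 0 + (a - 1) * f.coeff 0 = a * f.coeff 0 by ring]
    simp [hf₀.2, ha]
  have hstep : ∀ f ∈ monics p k, chi Φ χ (f + C ((a - 1) * f.coeff 0))
      = chi Φ χ f₀ * chi Φ χ f := by
    intro f hf
    rw [← (chi_isChar h χ).mul f₀ f hf₀.1 ((mem_monics).1 hf).1]
    by_cases hg : Good f
    · refine hdep _ _ ((hgood f hf).2 hg) (hf₀.mul hg) ?_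
      simp only [coeff_add, coeff_C_zero, mul_coeff_zero]
      ring
    · have h1 : ¬ Good (f₀ * f) := by
        rw [good_mul_iff hf₀.1 ((mem_monics).1 hf).1]; tauto
      have h2 : ¬ Good (f + C ((a - 1) * f.coeff 0)) := by rwa [hgood f hf]
      rw [chi, chi, if_neg h1, if_neg h2]
  have hsum : ∑ f ∈ monics p k, chi Φ χ (f + C ((a - 1) * f.coeff 0))
      = ∑ f ∈ monics p k, chi Φ χ f := by
    refine Finset.sum_bij' (fun f _ => f + C ((a - 1) * f.coeff 0))
      (fun f _ => f + C ((a⁻¹ - 1) * f.coeff 0)) (fun f hf => hdeg f _ hf)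
      (fun f hf => hdeg f _ hf) ?_ ?_ (fun _ _ => rfl)
    · intro f _
      have : a ≠ 0 := hf₀.2
      simp only [coeff_add, coeff_C_zero, add_assoc, ← C_add]
      convert add_zero f
      rw [← C_0]
      congr 1
      field_simp
      ring
    · intro f _
      have : a ≠ 0 := hf₀.2
      simp only [coeff_add, coeff_C_zero, add_assoc, ← C_add]
      convert add_zero f
      rw [← C_0]
      congr 1
      field_simp
      ring
  rw [Finset.sum_congr rfl hstep, ← Finset.mul_sum] at hsum
  have : (chi Φ χ f₀ - 1) * ∑ f ∈ monics p k, chi Φ χ f = 0 := by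
    rw [sub_mul, hsum]; ring
  exact (mul_eq_zero.1 this).resolve_left (sub_ne_zero.2 hne)

/-- Prime sums of nontrivial characters of the class group. For a real character, whose square is
trivial, the zero-free region is not available, but its L-function has no zeros at all. -/
lemma norm_sum_vM_chi_le (h : IsClassMap Φ B N) (hB : 0 < B) {χ : AddChar (Additive S) ℂ}
    (hχ : χ ≠ 1) {k : ℕ} (hk : 0 < k) :
    ‖∑ f ∈ monics p k, (vM f : ℂ) * chi Φ χ f‖ ≤ B * ((p:ℝ) ^ k * (1 - 1 / (125 * (B:ℝ))) ^ k) := by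
  by_cases hχ2 : χ * χ = 1
  · obtain ⟨s, hs, -, hsum⟩ := (chi_isChar h χ).exists_roots (B := 1)
      fun k hk => sum_chi_real h hχ hχ2 hk
    have hs0 : s = 0 := Multiset.card_eq_zero.1 (by omega)
    rw [hsum k hk, hs0]
    have h1 : (1:ℝ) ≤ B := by exact_mod_cast hB
    have h2 : 1 / (125 * (B:ℝ)) ≤ 1 := by
      rw [div_le_one (by positivity)]; linarith
    have h3 : 0 ≤ 1 - 1 / (125 * (B:ℝ)) := by linarith
    simp only [Multiset.map_zero, Multiset.sum_zero, neg_zero, norm_zero]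
    positivity
  · refine (chi_isChar h χ).norm_sum_vM_le hB (fun k hk => sum_chi h hχ hk) (fun k hk => ?_) hk
    simp only [chi_sq]
    exact sum_chi h hχ2 hk

/-- Equidistribution of the prime powers in the classes. -/
lemma class_equi [Fintype S] (h : IsClassMap Φ B N) (hB : 0 < B) {k : ℕ} (hk : 0 < k) (s : S) :
    |∑ f ∈ monics p k, (if Good f ∧ Φ f = s then (vM f : ℝ) else 0)
      - (∑ f ∈ monics p k, if Good f then (vM f : ℝ) else 0) / Fintype.card S|
      ≤ B * ((p:ℝ) ^ k * (1 - 1 / (125 * (B:ℝ))) ^ k) := by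
  set err := B * ((p:ℝ) ^ k * (1 - 1 / (125 * (B:ℝ))) ^ k) with herr
  have hcS : (Fintype.card S : ℂ) ≠ 0 := by exact_mod_cast Fintype.card_ne_zero
  have hcS' : (0:ℝ) < Fintype.card S := by exact_mod_cast Fintype.card_pos
  set F : AddChar (Additive S) ℂ → ℂ := fun χ =>
    χ (Additive.ofMul s⁻¹) * ∑ f ∈ monics p k, (vM f : ℂ) * chi Φ χ f with hF
  have horth : (Fintype.card S : ℂ) *
      ((∑ f ∈ monics p k, (if Good f ∧ Φ f = s then (vM f : ℝ) else 0) : ℝ) : ℂ)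
      = ∑ χ, F χ := by
    simp only [hF, Finset.mul_sum]
    rw [Finset.sum_comm]
    push_cast
    rw [Finset.mul_sum]
    refine Finset.sum_congr rfl fun f _ => ?_
    by_cases hf : Good f
    · have h1 : ∀ χ : AddChar (Additive S) ℂ, χ (Additive.ofMul s⁻¹) * ((vM f : ℂ) * chi Φ χ f)
          = (vM f : ℂ) * χ (Additive.ofMul (s⁻¹ * Φ f)) := by
        intro χ
        rw [ofMul_mul, AddChar.map_add_eq_mul, chi, if_pos hf]
        ring
      simp only [h1, ← Finset.mul_sum, AddChar.sum_apply_eq_ite, hf, true_and]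
      have h2 : Additive.ofMul (s⁻¹ * Φ f) = 0 ↔ Φ f = s := by
        rw [ofMul_eq_zero, inv_mul_eq_one, eq_comm]
      simp only [h2]
      split_ifs
      · simp [mul_comm]
      · simp
    · simp [chi, hf]
  have h1 : F 1 = ((∑ f ∈ monics p k, if Good f then (vM f : ℝ) else 0 : ℝ) : ℂ) := by
    simp only [hF, AddChar.one_apply, one_mul]
    push_cast
    refine Finset.sum_congr rfl fun f _ => ?_
    simp only [chi, AddChar.one_apply]
    split_ifs <;> simp
  have hcard : Fintype.card (AddChar (Additive S) ℂ) = Fintype.card S := by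
    rw [← Nat.card_eq_fintype_card, ← Nat.card_eq_fintype_card]
    have := AddChar.card_eq (α := Additive S)
    rw [← Nat.card_eq_fintype_card, ← Nat.card_eq_fintype_card] at this
    exact this
  have hrest : ‖∑ χ ∈ Finset.univ.erase 1, F χ‖ ≤ Fintype.card S * err := by
    have herr0 : 0 ≤ err := by
      have h1 : (1:ℝ) ≤ B := by exact_mod_cast hB
      have h2 : 1 / (125 * (B:ℝ)) ≤ 1 := by
        rw [div_le_one (by positivity)]; linarith
      have h3 : 0 ≤ 1 - 1 / (125 * (B:ℝ)) := by linarith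
      positivity
    calc ‖∑ χ ∈ Finset.univ.erase 1, F χ‖ ≤ ∑ χ ∈ Finset.univ.erase 1, ‖F χ‖ := norm_sum_le _ _
      _ ≤ ∑ χ ∈ Finset.univ.erase (1 : AddChar (Additive S) ℂ), err := by
          refine Finset.sum_le_sum fun χ hχ => ?_
          rw [hF]
          simp only [norm_mul, AddChar.norm_apply, one_mul]
          exact norm_sum_vM_chi_le h hB (Finset.ne_of_mem_erase hχ) hk
      _ ≤ ∑ χ : AddChar (Additive S) ℂ, err :=
          Finset.sum_le_sum_of_subset_of_nonneg (Finset.erase_subset _ _) fun _ _ _ => herr0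
      _ = Fintype.card S * err := by
          rw [Finset.sum_const, Finset.card_univ, hcard, nsmul_eq_mul]
  rw [← Finset.add_sum_erase _ _ (Finset.mem_univ (1 : AddChar (Additive S) ℂ)), h1] at horth
  set T := ∑ f ∈ monics p k, (if Good f ∧ Φ f = s then (vM f : ℝ) else 0)
  set P := ∑ f ∈ monics p k, if Good f then (vM f : ℝ) else 0
  have h3 : ∑ χ ∈ Finset.univ.erase 1, F χ = ((Fintype.card S * T - P : ℝ) : ℂ) := by
    push_cast
    rw [horth]; ring
  rw [h3, Complex.norm_real, Real.norm_eq_abs] at hrest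
  have h4 : T - P / Fintype.card S = (Fintype.card S * T - P) / Fintype.card S := by
    field_simp
  rw [h4, abs_div, abs_of_pos hcS', div_le_iff₀ hcS']
  linarith

/-- The sum of `vM` over good polynomials, weighted by a function of the class. -/
lemma class_weighted [Fintype S] (h : IsClassMap Φ B N) (hB : 0 < B) {k : ℕ} (hk : B ≤ k)
    (W : S → ℝ) :
    |∑ f ∈ monics p k, (if Good f then (vM f : ℝ) * W (Φ f) else 0)
      - (∑ f ∈ monics p k, if Good f then (vM f : ℝ) else 0) *
        (∑ f ∈ monics p k, if Good f then W (Φ f) else 0) /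
        (∑ f ∈ monics p k, if Good f then 1 else 0)|
      ≤ (∑ s, |W s|) * (B * ((p:ℝ) ^ k * (1 - 1 / (125 * (B:ℝ))) ^ k)) := by
  rw [← card_class_mul h hk, sum_good_class h hk W]
  have hcS' : (0:ℝ) < Fintype.card S := by exact_mod_cast Fintype.card_pos
  have hp : (0:ℝ) < (p:ℝ) ^ (k - B) := pow_pos (by exact_mod_cast (Fact.out : p.Prime).pos) _
  set P := ∑ f ∈ monics p k, if Good f then (vM f : ℝ) else 0
  have h1 : ∑ f ∈ monics p k, (if Good f then (vM f : ℝ) * W (Φ f) else 0)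
      = ∑ s, W s * ∑ f ∈ monics p k, (if Good f ∧ Φ f = s then (vM f : ℝ) else 0) := by
    simp only [Finset.mul_sum]
    rw [Finset.sum_comm]
    refine Finset.sum_congr rfl fun f _ => ?_
    by_cases hf : Good f
    · simp [hf, mul_comm]
    · simp [hf]
  have h2 : P * ((p:ℝ) ^ (k - B) * ∑ s, W s) / ((p:ℝ) ^ (k - B) * Fintype.card S)
      = ∑ s, W s * (P / Fintype.card S) := by
    rw [← Finset.sum_mul]
    field_simp
  rw [h1, h2, ← Finset.sum_sub_distrib, Finset.sum_mul]
  refine (Finset.abs_sum_le_sum_abs _ _).trans (Finset.sum_le_sum fun s _ => ?_)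
  rw [← mul_sub, abs_mul]
  exact mul_le_mul_of_nonneg_left (class_equi h hB (by omega) s) (abs_nonneg _)

end

/-! ### Lowest and highest coefficients as a class map -/

variable (p) in
/-- The ring of polynomials truncated after degree `b`. -/
abbrev TR (b : ℕ) : Type := (ZMod p)[X] ⧸ Ideal.span {(X : (ZMod p)[X]) ^ (b + 1)}

/-- Truncation after degree `b`. -/
def tr (b : ℕ) : (ZMod p)[X] →+* TR p b := Ideal.Quotient.mk _

lemma tr_eq_iff {b : ℕ} {f g : (ZMod p)[X]} :
    tr b f = tr b g ↔ ∀ i ≤ b, f.coeff i = g.coeff i := by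
  unfold tr
  rw [Ideal.Quotient.eq, Ideal.mem_span_singleton, X_pow_dvd_iff]
  simp [sub_eq_zero]

lemma tr_surjective (b : ℕ) : Function.Surjective (tr (p := p) b) := Ideal.Quotient.mk_surjective

instance (b : ℕ) : Finite (TR p b) := by
  refine Finite.of_surjective (fun c : Fin (b + 1) → ZMod p => tr b (low c)) fun x => ?_
  obtain ⟨f, rfl⟩ := tr_surjective b x
  refine ⟨fun i => f.coeff i, tr_eq_iff.2 fun i hi => ?_⟩
  rw [low_coeff]
  simp [ext, hi]

/-- The constant term of a truncated polynomial. -/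
def cst (b : ℕ) : TR p b →+* ZMod p :=
  Ideal.Quotient.lift _ (constantCoeff (R := ZMod p)) fun f hf => by
    obtain ⟨g, rfl⟩ := Ideal.mem_span_singleton.1 hf
    simp

@[simp] lemma cst_tr (b : ℕ) (f : (ZMod p)[X]) : cst b (tr b f) = f.coeff 0 := by
  simp [cst, tr]

lemma isUnit_tr {b : ℕ} {f : (ZMod p)[X]} : IsUnit (tr b f) ↔ f.coeff 0 ≠ 0 := by
  constructor
  · intro h
    have := h.map (cst b)
    rw [cst_tr] at this
    exact this.ne_zero
  · intro h
    have h1 : IsCoprime f ((X : (ZMod p)[X]) ^ (b + 1)) := by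
      refine IsCoprime.pow_right ?_
      rw [isCoprime_comm, Irreducible.coprime_iff_not_dvd irreducible_X, X_dvd_iff]
      exact h
    obtain ⟨u, v, huv⟩ := h1
    refine IsUnit.of_mul_eq_one (tr b u) ?_
    have h2 : tr b ((X : (ZMod p)[X]) ^ (b + 1)) = 0 :=
      Ideal.Quotient.eq_zero_iff_mem.2 (Ideal.mem_span_singleton_self _)
    have := congrArg (tr b) huv
    rw [map_add, map_mul, map_mul, h2, mul_zero, add_zero, map_one] at this
    rw [mul_comm]; exact this

variable (p) in
/-- The class group: truncated units for the lowest coefficients, and truncated units with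
constant term one for the highest coefficients. -/
abbrev Cls (b : ℕ) : Type := (TR p b)ˣ × (Units.map (cst (p := p) b : TR p b →* ZMod p)).ker

lemma Good.reverse_coeff {f : (ZMod p)[X]} (hf : Good f) : f.reverse.coeff 0 = 1 := by
  rw [coeff_zero_reverse]; exact hf.1

/-- The class of a polynomial: its lowest `b + 1` and its highest `b` non-leading coefficients. -/
def cls (b : ℕ) (f : (ZMod p)[X]) : Cls p b :=
  if h : Good f then
    ((isUnit_tr.2 h.2).unit,
      ⟨(isUnit_tr (b := b) (f := f.reverse).2 (by rw [h.reverse_coeff]; exact one_ne_zero)).unit, by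
        rw [MonoidHom.mem_ker, Units.ext_iff]
        simp [h.reverse_coeff]⟩)
  else 1

lemma cls_fst {b : ℕ} {f : (ZMod p)[X]} (h : Good f) : ((cls b f).1 : TR p b) = tr b f := by
  simp [cls, h]

lemma cls_snd {b : ℕ} {f : (ZMod p)[X]} (h : Good f) :
    (((cls b f).2 : (TR p b)ˣ) : TR p b) = tr b f.reverse := by
  simp [cls, h]

lemma Cls.ext {b : ℕ} {s t : Cls p b} (h1 : (s.1 : TR p b) = t.1)
    (h2 : ((s.2 : (TR p b)ˣ) : TR p b) = (t.2 : (TR p b)ˣ)) : s = t :=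
  Prod.ext (Units.ext h1) (Subtype.ext (Units.ext h2))

/-- The number of vectors with prescribed coordinates at positions `≤ b` and `≥ k - b`, and
coordinates in a set elsewhere; more generally for sets of prescribed sizes. -/
lemma card_pi {k b : ℕ} (hk : 2 * b + 1 ≤ k) (t : ℕ → Finset (ZMod p)) (u v w : ℕ)
    (h0 : (t 0).card = u) (h1 : ∀ i, 0 < i → i < k → (i ≤ b ∨ k ≤ i + b) → (t i).card = v)
    (h2 : ∀ i, b < i → i + b < k → (t i).card = w) :
    (Finset.univ.filter fun c : Fin k → ZMod p => ∀ i : Fin k, c i ∈ t i).card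
      = u * v ^ (2 * b) * w ^ (k - (2 * b + 1)) := by
  have : (Finset.univ.filter fun c : Fin k → ZMod p => ∀ i : Fin k, c i ∈ t i)
      = Fintype.piFinset fun i : Fin k => t i := by
    ext c; simp [Fintype.mem_piFinset]
  rw [this, Fintype.card_piFinset, ← Finset.prod_range (fun i => (t i).card)]
  obtain ⟨m, rfl⟩ := Nat.exists_eq_add_of_le hk
  rw [show 2 * b + 1 + m = (b + m) + b + 1 by ring, Finset.prod_range_succ', h0, Finset.prod_range_add,
    Finset.prod_range_add]
  rw [Finset.prod_congr rfl (g := fun _ => v), Finset.prod_congr rfl (g := fun _ => w)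
    (s₁ := Finset.range m), Finset.prod_congr rfl (g := fun _ => v)
    (f := fun i => (t (b + m + i + 1)).card)]
  · simp only [Finset.prod_const, Finset.card_range]
    rw [show b + m + b + 1 - (2 * b + 1) = m by omega]
    ring
  · intro i hi; rw [Finset.mem_range] at hi; exact h1 _ (by omega) (by omega) (by omega)
  · intro i hi; rw [Finset.mem_range] at hi; exact h2 _ (by omega) (by omega)
  · intro i hi; rw [Finset.mem_range] at hi; exact h1 _ (by omega) (by omega) (by omega)

lemma coeff_reverse_monics {k i : ℕ} {f : (ZMod p)[X]} (hf : f ∈ monics p k) (hi : i ≤ k) :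
    f.reverse.coeff i = f.coeff (k - i) := by
  rw [coeff_reverse, (mem_monics.1 hf).2, revAt_le hi]

lemma mon_coeff {k i : ℕ} (c : Fin k → ZMod p) (hi : i < k) : (mon c).coeff i = c ⟨i, hi⟩ := by
  unfold mon
  rw [coeff_add, low_coeff, coeff_X_pow, if_neg (by omega)]
  simp [ext, hi]

/-- Counting monic polynomials with coefficients restricted to given sets. -/
lemma card_monics_filter {k : ℕ} (t : ℕ → Finset (ZMod p)) :
    ((monics p k).filter fun f => ∀ i < k, f.coeff i ∈ t i).card
      = (Finset.univ.filter fun c : Fin k → ZMod p => ∀ i : Fin k, c i ∈ t i).card := by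
  unfold monics
  rw [Finset.filter_image, Finset.card_image_of_injective _ mon_injective]
  congr 1
  refine Finset.filter_congr fun c _ => ⟨fun h i => ?_, fun h i hi => ?_⟩
  · have := h i i.2
    rwa [mon_coeff c i.2] at this
  · rw [mon_coeff c hi]; exact h ⟨i, hi⟩

/-- Two good polynomials of the same degree are in the same class iff their lowest and highest
coefficients agree. -/
lemma cls_eq_iff {k b : ℕ} (hk : 2 * b + 1 ≤ k) {f g : (ZMod p)[X]} (hf : f ∈ monics p k)
    (hf' : Good f) (hg : g ∈ monics p k) (hg' : Good g) :
    cls b f = cls b g ↔ ∀ i < k, (i ≤ b ∨ k ≤ i + b) → f.coeff i = g.coeff i := by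
  constructor
  · intro h i hi hib
    rcases hib with hib | hib
    · have h1 := congrArg (fun s => (s.1 : TR p b)) h
      simp only [cls_fst hf', cls_fst hg'] at h1
      exact tr_eq_iff.1 h1 i hib
    · have h1 := congrArg (fun s => ((s.2 : (TR p b)ˣ) : TR p b)) h
      simp only [cls_snd hf', cls_snd hg'] at h1
      have := tr_eq_iff.1 h1 (k - i) (by omega)
      rwa [coeff_reverse_monics hf (by omega), coeff_reverse_monics hg (by omega),
        show k - (k - i) = i by omega] at this
  · intro h
    refine Cls.ext ?_ ?_
    · rw [cls_fst hf', cls_fst hg', tr_eq_iff]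
      intro i hi
      exact h i (by omega) (Or.inl hi)
    · rw [cls_snd hf', cls_snd hg', tr_eq_iff]
      intro i hi
      rcases Nat.eq_zero_or_pos i with rfl | h0
      · rw [hf'.reverse_coeff, hg'.reverse_coeff]
      · rw [coeff_reverse_monics hf (by omega), coeff_reverse_monics hg (by omega)]
        exact h _ (by omega) (Or.inr (by omega))

/-- Every class is represented in every degree `k > 2 b`. -/
lemma exists_cls {k b : ℕ} (hk : 2 * b + 1 ≤ k) (s : Cls p b) :
    ∃ f ∈ monics p k, Good f ∧ cls b f = s := by
  obtain ⟨g, hg⟩ := tr_surjective b (s.1 : TR p b)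
  obtain ⟨h, hh⟩ := tr_surjective b ((s.2 : (TR p b)ˣ) : TR p b)
  have hg0 : g.coeff 0 ≠ 0 := by
    rw [← isUnit_tr (b := b), hg]; exact s.1.isUnit
  have hh0 : h.coeff 0 = 1 := by
    have := s.2.2
    rw [MonoidHom.mem_ker, Units.ext_iff] at this
    simp only [Units.coe_map, MonoidHom.coe_coe, Units.val_one, ← hh, cst_tr] at this
    exact this
  set c : Fin k → ZMod p := fun i =>
    if (i:ℕ) ≤ b then g.coeff i else h.coeff (k - i) with hc
  have hm : mon c ∈ monics p k := mem_monics.2 ⟨mon_monic c, mon_natDegree c⟩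
  have hgood : Good (mon c) := by
    refine ⟨mon_monic c, ?_⟩
    rw [mon_coeff c (by omega)]
    simpa [hc] using hg0
  refine ⟨mon c, hm, hgood, Cls.ext ?_ ?_⟩
  · rw [cls_fst hgood, ← hg, tr_eq_iff]
    intro i hi
    rw [mon_coeff c (by omega)]
    simp [hc, hi]
  · rw [cls_snd hgood, ← hh, tr_eq_iff]
    intro i hi
    rcases Nat.eq_zero_or_pos i with rfl | h0
    · rw [hgood.reverse_coeff, hh0]
    · rw [coeff_reverse_monics hm (by omega), mon_coeff c (by omega)]
      simp only [hc]
      rw [if_neg (by omega), show k - (k - i) = i by omega]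

lemma tr_pow_char {b : ℕ} {f : (ZMod p)[X]} : tr b f ^ p ^ b = tr b (C (f.coeff 0)) := by
  obtain ⟨g, hg⟩ : X ∣ f - C (f.coeff 0) := X_dvd_iff.2 (by simp)
  have h1 : f = C (f.coeff 0) + X * g := by rw [← hg]; ring
  rw [← map_pow]
  conv_lhs => rw [h1]
  rw [add_pow_char_pow, ← C_pow, ZMod.pow_card_pow, mul_pow, tr_eq_iff]
  intro i hi
  have h2 : b < p ^ b := Nat.lt_pow_self (Fact.out : p.Prime).one_lt
  rw [coeff_add, coeff_X_pow_mul', if_neg (by omega), add_zero]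

/-- Truncated polynomials with constant term one are killed by the `p ^ b`-th power, and `p ^ b`
is odd for `p ≠ 2`. Hence up to `p`-power torsion the class depends only on the constant term. -/
lemma cls_isClassMap (hp : p ≠ 2) (b : ℕ) : IsClassMap (cls (p := p) b) (2 * b + 1) (p ^ b) where
  mul f g hf hg := by
    refine Cls.ext ?_ ?_
    · rw [cls_fst (hf.mul hg), map_mul]
      simp [cls_fst hf, cls_fst hg]
    · rw [cls_snd (hf.mul hg), reverse_mul_of_domain, map_mul]
      simp [cls_snd hf, cls_snd hg]
  one := by
    refine Cls.ext ?_ ?_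
    · rw [cls_fst good_one, map_one]; rfl
    · rw [cls_snd good_one, show (1 : (ZMod p)[X]).reverse = 1 by rw [← C_1, reverse_C], map_one]; rfl
  equi k hk s := by
    obtain ⟨g, hg, hg', rfl⟩ := exists_cls hk s
    have h1 : ∀ f ∈ monics p k, (Good f ∧ cls b f = cls b g) ↔ ∀ i < k, f.coeff i ∈
          (if i ≤ b ∨ k ≤ i + b then {g.coeff i} else Finset.univ : Finset (ZMod p)) := by
      refine fun f hf => ⟨fun h i hi => ?_, fun h => ?_⟩
      · split_ifs with h2
        · exact Finset.mem_singleton.2 ((cls_eq_iff hk hf h.1 hg hg').1 h.2 i hi h2)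
        · exact Finset.mem_univ _
      · have h3 : ∀ i < k, (i ≤ b ∨ k ≤ i + b) → f.coeff i = g.coeff i := by
          intro i hi h2
          have := h i hi
          rw [if_pos h2] at this
          exact Finset.mem_singleton.1 this
        have hf' : Good f := ⟨(mem_monics.1 hf).1, by
          rw [h3 0 (by omega) (Or.inl (by omega))]; exact hg'.2⟩
        exact ⟨hf', (cls_eq_iff hk hf hf' hg hg').2 h3⟩
    have h4 : ((monics p k).filter fun f => Good f ∧ cls b f = cls b g).card
        = p ^ (k - (2 * b + 1)) := by
      rw [Finset.filter_congr h1, card_monics_filter, card_pi hk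
        (fun i => if i ≤ b ∨ k ≤ i + b then {g.coeff i} else Finset.univ) 1 1 p]
      · simp
      · simp
      · intro i _ _ hi; simp [hi]
      · intro i hi hi'
        rw [if_neg (by omega), Finset.card_univ, ZMod.card]
    convert h4
  odd := ((Fact.out : p.Prime).odd_of_ne_two hp).pow
  pow f g hf hg h := by
    refine Cls.ext ?_ ?_
    · simp only [Prod.pow_fst, Units.val_pow_eq_pow_val, cls_fst hf, cls_fst hg, tr_pow_char, h]
    · simp only [Prod.pow_snd, SubgroupClass.coe_pow, Units.val_pow_eq_pow_val, cls_snd hf,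
        cls_snd hg, tr_pow_char, hf.reverse_coeff, hg.reverse_coeff]

/-! ### Prime powers with prescribed lowest and highest coefficients -/

/-- The `b + 1` lowest and the `b` highest non-leading coefficients of `f` lie in `A`. -/
def Edge (A : Finset (ZMod p)) (b n : ℕ) (f : (ZMod p)[X]) : Prop :=
  ∀ i < n, (i ≤ b ∨ n ≤ i + b) → f.coeff i ∈ A

lemma sum_vM_not_good {n : ℕ} :
    ∑ f ∈ monics p n, (if Good f then 0 else (vM f : ℝ)) ≤ n := by
  have h : ∀ f ∈ monics p n, f ≠ X ^ n → (if Good f then 0 else (vM f : ℝ)) = 0 := by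
    intro f hf hne
    obtain ⟨hm, hd⟩ := mem_monics.1 hf
    split_ifs with hg
    · rfl
    by_cases hc : (nf f).toFinset.card = 1
    · obtain ⟨P, k, hP, hPi, hk, rfl⟩ := vM_eq hm hc
      exfalso
      have h0 : (P ^ k).coeff 0 = 0 := by
        by_contra h0
        exact hg ⟨hm, h0⟩
      have h1 : (X : (ZMod p)[X]) ∣ P := prime_X.dvd_of_dvd_pow (X_dvd_iff.2 h0)
      have h2 : X = P := eq_of_monic_of_associated monic_X hP
        ((irreducible_X.dvd_irreducible_iff_associated hPi).1 h1)
      subst h2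
      rw [natDegree_X_pow] at hd
      exact hne (by rw [hd])
    · rw [vM, if_neg hc, Nat.cast_zero]
  have hX : (X ^ n : (ZMod p)[X]) ∈ monics p n := mem_monics.2 ⟨monic_X_pow n, natDegree_X_pow n⟩
  rw [Finset.sum_eq_single_of_mem _ hX h]
  split_ifs
  · positivity
  · have := vM_le (monic_X_pow n : (X ^ n : (ZMod p)[X]).Monic)
    rw [natDegree_X_pow] at this
    exact_mod_cast this

lemma card_edge {A : Finset (ZMod p)} {b n : ℕ} (hn : 2 * b + 1 ≤ n) :
    ((monics p n).filter fun f => Good f ∧ Edge A b n f).card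
      = (A.erase 0).card * A.card ^ (2 * b) * p ^ (n - (2 * b + 1)) := by
  have h : ∀ f ∈ monics p n, (Good f ∧ Edge A b n f) ↔ ∀ i < n, f.coeff i ∈
      (if i = 0 then A.erase 0 else if i ≤ b ∨ n ≤ i + b then A else Finset.univ) := by
    intro f hf
    refine ⟨fun h i hi => ?_, fun h => ⟨⟨(mem_monics.1 hf).1, ?_⟩, fun i hi hib => ?_⟩⟩
    · split_ifs with h1 h2
      · subst h1
        exact Finset.mem_erase.2 ⟨h.1.2, h.2 0 hi (Or.inl (by omega))⟩
      · exact h.2 i hi h2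
      · exact Finset.mem_univ _
    · have := h 0 (by omega)
      rw [if_pos rfl] at this
      exact (Finset.mem_erase.1 this).1
    · have := h i hi
      split_ifs at this with h1
      · exact (Finset.mem_erase.1 this).2
      · exact this
  rw [Finset.filter_congr h, card_monics_filter, card_pi hn (fun i =>
    if i = 0 then A.erase 0 else if i ≤ b ∨ n ≤ i + b then A else Finset.univ)
      (A.erase 0).card A.card p]
  · simp
  · intro i h0 _ hi; rw [if_neg (by omega), if_pos hi]
  · intro i hi hi'
    rw [if_neg (by omega), if_neg (by omega), Finset.card_univ, ZMod.card]

lemma card_erase_cast (A : Finset (ZMod p)) (hA : 0 < A.card) :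
    ((A.erase 0).card : ℝ) = A.card * (if (0 : ZMod p) ∈ A then 1 - 1 / (A.card : ℝ) else 1) := by
  have : (0:ℝ) < A.card := by exact_mod_cast hA
  split_ifs with h
  · rw [Finset.card_erase_of_mem h, Nat.cast_sub hA]
    field_simp
    simp
  · rw [Finset.erase_eq_of_notMem h, mul_one]

/-- The prime polynomial theorem for polynomials with lowest and highest coefficients in `A`. -/
lemma edge_asymptotic (hp : p ≠ 2) {A : Finset (ZMod p)} (hA : 0 < A.card) {b n : ℕ}
    (hn : 2 * b + 1 ≤ n) :
    |∑ f ∈ monics p n, (if Edge A b n f then (vM f : ℝ) else 0)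
      - (p:ℝ) / (p - 1) * (if (0 : ZMod p) ∈ A then 1 - 1 / (A.card : ℝ) else 1)
        * ((A.card : ℝ) ^ (2 * b + 1) * (p:ℝ) ^ (n - (2 * b + 1)))|
      ≤ (p:ℝ) ^ (2 * b + 1) * ((2 * b + 1 : ℕ) *
          ((p:ℝ) ^ n * (1 - 1 / (125 * ((2 * b + 1 : ℕ) : ℝ))) ^ n)) + 2 * n := by
  have := Fintype.ofFinite (Cls p b)
  have hcm := cls_isClassMap hp b
  have hp2 : 2 ≤ p := (Fact.out : p.Prime).two_le
  have hp0 : (0:ℝ) < p := by positivity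
  have hp1 : (0:ℝ) < (p:ℝ) - 1 := by
    have : (2:ℝ) ≤ p := by exact_mod_cast hp2
    linarith
  set W : Cls p b → ℝ := fun s =>
    if ∃ f ∈ monics p n, Good f ∧ cls b f = s ∧ Edge A b n f then 1 else 0 with hW
  have hWf : ∀ f ∈ monics p n, Good f → W (cls b f) = if Edge A b n f then 1 else 0 := by
    intro f hf hf'
    have : (∃ g ∈ monics p n, Good g ∧ cls b g = cls b f ∧ Edge A b n g) ↔ Edge A b n f := by
      constructor
      · rintro ⟨g, hg, hg', hgf, hE⟩ i hi hib
        rw [← (cls_eq_iff hn hg hg' hf hf').1 hgf i hi hib]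
        exact hE i hi hib
      · exact fun h => ⟨f, hf, hf', rfl, h⟩
    simp only [hW, this]
  have key := class_weighted hcm (by omega) hn W
  set err := ((2 * b + 1 : ℕ) : ℝ) * ((p:ℝ) ^ n * (1 - 1 / (125 * ((2 * b + 1 : ℕ) : ℝ))) ^ n)
    with herr
  have herr0 : 0 ≤ err := by
    have h1 : (1:ℝ) ≤ (2 * b + 1 : ℕ) := by exact_mod_cast (by omega : 1 ≤ 2 * b + 1)
    have h2 : 1 / (125 * ((2 * b + 1 : ℕ) : ℝ)) ≤ 1 := by
      rw [div_le_one (by positivity)]; linarith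
    have h3 : 0 ≤ 1 - 1 / (125 * ((2 * b + 1 : ℕ) : ℝ)) := by linarith
    positivity
  have hWsum : ∑ s, |W s| ≤ (p:ℝ) ^ (2 * b + 1) := by
    have h1 : ∑ s, |W s| ≤ Fintype.card (Cls p b) := by
      calc ∑ s, |W s| ≤ ∑ s : Cls p b, (1:ℝ) := by
            refine Finset.sum_le_sum fun s _ => ?_
            simp only [hW]; split_ifs <;> simp
        _ = _ := by simp
    have h2 := card_class_mul hcm hn
    have h3 : ∑ f ∈ monics p n, (if Good f then (1:ℝ) else 0) ≤ (p:ℝ) ^ n := by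
      calc _ ≤ ∑ f ∈ monics p n, (1:ℝ) := by
            refine Finset.sum_le_sum fun s _ => ?_
            split_ifs <;> simp
        _ = _ := by simp [card_monics]
    rw [← h2] at h3
    have h4 : (p:ℝ) ^ n = (p:ℝ) ^ (n - (2 * b + 1)) * (p:ℝ) ^ (2 * b + 1) := by
      rw [← pow_add]; congr 1; omega
    rw [h4] at h3
    exact h1.trans (le_of_mul_le_mul_left h3 (by positivity))
  -- the total weight of the good polynomials
  have hG1 : ∑ f ∈ monics p n, (if Good f then (1:ℝ) else 0) = ((p:ℝ) - 1) / p * (p:ℝ) ^ n := by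
    have h1 := card_edge (p := p) (A := Finset.univ) hn
    have h2 : ∑ f ∈ monics p n, (if Good f then (1:ℝ) else 0)
        = ((monics p n).filter fun f => Good f ∧ Edge Finset.univ b n f).card := by
      rw [← Finset.sum_filter, Finset.sum_const, nsmul_eq_mul, mul_one]
      congr 2
      refine Finset.filter_congr fun f _ => ?_
      simp [Edge]
    have h4 : (p:ℝ) ^ n = (p:ℝ) ^ (n - (2 * b + 1)) * (p:ℝ) ^ (2 * b) * p := by
      rw [mul_assoc, ← pow_succ, ← pow_add]; congr 1; omega
    rw [h2, h1, Finset.card_erase_of_mem (Finset.mem_univ _), Finset.card_univ, ZMod.card, h4]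
    push_cast [Nat.cast_sub (by omega : 1 ≤ p)]
    field_simp
  have hGE : ∑ f ∈ monics p n, (if Good f then W (cls b f) else 0)
      = (if (0 : ZMod p) ∈ A then 1 - 1 / (A.card : ℝ) else 1)
        * ((A.card : ℝ) ^ (2 * b + 1) * (p:ℝ) ^ (n - (2 * b + 1))) := by
    have h2 : ∑ f ∈ monics p n, (if Good f then W (cls b f) else 0)
        = ((monics p n).filter fun f => Good f ∧ Edge A b n f).card := by
      rw [Finset.card_filter]
      push_cast
      refine Finset.sum_congr rfl fun f hf => ?_
      by_cases hg : Good f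
      · rw [if_pos hg, hWf f hf hg]; simp [hg]
      · simp [hg]
    rw [h2, card_edge hn]
    push_cast
    rw [card_erase_cast A hA]
    ring
  set P := ∑ f ∈ monics p n, if Good f then (vM f : ℝ) else 0 with hP
  set Q := ∑ f ∈ monics p n, (if Good f then 0 else (vM f : ℝ)) with hQ
  have hQ0 : 0 ≤ Q := Finset.sum_nonneg fun f _ => by split_ifs <;> positivity
  have hQn : Q ≤ n := sum_vM_not_good
  have hPQ : P = (p:ℝ) ^ n - Q := by
    rw [← sum_vM_monics (p := p) (k := n) (by omega), eq_sub_iff_add_eq, hP, hQ,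
      ← Finset.sum_add_distrib]
    refine Finset.sum_congr rfl fun f _ => ?_
    split_ifs <;> simp
  set GE := ∑ f ∈ monics p n, (if Good f then W (cls b f) else 0) with hGEdef
  set G1 := ∑ f ∈ monics p n, (if Good f then (1:ℝ) else 0) with hG1def
  have hG1pos : 0 < G1 := by rw [hG1]; positivity
  have hGE0 : 0 ≤ GE := Finset.sum_nonneg fun f _ => by
    simp only [hW]; split_ifs <;> simp
  have hGE1 : GE ≤ G1 := Finset.sum_le_sum fun f _ => by
    simp only [hW]; split_ifs <;> simp
  set S1 := ∑ f ∈ monics p n, (if Good f then (vM f : ℝ) * W (cls b f) else 0) with hS1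
  have hS : |∑ f ∈ monics p n, (if Edge A b n f then (vM f : ℝ) else 0) - S1| ≤ n := by
    have h1 : ∀ f ∈ monics p n, 0 ≤ (if Edge A b n f then (vM f : ℝ) else 0)
        - (if Good f then (vM f : ℝ) * W (cls b f) else 0) ∧
        (if Edge A b n f then (vM f : ℝ) else 0)
        - (if Good f then (vM f : ℝ) * W (cls b f) else 0) ≤ if Good f then 0 else (vM f : ℝ) := by
      intro f hf
      by_cases hg : Good f
      · rw [if_pos hg, if_pos hg, hWf f hf hg]
        simp
      · rw [if_neg hg, if_neg hg]
        split_ifs <;> simp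
    rw [hS1, ← Finset.sum_sub_distrib, abs_of_nonneg (Finset.sum_nonneg fun f hf => (h1 f hf).1)]
    exact (Finset.sum_le_sum fun f hf => (h1 f hf).2).trans hQn
  have hmain : (p:ℝ) / (p - 1) * (if (0 : ZMod p) ∈ A then 1 - 1 / (A.card : ℝ) else 1)
        * ((A.card : ℝ) ^ (2 * b + 1) * (p:ℝ) ^ (n - (2 * b + 1))) = (p:ℝ) ^ n * GE / G1 := by
    rw [mul_assoc, ← hGE, hG1]
    field_simp
  clear_value P Q GE G1 S1 err
  have hR : |P * GE / G1 - (p:ℝ) ^ n * GE / G1| ≤ n := by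
    have h1 : P * GE / G1 - (p:ℝ) ^ n * GE / G1 = - (Q * (GE / G1)) := by
      rw [hPQ]; field_simp; ring
    have h2 : GE / G1 ≤ 1 := (div_le_one hG1pos).2 hGE1
    have h3 : 0 ≤ GE / G1 := div_nonneg hGE0 hG1pos.le
    rw [h1, abs_neg, abs_of_nonneg (mul_nonneg hQ0 h3)]
    exact (mul_le_of_le_one_right hQ0 h2).trans hQn
  rw [hmain]
  have key2 := key.trans (mul_le_mul_of_nonneg_right hWsum herr0)
  rw [abs_le] at key2 hS hR ⊢
  constructor <;> linarith [key2.1, key2.2, hS.1, hS.2, hR.1, hR.2]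

/-! ### The circle method -/

/-- The Fourier coefficient of the indicator function of `A` at `-y`. -/
def hat (A : Finset (ZMod p)) (y : ZMod p) : ℂ := ∑ a ∈ A, ψ p (-a * y)

lemma sum_hat (A : Finset (ZMod p)) (x : ZMod p) :
    ∑ y, hat A y * ψ p (x * y) = if x ∈ A then (p : ℂ) else 0 := by
  unfold hat
  simp only [Finset.sum_mul]
  rw [Finset.sum_comm]
  have : ∀ a, ∑ y, ψ p (-a * y) * ψ p (x * y) = if a = x then (p:ℂ) else 0 := by
    intro a
    have h := sum_ψ_mul (x - a)
    simp only [sub_eq_zero] at h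
    simp only [eq_comm (a := a)]
    rw [← h]
    refine Finset.sum_congr rfl fun y _ => ?_
    rw [← AddChar.map_add_eq_mul]
    congr 1; ring
  simp only [this]
  simp

lemma hat_univ (y : ZMod p) : hat Finset.univ y = if y = 0 then (p : ℂ) else 0 := by
  unfold hat
  rw [← sum_ψ_mul y]
  exact Fintype.sum_equiv (Equiv.neg _) _ _ fun x => by simp

lemma hat_zero (A : Finset (ZMod p)) : hat A 0 = A.card := by simp [hat]

lemma norm_hat_le (A : Finset (ZMod p)) (y : ZMod p) : ‖hat A y‖ ≤ A.card := by
  unfold hat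
  refine (norm_sum_le _ _).trans ?_
  simp

lemma E_mon {n : ℕ} (ξ c : Fin n → ZMod p) : E (ext ξ) (mon c) = ψ p (∑ i, c i * ξ i) := by
  unfold E mon
  rw [act_add, Pi.add_apply, act_X_pow, act_low]
  simp [ext]

/-- The exponential sum over prime powers with frequency `ξ`. -/
def Lhat {n : ℕ} (ξ : Fin n → ZMod p) : ℂ := ev (E (ext ξ)) (dpart (fun f => (vM f : ℂ)) n)

/-- Fourier inversion for the count of prime powers with coefficients in given sets. -/
lemma circle {n : ℕ} (t : ℕ → Finset (ZMod p)) :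
    (p:ℂ) ^ n * ∑ f ∈ monics p n, (if ∀ i < n, f.coeff i ∈ t i then (vM f : ℂ) else 0)
      = ∑ ξ : Fin n → ZMod p, (∏ i : Fin n, hat (t i) (ξ i)) * Lhat ξ := by
  simp only [Lhat, ev_dpart, Finset.mul_sum]
  rw [Finset.sum_comm]
  simp only [sum_monics]
  refine Finset.sum_congr rfl fun c _ => ?_
  have h1 : (∀ i < n, (mon c).coeff i ∈ t i) ↔ ∀ i : Fin n, c i ∈ t i := by
    refine ⟨fun h i => ?_, fun h i hi => ?_⟩
    · have := h i i.2
      rwa [mon_coeff c i.2] at this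
    · rw [mon_coeff c hi]; exact h ⟨i, hi⟩
  have h2 : ∑ ξ : Fin n → ZMod p, (∏ i : Fin n, hat (t i) (ξ i)) * E (ext ξ) (mon c)
      = if ∀ i : Fin n, c i ∈ t i then (p:ℂ) ^ n else 0 := by
    have h3 := Finset.prod_univ_sum (fun _ : Fin n => (Finset.univ : Finset (ZMod p)))
      (fun i y => hat (t i) y * ψ p (c i * y))
    rw [Fintype.piFinset_univ] at h3
    simp only [E_mon, ψ_sum, ← Finset.prod_mul_distrib]
    rw [← h3]
    simp only [sum_hat]
    by_cases h : ∀ i : Fin n, c i ∈ t i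
    · simp [h]
    · rw [if_neg h]
      push Not at h
      obtain ⟨i, hi⟩ := h
      exact Finset.prod_eq_zero (Finset.mem_univ i) (by simp [hi])
  simp only [h1]
  calc _ = (vM (mon c) : ℂ) * ∑ ξ : Fin n → ZMod p, (∏ i : Fin n, hat (t i) (ξ i)) *
        E (ext ξ) (mon c) := by
        rw [h2]; split_ifs <;> ring
    _ = _ := by
        rw [Finset.mul_sum]
        exact Finset.sum_congr rfl fun ξ _ => by ring

/-- The frequencies supported on the `b + 1` lowest and the `b` highest positions. -/
def major (b n : ℕ) : Finset (Fin n → ZMod p) :=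
  Finset.univ.filter fun ξ => ∀ j : Fin n, b < (j:ℕ) → (j:ℕ) + b < n → ξ j = 0

/-- The major frequencies reproduce the count with prescribed lowest and highest coefficients,
scaled by the density of `A` in the remaining positions. -/
lemma circle_major {A : Finset (ZMod p)} {b n : ℕ} (hn : 2 * b + 1 ≤ n) :
    (p:ℂ) ^ n * (((A.card : ℂ) / p) ^ (n - (2 * b + 1)) *
      ∑ f ∈ monics p n, (if Edge A b n f then (vM f : ℂ) else 0))
      = ∑ ξ ∈ major b n, (∏ i : Fin n, hat A (ξ i)) * Lhat ξ := by
  have hp0 : (p:ℂ) ≠ 0 := by exact_mod_cast (Fact.out : p.Prime).ne_zero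
  have h := circle (p := p) (n := n) (fun i => if i ≤ b ∨ n ≤ i + b then A else Finset.univ)
  have h1 : ∀ f : (ZMod p)[X], (∀ i < n, f.coeff i ∈
      if i ≤ b ∨ n ≤ i + b then A else Finset.univ) ↔ Edge A b n f := by
    intro f
    refine forall_congr' fun i => forall_congr' fun _ => ?_
    split_ifs with h <;> simp [h]
  simp only [h1] at h
  rw [mul_left_comm, h, Finset.mul_sum]
  unfold major
  rw [Finset.sum_filter]
  refine Finset.sum_congr rfl fun ξ _ => ?_
  split_ifs with hξ
  · rw [← mul_assoc]
    congr 1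
    have h3 : ((A.card : ℂ) / p) ^ (n - (2 * b + 1))
        = ∏ i : Fin n, if (i:ℕ) ≤ b ∨ n ≤ i + b then (1:ℂ) else (A.card : ℂ) / p := by
      rw [← Finset.prod_range (fun i => if i ≤ b ∨ n ≤ i + b then (1:ℂ) else (A.card : ℂ) / p),
        Finset.prod_ite, Finset.prod_const_one, one_mul, Finset.prod_const]
      congr 1
      have : (Finset.range n).filter (fun i => ¬ (i ≤ b ∨ n ≤ i + b)) = Finset.Ioo b (n - b) := by
        ext i; simp only [Finset.mem_filter, Finset.mem_range, Finset.mem_Ioo]; omega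
      rw [this, Nat.card_Ioo]
      omega
    rw [h3, ← Finset.prod_mul_distrib]
    refine Finset.prod_congr rfl fun i _ => ?_
    split_ifs with hi
    · rw [one_mul]
    · rw [hξ i (by omega) (by omega), hat_univ, if_pos rfl, hat_zero]
      field_simp
  · push Not at hξ
    obtain ⟨j, hj1, hj2, hj3⟩ := hξ
    rw [Finset.prod_eq_zero (Finset.mem_univ j), zero_mul, mul_zero]
    rw [if_neg (by omega), hat_univ, if_neg hj3]

/-- The difference between the full count and its major part is controlled by the minor
frequencies. -/
lemma circle_minor {A : Finset (ZMod p)} (hA : 0 < A.card) {b n : ℕ} (hn : 2 * b + 1 ≤ n) :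
    (p:ℝ) ^ n * |∑ f ∈ monics p n, (if ∀ i < n, f.coeff i ∈ A then (vM f : ℝ) else 0) -
      ((A.card : ℝ) / p) ^ (n - (2 * b + 1)) *
        ∑ f ∈ monics p n, (if Edge A b n f then (vM f : ℝ) else 0)|
      ≤ (A.card : ℝ) ^ n * ∑ ξ ∈ (major b n)ᶜ,
        (∏ i : Fin n, (‖hat A (ξ i)‖ / A.card)) * ‖Lhat ξ‖ := by
  have hA' : (0:ℝ) < A.card := by exact_mod_cast hA
  have h1 := circle (p := p) (n := n) (fun _ => A)
  have h2 := circle_major (A := A) hn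
  rw [← Finset.sum_add_sum_compl (major b n), ← h2] at h1
  set T := ∑ f ∈ monics p n, (if ∀ i < n, f.coeff i ∈ A then (vM f : ℝ) else 0) with hT
  set M := ∑ f ∈ monics p n, (if Edge A b n f then (vM f : ℝ) else 0) with hM
  have h3 : (((p:ℝ) ^ n * (T - ((A.card : ℝ) / p) ^ (n - (2 * b + 1)) * M) : ℝ) : ℂ)
      = ∑ ξ ∈ (major b n)ᶜ, (∏ i : Fin n, hat A (ξ i)) * Lhat ξ := by
    rw [← sub_eq_iff_eq_add'] at h1
    rw [← h1, hT, hM]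
    push_cast [apply_ite]
    ring
  have h4 : (p:ℝ) ^ n * |T - ((A.card : ℝ) / p) ^ (n - (2 * b + 1)) * M|
      = ‖∑ ξ ∈ (major b n)ᶜ, (∏ i : Fin n, hat A (ξ i)) * Lhat ξ‖ := by
    rw [← h3, Complex.norm_real, Real.norm_eq_abs, abs_mul, abs_of_nonneg (a := (p:ℝ) ^ n)
      (by positivity)]
  rw [h4, Finset.mul_sum]
  refine (norm_sum_le _ _).trans (le_of_eq (Finset.sum_congr rfl fun ξ _ => ?_))
  rw [norm_mul, norm_prod, Finset.prod_div_distrib, Finset.prod_const, Finset.card_univ,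
    Fintype.card_fin]
  field_simp

/-- The minor frequencies, split according to the rank. -/
lemma minor_bound {n R K : ℕ} (hn : 2 * R + 3 ≤ n) (hn6 : 6 ≤ n) (hK : K * R + 1 ≤ n)
    {f : ZMod p → ℝ} (hf0 : ∀ a, 0 ≤ f a) (hf1 : ∀ a, f a ≤ 1) (hf : 1 ≤ ∑ a, f a) {ρ : ℝ}
    (hρ0 : 0 ≤ ρ) (hρ : ∀ a, a ≠ 0 → f a ≤ ρ) {G d : ℝ} (hG4 : G ^ 4 = p)
    (hG : 1 ≤ G) (hd : 1 ≤ d) (hL : (∑ a, f a) * d ^ 2 ≤ G) :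
    ∑ ξ ∈ (major (R + 1) n)ᶜ, (∏ i : Fin n, f (ξ i)) * ‖Lhat ξ‖
      ≤ (R + 1) ^ 2 * (p : ℝ) ^ (2 * R + 1) * (ρ ^ K * (n * (p : ℝ) ^ n))
        + n * (3 * n ^ 2 * (n + 1) * p * (p : ℝ) ^ n / (d ^ 2) ^ R)
        + 15 * 2 ^ (n + 8) * ((n * 2 ^ n) ^ 8 * (2 * p * ((p : ℝ) ^ n / d ^ n))) := by
  set Ξ : Finset (Fin n → ZMod p) := (major (R + 1) n)ᶜ with hΞ
  have hs : ∀ ξ ∈ Ξ, ∃ j : Fin n, R + 1 < (j:ℕ) ∧ (j:ℕ) + (R + 1) < n ∧ ξ j ≠ 0 := by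
    intro ξ hξ
    simp only [hΞ, major, Finset.mem_compl, Finset.mem_filter, Finset.mem_univ, true_and] at hξ
    push Not at hξ
    exact hξ
  rw [← Finset.sum_filter_add_sum_filter_not Ξ (fun ξ => rk n (ext ξ) ≤ R),
    ← Finset.sum_filter_add_sum_filter_not (Ξ.filter fun ξ => ¬ rk n (ext ξ) ≤ R)
      (fun ξ => 5 * rk n (ext ξ) ≤ 2 * n), add_assoc]
  refine add_le_add ?_ (add_le_add ?_ ?_)
  · refine smallRank_bound (by omega) hK hf0 hf1 hρ0 hρ _ fun ξ hξ => ?_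
    obtain ⟨h1, h2⟩ := Finset.mem_filter.1 hξ
    obtain ⟨j, hj1, hj2, hj3⟩ := hs ξ h1
    exact ⟨h2, j, by omega, by omega, by rwa [ext_val]⟩
  · refine mediumRank_bound hn6 hf0 hf1 hf hG4 hG (one_le_pow₀ hd) hL _ fun ξ hξ => ?_
    simp only [Finset.mem_filter] at hξ
    exact ⟨by omega, hξ.2⟩
  · refine largeRank_bound (by omega) hf0 hf1 hf hG4 hG hd hL _ fun ξ hξ => ?_
    simp only [Finset.mem_filter] at hξ
    omega

/-! ### Fourier coefficients of intervals -/

/-- The interval of `m` consecutive residues starting at `a`. -/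
def iv (a : ZMod p) (m : ℕ) : Finset (ZMod p) :=
  (Finset.range m).image fun k : ℕ => a + (k : ZMod p)

lemma iv_injOn {a : ZMod p} {m : ℕ} (hm : m ≤ p) :
    Set.InjOn (fun k : ℕ => a + (k : ZMod p)) (Finset.range m) := by
  intro i hi j hj h
  have hi' : i < m := by simpa using hi
  have hj' : j < m := by simpa using hj
  have h1 : (i : ZMod p) = j := add_left_cancel h
  have h2 := congrArg ZMod.val h1
  rwa [ZMod.val_natCast_of_lt (by omega), ZMod.val_natCast_of_lt (by omega)] at h2

lemma card_iv {a : ZMod p} {m : ℕ} (hm : m ≤ p) : (iv a m).card = m := by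
  unfold iv
  rw [Finset.card_image_of_injOn (iv_injOn hm), Finset.card_range]

lemma iv_compl {a : ZMod p} {s : ℕ} (hs : s ≤ p) : (iv a s)ᶜ = iv (a + (s : ZMod p)) (p - s) := by
  symm
  refine Finset.eq_of_subset_of_card_le (fun x hx => ?_) ?_
  · rw [Finset.mem_compl]
    intro hx'
    unfold iv at hx hx'
    rw [Finset.mem_image] at hx hx'
    obtain ⟨k, hk, rfl⟩ := hx
    obtain ⟨l, hl, h⟩ := hx'
    rw [Finset.mem_range] at hk hl
    rw [add_assoc, ← Nat.cast_add] at h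
    have h1 : (l : ZMod p) = ((s + k : ℕ) : ZMod p) := add_left_cancel h
    have h2 := congrArg ZMod.val h1
    rw [ZMod.val_natCast_of_lt (by omega), ZMod.val_natCast_of_lt (by omega)] at h2
    omega
  · rw [Finset.card_compl, card_iv hs, card_iv (by omega), ZMod.card]

/-- The modulus of the Fourier coefficient at `-y` of an interval of length `m`. -/
def gs (m : ℕ) (y : ZMod p) : ℝ := ‖∑ k ∈ Finset.range m, ψ p y ^ k‖

lemma norm_hat_iv {a : ZMod p} {m : ℕ} (hm : m ≤ p) (y : ZMod p) :
    ‖hat (iv a m) y‖ = gs m (-y) := by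
  unfold hat iv gs
  rw [Finset.sum_image (iv_injOn hm)]
  have : ∀ k ∈ Finset.range m, ψ p (-(a + (k:ZMod p)) * y) = ψ p (-a * y) * ψ p (-y) ^ k := by
    intro k _
    rw [← AddChar.map_nsmul_eq_pow, ← AddChar.map_add_eq_mul]
    congr 1
    simp only [nsmul_eq_mul]
    ring
  rw [Finset.sum_congr rfl this, ← Finset.mul_sum, norm_mul, norm_ψ, one_mul]

lemma ψ_ne_one {y : ZMod p} (hy : y ≠ 0) : ψ p y ≠ 1 := by
  intro h
  apply hy
  apply ZMod.injective_stdAddChar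
  simpa using h

/-- A nontrivial Fourier coefficient of an interval of length at least two is not maximal. -/
lemma gs_lt {m : ℕ} (hm : 2 ≤ m) {y : ZMod p} (hy : y ≠ 0) : gs m y < m := by
  obtain ⟨l, rfl⟩ := Nat.exists_eq_add_of_le hm
  unfold gs
  set z := ψ p y with hz
  have hz1 : ‖z‖ = 1 := norm_ψ _
  have h2 : ‖1 + z‖ < 2 := by
    refine lt_of_le_of_ne ((norm_add_le _ _).trans (by simp [hz1]; norm_num)) fun h => ?_
    apply ψ_ne_one hy
    rw [← hz]
    have h3 : Complex.normSq (1 + z) = 4 := by rw [Complex.normSq_eq_norm_sq, h]; norm_num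
    have h4 : Complex.normSq z = 1 := by rw [Complex.normSq_eq_norm_sq, hz1]; norm_num
    rw [Complex.normSq_apply] at h3 h4
    simp only [Complex.add_re, Complex.one_re, Complex.add_im, Complex.one_im, zero_add] at h3
    have h5 : z.re = 1 := by nlinarith
    have h6 : z.im = 0 := by rw [h5] at h4; nlinarith
    exact Complex.ext (by simpa using h5) (by simpa using h6)
  rw [Finset.sum_range_add, Finset.sum_range_succ, Finset.sum_range_one, pow_zero, pow_one]
  have h7 : ‖∑ x ∈ Finset.range l, z ^ (2 + x)‖ ≤ l := by
    refine (norm_sum_le _ _).trans ?_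
    simp [hz1]
  push_cast
  exact (norm_add_le _ _).trans_lt (by linarith)

lemma two_mul_min_le_sin {v : ℕ} (hvp : v < p) :
    2 * (min v (p - v) : ℕ) / (p:ℝ) ≤ Real.sin (Real.pi * v / p) := by
  have hp : (0:ℝ) < p := by exact_mod_cast (Fact.out : p.Prime).pos
  have hpi := Real.pi_pos
  have key : ∀ w : ℕ, 2 * w ≤ p → 2 * (w:ℝ) / p ≤ Real.sin (Real.pi * w / p) := by
    intro w hw
    have hw' : 2 * (w:ℝ) ≤ p := by exact_mod_cast hw
    have := Real.mul_le_sin (x := Real.pi * w / p) (by positivity) (by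
      rw [div_le_div_iff₀ hp two_pos]; nlinarith)
    refine le_trans (le_of_eq ?_) this
    field_simp
  rcases le_total (2 * v) p with h | h
  · rw [min_eq_left (by omega)]; exact key v h
  · rw [min_eq_right (by omega)]
    have h1 := key (p - v) (by omega)
    rw [Nat.cast_sub hvp.le] at h1 ⊢
    have h2 : Real.pi * ((p:ℝ) - v) / p = Real.pi - Real.pi * v / p := by field_simp
    rwa [h2, Real.sin_pi_sub] at h1

lemma gs_le {m : ℕ} {y : ZMod p} (hy : y ≠ 0) :
    gs m y ≤ (p:ℝ) / 2 * (1 / (y.val : ℝ) + 1 / ((p - y.val : ℕ) : ℝ)) := by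
  have hp : (0:ℝ) < p := by exact_mod_cast (Fact.out : p.Prime).pos
  have hv : 0 < y.val := Nat.pos_of_ne_zero (by rwa [Ne, ZMod.val_eq_zero])
  have hvp : y.val < p := ZMod.val_lt y
  set v := y.val with hvdef
  set z := ψ p y with hz
  have hz1 : ‖z‖ = 1 := norm_ψ _
  have hne : z - 1 ≠ 0 := sub_ne_zero.2 (ψ_ne_one hy)
  have h1 : ‖z - 1‖ = 2 * Real.sin (Real.pi * v / p) := by
    have h2 : z = Complex.exp (Complex.I * ((2 * Real.pi * v / p : ℝ) : ℂ)) := by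
      rw [hz, ZMod.stdAddChar_apply, ZMod.toCircle_apply, ← hvdef]
      congr 1
      push_cast
      ring
    rw [h2, Complex.norm_exp_I_mul_ofReal_sub_one, Real.norm_eq_abs, abs_mul, abs_two,
      show 2 * Real.pi * (v:ℝ) / p / 2 = Real.pi * v / p by ring, abs_of_nonneg]
    exact le_trans (by positivity) (two_mul_min_le_sin hvp)
  have h3 := two_mul_min_le_sin (p := p) hvp
  set w := min v (p - v) with hw
  have hw0 : 0 < w := by omega
  have hw0' : (0:ℝ) < w := by exact_mod_cast hw0
  have h4 : gs m y ≤ p / (2 * w) := by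
    unfold gs
    rw [← hz]
    have h5 := geom_sum_mul z m
    have h6 : ‖∑ k ∈ Finset.range m, z ^ k‖ * ‖z - 1‖ ≤ 2 := by
      rw [← norm_mul, h5]
      refine (norm_sub_le _ _).trans ?_
      rw [norm_pow, hz1]; norm_num
    have h7 : 4 * w / p ≤ ‖z - 1‖ := by
      rw [h1]
      calc 4 * (w:ℝ) / p = 2 * (2 * w / p) := by ring
        _ ≤ _ := by linarith
    have h8 : ‖∑ k ∈ Finset.range m, z ^ k‖ * (4 * w / p) ≤ 2 :=
      (mul_le_mul_of_nonneg_left h7 (norm_nonneg _)).trans h6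
    rw [← le_div_iff₀ (by positivity)] at h8
    refine h8.trans (le_of_eq ?_)
    field_simp
    norm_num
  refine h4.trans ?_
  have h9 : 1 / (w:ℝ) ≤ 1 / (v:ℝ) + 1 / ((p - v : ℕ) : ℝ) := by
    rcases min_choice v (p - v) with h | h
    · rw [hw, h]; linarith [show (0:ℝ) ≤ 1 / ((p - v : ℕ) : ℝ) by positivity]
    · rw [hw, h]; linarith [show (0:ℝ) ≤ 1 / (v : ℝ) by positivity]
  calc (p:ℝ) / (2 * w) = p / 2 * (1 / w) := by field_simp
    _ ≤ _ := mul_le_mul_of_nonneg_left h9 (by positivity)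

/-- The `L¹` bound for the Fourier transform of an interval. -/
lemma sum_gs_le (m : ℕ) : ∑ y : ZMod p, gs m y ≤ m + p * (1 + Real.log p) := by
  have hp : (0:ℝ) < p := by exact_mod_cast (Fact.out : p.Prime).pos
  have hp2 := (Fact.out : p.Prime).two_le
  set H : ℕ → ℝ := fun v => (p:ℝ) / 2 * (1 / (v : ℝ) + 1 / ((p - v : ℕ) : ℝ)) with hH
  have h0 : gs m (0 : ZMod p) ≤ m := by
    unfold gs
    refine (norm_sum_le _ _).trans ?_
    simp
  have h1 : ∑ y : ZMod p, gs m y ≤ m + ∑ y ∈ Finset.univ.erase (0 : ZMod p), H y.val := by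
    rw [← Finset.add_sum_erase _ _ (Finset.mem_univ (0 : ZMod p))]
    exact add_le_add h0 (Finset.sum_le_sum fun y hy => gs_le (Finset.ne_of_mem_erase hy))
  have h2 : ∑ y ∈ Finset.univ.erase (0 : ZMod p), H y.val
      = ∑ v ∈ Finset.range (p - 1), H (v + 1) := by
    refine Finset.sum_bij' (fun y _ => y.val - 1) (fun v _ => ((v + 1 : ℕ) : ZMod p)) ?_ ?_ ?_ ?_ ?_
    · intro y hy
      have := ZMod.val_lt y
      rw [Finset.mem_range]; omega
    · intro v hv
      rw [Finset.mem_range] at hv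
      rw [Finset.mem_erase]
      refine ⟨fun h => ?_, Finset.mem_univ _⟩
      have := congrArg ZMod.val h
      rw [ZMod.val_natCast_of_lt (by omega), ZMod.val_zero] at this
      omega
    · intro y hy
      have h : 0 < y.val := Nat.pos_of_ne_zero (by
        rw [Ne, ZMod.val_eq_zero]; exact Finset.ne_of_mem_erase hy)
      rw [Nat.sub_add_cancel h, ZMod.natCast_zmod_val]
    · intro v hv
      rw [Finset.mem_range] at hv
      rw [ZMod.val_natCast_of_lt (by omega)]; omega
    · intro y hy
      have h : 0 < y.val := Nat.pos_of_ne_zero (by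
        rw [Ne, ZMod.val_eq_zero]; exact Finset.ne_of_mem_erase hy)
      rw [Nat.sub_add_cancel h]
  have h3 : ∑ v ∈ Finset.range (p - 1), 1 / ((v + 1 : ℕ) : ℝ) ≤ 1 + Real.log p := by
    have h4 := harmonic_le_one_add_log (p - 1)
    have h5 : ((harmonic (p - 1) : ℚ) : ℝ) = ∑ v ∈ Finset.range (p - 1), 1 / ((v + 1 : ℕ) : ℝ) := by
      unfold harmonic
      push_cast
      simp
    rw [← h5]
    refine h4.trans (by
      have : Real.log ((p - 1 : ℕ) : ℝ) ≤ Real.log p :=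
        Real.log_le_log (by exact_mod_cast (by omega : 0 < p - 1)) (by exact_mod_cast (by omega))
      linarith)
  have h4 : ∑ v ∈ Finset.range (p - 1), 1 / ((p - (v + 1) : ℕ) : ℝ)
      = ∑ v ∈ Finset.range (p - 1), 1 / ((v + 1 : ℕ) : ℝ) := by
    rw [← Finset.sum_range_reflect]
    refine Finset.sum_congr rfl fun v hv => ?_
    rw [Finset.mem_range] at hv
    congr 2
    omega
  rw [h2] at h1
  simp only [hH, ← Finset.mul_sum, Finset.sum_add_distrib, h4] at h1
  nlinarith

/-! ### From prime powers to irreducible polynomials -/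

lemma vM_irreducible {f : (ZMod p)[X]} (hf : f.Monic) (hi : Irreducible f) : vM f = f.natDegree := by
  have := vM_pow hf hi (k := 1) one_ne_zero
  rwa [pow_one] at this

/-- Proper prime powers contribute negligibly. -/
lemma prime_count {n : ℕ} (hn : 0 < n) (A : Finset (ZMod p)) :
    |∑ f ∈ monics p n, (if ∀ i < n, f.coeff i ∈ A then (vM f : ℝ) else 0) -
      n * (((monics p n).filter fun f => (∀ i < n, f.coeff i ∈ A) ∧ Irreducible f).card : ℝ)|
      ≤ n * ((n + 1) ^ 2 * (p:ℝ) ^ (n / 2)) := by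
  have hp1 : 1 ≤ p := (Fact.out : p.Prime).one_le
  set T : Finset (ZMod p)[X] := (Finset.range (n + 1)).biUnion fun k =>
    (Finset.range (n / 2 + 1)).biUnion fun j => (monics p j).image (· ^ k) with hT
  have hTcard : (T.card : ℝ) ≤ (n + 1) ^ 2 * (p:ℝ) ^ (n / 2) := by
    have h1 : T.card ≤ (n + 1) * ((n + 1) * p ^ (n / 2)) := by
      refine Finset.card_biUnion_le.trans ?_
      refine (Finset.sum_le_card_nsmul _ _ ((n + 1) * p ^ (n / 2)) fun k _ => ?_).trans (by simp)
      refine Finset.card_biUnion_le.trans ?_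
      refine (Finset.sum_le_card_nsmul _ _ (p ^ (n / 2)) fun j hj => ?_).trans ?_
      · refine Finset.card_image_le.trans ?_
        rw [card_monics]
        rw [Finset.mem_range] at hj
        exact Nat.pow_le_pow_right hp1 (by omega)
      · rw [Finset.card_range, smul_eq_mul]
        exact Nat.mul_le_mul_right _ (by omega)
    calc (T.card : ℝ) ≤ ((n + 1) * ((n + 1) * p ^ (n / 2)) : ℕ) := by exact_mod_cast h1
      _ = _ := by push_cast; ring
  rw [Finset.card_filter]
  push_cast
  rw [Finset.mul_sum, ← Finset.sum_sub_distrib]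
  refine (Finset.abs_sum_le_sum_abs _ _).trans ?_
  have h1 : ∀ f ∈ monics p n, |(if ∀ i < n, f.coeff i ∈ A then (vM f : ℝ) else 0) -
      n * (if (∀ i < n, f.coeff i ∈ A) ∧ Irreducible f then (1:ℝ) else 0)|
      ≤ if f ∈ T then (n:ℝ) else 0 := by
    intro f hf
    obtain ⟨hm, hd⟩ := mem_monics.1 hf
    by_cases hA : ∀ i < n, f.coeff i ∈ A
    · by_cases hi : Irreducible f
      · rw [if_pos hA, if_pos ⟨hA, hi⟩, vM_irreducible hm hi, hd, mul_one, sub_self, abs_zero]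
        split_ifs <;> positivity
      · rw [if_pos hA, if_neg (fun h => hi h.2), mul_zero, sub_zero, Nat.abs_cast]
        by_cases hc : (nf f).toFinset.card = 1
        · have hfT : f ∈ T := by
            obtain ⟨P, k, hP, hPi, hk, rfl⟩ := vM_eq hm hc
            rw [natDegree_pow] at hd
            have hk1 : k ≠ 1 := by
              rintro rfl
              exact hi (by rwa [pow_one])
            have hdeg : 0 < P.natDegree := hPi.natDegree_pos
            simp only [hT, Finset.mem_biUnion, Finset.mem_range, Finset.mem_image]
            refine ⟨k, ?_, P.natDegree, ?_, P, mem_monics.2 ⟨hP, rfl⟩, rfl⟩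
            · have : k * 1 ≤ k * P.natDegree := Nat.mul_le_mul_left _ hdeg
              omega
            · have : 2 * P.natDegree ≤ k * P.natDegree := Nat.mul_le_mul_right _ (by omega)
              omega
          rw [if_pos hfT]
          have := vM_le hm
          rw [hd] at this
          exact_mod_cast this
        · rw [vM, if_neg hc, Nat.cast_zero]
          split_ifs <;> positivity
    · rw [if_neg hA, if_neg (fun h => hA h.1), mul_zero, sub_zero, abs_zero]
      split_ifs <;> positivity
  refine (Finset.sum_le_sum h1).trans ?_
  rw [← Finset.sum_filter, Finset.sum_const, nsmul_eq_mul, mul_comm]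
  refine mul_le_mul_of_nonneg_left (le_trans ?_ hTcard) (by positivity)
  exact_mod_cast Finset.card_le_card fun f hf => (Finset.mem_filter.1 hf).2

/-! ### The error term for one degree -/

/-- The relative error of the circle method: the frequencies of small, medium and large rank, the
distribution of prime powers in classes of prescribed edge coefficients (two terms), and the proper
prime powers. -/
def err (P ρ d G : ℝ) (R K n : ℕ) : ℝ :=
  (R + 1) ^ 2 * P ^ (2 * R + 1) * (ρ ^ K * n)
    + n * (3 * n ^ 2 * (n + 1) * P / (d ^ 2) ^ R)
    + 15 * 2 ^ (n + 8) * ((n * 2 ^ n) ^ 8 * (2 * P / d ^ n))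
    + (P ^ (2 * R + 3) * P ^ (2 * R + 3) * ((2 * R + 3 : ℕ) *
        (1 - 1 / (125 * ((2 * R + 3 : ℕ) : ℝ))) ^ n) + 2 * n * P ^ (2 * R + 3) / P ^ n)
    + n * (n + 1) ^ 2 / G ^ n

/-- The number of irreducible polynomials of degree `n` with coefficients in `A`, with relative error
`err`, for any `A` with small Fourier coefficients. -/
lemma count_bound (hp : p ≠ 2) {A : Finset (ZMod p)} (hA : 0 < A.card) {n R K : ℕ}
    (hn : 2 * R + 3 ≤ n) (hn6 : 6 ≤ n) (hK : K * R + 1 ≤ n) {ρ : ℝ}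
    (hρ0 : 0 ≤ ρ) (hρ : ∀ y, y ≠ 0 → ‖hat A y‖ / A.card ≤ ρ) {G d : ℝ} (hG4 : G ^ 4 = p)
    (hG : 1 ≤ G) (hGA : G ^ 3 ≤ A.card) (hd : 1 ≤ d)
    (hL : (∑ y, ‖hat A y‖ / A.card) * d ^ 2 ≤ G) :
    |n * (((monics p n).filter fun f => (∀ i < n, f.coeff i ∈ A) ∧ Irreducible f).card : ℝ)
      - (p:ℝ) / (p - 1) * (if (0 : ZMod p) ∈ A then 1 - 1 / (A.card : ℝ) else 1)
        * (A.card : ℝ) ^ n| ≤ (A.card : ℝ) ^ n * err p ρ d G R K n := by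
  have hm1 : (1:ℝ) ≤ A.card := by exact_mod_cast hA
  have hp0 : (0:ℝ) < p := by exact_mod_cast (Fact.out : p.Prime).pos
  have hp1 : (1:ℝ) ≤ p := by exact_mod_cast (Fact.out : p.Prime).one_le
  have hB : 2 * (R + 1) + 1 = 2 * R + 3 := by ring
  have h1 := circle_minor hA (b := R + 1) (n := n) (by omega)
  have h2 := minor_bound (p := p) hn hn6 hK (f := fun y => ‖hat A y‖ / A.card)
    (fun a => by positivity) (fun a => div_le_one_of_le₀ (norm_hat_le A a) (by positivity))
    (by
      have := Finset.single_le_sum (f := fun y : ZMod p => ‖hat A y‖ / (A.card:ℝ))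
        (fun a _ => by positivity) (Finset.mem_univ 0)
      simp only [hat_zero, Complex.norm_natCast] at this
      rwa [div_self (by positivity)] at this)
    hρ0 hρ hG4 hG hd hL
  have h3 := edge_asymptotic hp hA (b := R + 1) (n := n) (by omega)
  have h4 := prime_count (by omega : 0 < n) A
  rw [hB] at h1 h3
  set S := ∑ f ∈ monics p n, (if ∀ i < n, f.coeff i ∈ A then (vM f : ℝ) else 0) with hS
  set Ed := ∑ f ∈ monics p n, (if Edge A (R + 1) n f then (vM f : ℝ) else 0) with hEd
  set N : ℝ := (((monics p n).filter fun f => (∀ i < n, f.coeff i ∈ A) ∧ Irreducible f).card : ℝ)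
    with hN
  set Q : ℝ := (p:ℝ) / (p - 1) * (if (0 : ZMod p) ∈ A then 1 - 1 / (A.card : ℝ) else 1) with hQ
  set m : ℝ := (A.card : ℝ) with hm
  set Mi := ∑ ξ ∈ (major (R + 1) n)ᶜ, (∏ i : Fin n, ‖hat A (ξ i)‖ / m) * ‖Lhat ξ‖ with hMi
  clear_value S Ed N Q Mi m
  obtain ⟨k, rfl⟩ := Nat.exists_eq_add_of_le hn
  rw [Nat.add_sub_cancel_left] at h1 h3
  set n := 2 * R + 3 + k with hnn
  set B := 2 * R + 3 with hBB
  set X := (1 - 1 / (125 * (B : ℝ))) ^ n with hX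
  have hX0 : 0 ≤ X := by
    refine pow_nonneg ?_ _
    have : (1:ℝ) ≤ B := by exact_mod_cast (by omega : 1 ≤ B)
    rw [sub_nonneg, div_le_one (by positivity)]
    linarith
  have hmn : m ^ n = m ^ B * m ^ k := by rw [hnn, pow_add]
  have hpn : (p:ℝ) ^ n = (p:ℝ) ^ B * (p:ℝ) ^ k := by rw [hnn, pow_add]
  -- the minor frequencies
  have e1 : |S - (m / p) ^ k * Ed| ≤ m ^ n * ((R + 1) ^ 2 * (p:ℝ) ^ (2 * R + 1) * (ρ ^ K * n)
    + n * (3 * n ^ 2 * (n + 1) * p / (d ^ 2) ^ R)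
    + 15 * 2 ^ (n + 8) * ((n * 2 ^ n) ^ 8 * (2 * p / d ^ n))) := by
    have h5 := h1.trans (mul_le_mul_of_nonneg_left h2 (by positivity))
    refine le_of_mul_le_mul_left (h5.trans (le_of_eq ?_)) (by positivity : (0:ℝ) < (p:ℝ) ^ n)
    field_simp
  -- the edge classes
  have e2 : |(m / p) ^ k * Ed - Q * m ^ n| ≤ m ^ n * ((p:ℝ) ^ B * (p:ℝ) ^ B * (B * X)
      + 2 * n * (p:ℝ) ^ B / (p:ℝ) ^ n) := by
    have h5 : (m / p) ^ k * Ed - Q * m ^ n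
        = (m / p) ^ k * (Ed - Q * (m ^ B * (p:ℝ) ^ k)) := by
      rw [hmn, div_pow]
      field_simp
    rw [h5, abs_mul, abs_of_nonneg (by positivity)]
    refine (mul_le_mul_of_nonneg_left h3 (by positivity)).trans ?_
    have h6 : (m / p) ^ k * ((p:ℝ) ^ B * (B * ((p:ℝ) ^ n * X)) + 2 * n)
        = m ^ k * ((p:ℝ) ^ B * (p:ℝ) ^ B * (B * X) + 2 * n * (p:ℝ) ^ B / (p:ℝ) ^ n) := by
      rw [hpn, div_pow]
      field_simp
    rw [h6]
    refine mul_le_mul_of_nonneg_right (pow_le_pow_right₀ hm1 (by omega)) (by positivity)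
  have e3 : |S - n * N| ≤ m ^ n * (n * (n + 1) ^ 2 / G ^ n) := by
    refine h4.trans ?_
    have h5 : (p:ℝ) ^ (n / 2) ≤ G ^ (2 * n) := by
      rw [← hG4, ← pow_mul]
      exact pow_le_pow_right₀ hG (by omega)
    have h6 : G ^ (2 * n) * G ^ n ≤ m ^ n := by
      rw [← pow_add, (by ring : 2 * n + n = 3 * n), pow_mul]
      exact pow_le_pow_left₀ (by positivity) hGA _
    have h7 : (p:ℝ) ^ (n / 2) ≤ m ^ n / G ^ n := by
      rw [le_div_iff₀ (by positivity)]
      exact (mul_le_mul_of_nonneg_right h5 (by positivity)).trans h6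
    calc (n:ℝ) * ((n + 1) ^ 2 * (p:ℝ) ^ (n / 2)) ≤ n * ((n + 1) ^ 2 * (m ^ n / G ^ n)) := by gcongr
      _ = _ := by ring
  have e4 : (n:ℝ) * N - Q * m ^ n = -(S - n * N) + (S - (m / p) ^ k * Ed)
      + ((m / p) ^ k * Ed - Q * m ^ n) := by ring
  rw [e4]
  refine (abs_add_three _ _ _).trans ?_
  rw [abs_neg]
  unfold err
  rw [← hBB, ← hX]
  linarith

/-! ### Size of the error term -/

open Filter Topology

/-- Upper bounds of the shape `C · exp (-c √n)` for large `n`. -/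
def RD (u : ℕ → ℝ) : Prop := ∃ c > 0, ∃ C : ℝ, ∀ᶠ n : ℕ in atTop, u n ≤ C * Real.exp (-c * √n)

lemma RD.add {u v : ℕ → ℝ} (hu : RD u) (hv : RD v) : RD fun n => u n + v n := by
  obtain ⟨c, hc, C, h⟩ := hu
  obtain ⟨c', hc', C', h'⟩ := hv
  refine ⟨min c c', lt_min hc hc', |C| + |C'|, ?_⟩
  filter_upwards [h, h'] with n h h'
  have key : ∀ c₁ C₁ : ℝ, min c c' ≤ c₁ →
      C₁ * Real.exp (-c₁ * √n) ≤ |C₁| * Real.exp (-(min c c') * √n) := by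
    intro c₁ C₁ h1
    refine mul_le_mul (le_abs_self _) (Real.exp_le_exp.2 ?_) (Real.exp_nonneg _) (abs_nonneg _)
    exact mul_le_mul_of_nonneg_right (neg_le_neg h1) (Real.sqrt_nonneg _)
  rw [add_mul]
  exact add_le_add (h.trans (key _ _ (min_le_left _ _))) (h'.trans (key _ _ (min_le_right _ _)))

lemma tendsto_sqrt_nat : Tendsto (fun n : ℕ => √(n:ℝ)) atTop atTop :=
  Real.tendsto_sqrt_atTop.comp tendsto_natCast_atTop_atTop

/-- Powers of `n` are absorbed by lowering the constant in the exponent. -/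
lemma RD.of_le {u : ℕ → ℝ} {c C : ℝ} (k : ℕ) (hc : 0 < c)
    (h : ∀ᶠ n : ℕ in atTop, u n ≤ C * (n:ℝ) ^ k * Real.exp (-c * √n)) : RD u := by
  have h1 : Tendsto (fun n : ℕ => √(n:ℝ) ^ (2 * k) * Real.exp (-(c / 2) * √n)) atTop (𝓝 0) := by
    have := (tendsto_rpow_mul_exp_neg_mul_atTop_nhds_zero (2 * k : ℕ) (c / 2) (by positivity)).comp
      tendsto_sqrt_nat
    simpa only [Function.comp_def, Real.rpow_natCast] using this
  have h2 : ∀ᶠ n : ℕ in atTop, √(n:ℝ) ^ (2 * k) * Real.exp (-(c / 2) * √n) < 1 :=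
    h1.eventually_lt_const one_pos
  refine ⟨c / 2, by positivity, |C|, ?_⟩
  filter_upwards [h, h2] with n h h2
  refine h.trans ?_
  rw [pow_mul, Real.sq_sqrt (Nat.cast_nonneg n)] at h2
  have h3 : Real.exp (-c * √n) = Real.exp (-(c / 2) * √n) * Real.exp (-(c / 2) * √n) := by
    rw [← Real.exp_add]; congr 1; ring
  calc C * (n:ℝ) ^ k * Real.exp (-c * √n)
      ≤ |C| * (n:ℝ) ^ k * Real.exp (-c * √n) := by gcongr; exact le_abs_self C
    _ = |C| * ((n:ℝ) ^ k * Real.exp (-(c / 2) * √n)) * Real.exp (-(c / 2) * √n) := by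
        rw [h3]; ring
    _ ≤ |C| * 1 * Real.exp (-(c / 2) * √n) := by gcongr
    _ = _ := by ring

set_option maxHeartbeats 2000000 in
/-- With cut-offs `R ≍ √n / M` and `K ≍ M √n` for a large constant `M`, every part of the relative
error is `exp (-c √n)`: `M` is chosen so that `ρ ^ K` and `exp (-n / (250 R))` beat the powers
`P ^ O(R)`. -/
lemma exists_err_bound {P ρ d G : ℝ} (hP : 1 < P) (hρ0 : 0 < ρ) (hρ1 : ρ < 1) (hd : 2 ^ 10 ≤ d)
    (hG : 1 < G) : ∃ R K : ℕ → ℕ,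
      (∀ᶠ n : ℕ in atTop, 2 * R n + 3 ≤ n ∧ 6 ≤ n ∧ K n * R n + 1 ≤ n) ∧
      RD fun n => err P ρ d G (R n) (K n) n := by
  set l := Real.log P with hl
  have hl0 : 0 < l := Real.log_pos hP
  have hPl : P = Real.exp l := (Real.exp_log (by linarith)).symm
  set κ := -Real.log ρ with hκ
  have hκ0 : 0 < κ := by have := Real.log_neg hρ0 hρ1; linarith
  have hρκ : ρ = Real.exp (-κ) := by rw [hκ, neg_neg, Real.exp_log hρ0]
  set g := Real.log G with hg
  have hg0 : 0 < g := Real.log_pos hG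
  have hGg : G = Real.exp g := (Real.exp_log (by linarith)).symm
  set e := Real.log d with he
  have he0 : 0 < e := Real.log_pos (by linarith)
  have hde : d = Real.exp e := (Real.exp_log (by linarith)).symm
  set M : ℝ := 625 * (4 * l + 1) + (2 * l + 1) / κ with hM
  have hM1 : 625 * (4 * l + 1) ≤ M := by
    rw [hM]
    have : 0 ≤ (2 * l + 1) / κ := by positivity
    linarith
  have hM2 : 2 * l + 1 ≤ κ * M := by
    rw [hM, mul_add, mul_div_cancel₀ _ hκ0.ne']
    have : 0 ≤ κ * (625 * (4 * l + 1)) := by positivity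
    linarith
  have hM3 : 1 ≤ M := by linarith
  clear_value l κ g e M
  subst hPl hρκ hGg hde
  set R : ℕ → ℕ := fun n => ⌊√(n:ℝ) / M⌋₊ with hR
  set K : ℕ → ℕ := fun n => ⌊M * √(n:ℝ)⌋₊ - 1 with hK
  -- elementary facts about the cut-offs, in terms of `x = √n`
  have base : ∀ᶠ n : ℕ in atTop, 6 ≤ n ∧ 4 ≤ √(n:ℝ) ∧ √(n:ℝ) ^ 2 = n ∧ 1 ≤ R n ∧
      (R n : ℝ) ≤ √(n:ℝ) / M ∧ (R n : ℝ) ≤ √(n:ℝ) ∧ √(n:ℝ) / M - 1 ≤ R n ∧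
      (K n : ℝ) + 1 ≤ M * √n ∧ M * √n - 2 ≤ K n ∧ (2 * R n + 3 : ℝ) ≤ 5 * (√n / M) := by
    filter_upwards [eventually_ge_atTop 6, tendsto_sqrt_nat.eventually_ge_atTop 4,
      tendsto_sqrt_nat.eventually_ge_atTop M] with n h6 h4 hMn
    have h1 : 1 ≤ √(n:ℝ) / M := by rw [le_div_iff₀ (by linarith)]; linarith
    have h2 : 1 ≤ M * √(n:ℝ) := by nlinarith
    have h3 : 1 ≤ ⌊M * √(n:ℝ)⌋₊ := Nat.le_floor (by simpa using h2)
    have h4' : ((K n : ℕ) : ℝ) = (⌊M * √(n:ℝ)⌋₊ : ℝ) - 1 := by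
      rw [hK]; push_cast [Nat.cast_sub h3]; ring
    have h5 := Nat.floor_le (by positivity : 0 ≤ √(n:ℝ) / M)
    have h6' := Nat.lt_floor_add_one (√(n:ℝ) / M)
    have h7 := Nat.floor_le (by positivity : 0 ≤ M * √(n:ℝ))
    have h8 := Nat.lt_floor_add_one (M * √(n:ℝ))
    have h9 : √(n:ℝ) / M ≤ √(n:ℝ) := div_le_self (by positivity) hM3
    refine ⟨h6, h4, Real.sq_sqrt (Nat.cast_nonneg _), Nat.le_floor (by simpa using h1), h5,
      h5.trans h9, ?_, ?_, ?_, ?_⟩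
    · simp only [hR]; linarith
    · rw [h4']; linarith
    · rw [h4']; linarith
    · simp only [hR]; linarith
  refine ⟨R, K, ?_, ?_⟩
  · filter_upwards [base] with n ⟨h6, h4, hx, hR1, hRM, hRx, _, hK1, _, _⟩
    refine ⟨?_, h6, ?_⟩
    · have : (2 * R n + 3 : ℝ) ≤ n := by nlinarith
      exact_mod_cast this
    · have h1 : ((K n : ℝ) + 1) * R n ≤ (M * √n) * (√n / M) :=
        mul_le_mul hK1 hRM (by positivity) (by positivity)
      have h2 : (M * √(n:ℝ)) * (√n / M) = n := by
        rw [← hx]; simp only [hx]; field_simp; rw [hx]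
      have h3 : (1:ℝ) ≤ R n := by exact_mod_cast hR1
      have h4 : (K n * R n + 1 : ℝ) ≤ n := by nlinarith
      exact_mod_cast h4
  clear_value R K
  unfold err
  refine RD.add (RD.add (RD.add (RD.add ?_ ?_) ?_) (RD.add ?_ ?_)) ?_
  · -- small rank
    refine RD.of_le (c := 1) (C := 4 * Real.exp (l + 2 * κ)) 3 one_pos ?_
    filter_upwards [base] with n ⟨h6, h4, hx, hR1, hRM, hRx, hRM', hK1, hK2, hB⟩
    have hn : (6:ℝ) ≤ n := by exact_mod_cast h6
    have h1 : (R n + 1 : ℝ) ^ 2 ≤ 4 * (n:ℝ) ^ 2 := by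
      have : (R n + 1 : ℝ) ≤ 2 * n := by nlinarith
      calc (R n + 1 : ℝ) ^ 2 ≤ (2 * n) ^ 2 := by gcongr
        _ = _ := by ring
    have h2 : Real.exp l ^ (2 * R n + 1) * Real.exp (-κ) ^ K n
        ≤ Real.exp (l + 2 * κ) * Real.exp (-1 * √n) := by
      rw [← Real.exp_nat_mul, ← Real.exp_nat_mul, ← Real.exp_add, ← Real.exp_add]
      refine Real.exp_le_exp.2 ?_
      push_cast
      nlinarith [mul_le_mul_of_nonneg_left hRx hl0.le, mul_le_mul_of_nonneg_left hK2 hκ0.le,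
        mul_le_mul_of_nonneg_right hM2 (Real.sqrt_nonneg (n:ℝ))]
    calc (R n + 1 : ℝ) ^ 2 * Real.exp l ^ (2 * R n + 1) * (Real.exp (-κ) ^ K n * n)
        = (R n + 1 : ℝ) ^ 2 * (Real.exp l ^ (2 * R n + 1) * Real.exp (-κ) ^ K n) * n := by ring
      _ ≤ 4 * (n:ℝ) ^ 2 * (Real.exp (l + 2 * κ) * Real.exp (-1 * √n)) * n := by gcongr
      _ = _ := by ring
  · -- medium rank
    refine RD.of_le (c := 2 * e / M) (C := 6 * Real.exp l * Real.exp (2 * e)) 4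
      (by positivity) ?_
    filter_upwards [base] with n ⟨h6, h4, hx, hR1, hRM, hRx, hRM', hK1, hK2, hB⟩
    have hn : (6:ℝ) ≤ n := by exact_mod_cast h6
    have h2 : 1 / (Real.exp e ^ 2) ^ R n ≤ Real.exp (2 * e) * Real.exp (-(2 * e / M) * √n) := by
      rw [← pow_mul, ← Real.exp_nat_mul, one_div, ← Real.exp_neg, ← Real.exp_add]
      refine Real.exp_le_exp.2 ?_
      have : -(2 * e / M) * √(n:ℝ) = -(2 * e * (√n / M)) := by ring
      rw [this]
      push_cast
      nlinarith [mul_le_mul_of_nonneg_left hRM' he0.le]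
    calc (n:ℝ) * (3 * n ^ 2 * (n + 1) * Real.exp l / (Real.exp e ^ 2) ^ R n)
        = n * (3 * n ^ 2 * (n + 1) * Real.exp l * (1 / (Real.exp e ^ 2) ^ R n)) := by ring
      _ ≤ n * (3 * n ^ 2 * (n + n) * Real.exp l *
            (Real.exp (2 * e) * Real.exp (-(2 * e / M) * √n))) := by gcongr; linarith
      _ = _ := by ring
  · -- large rank
    refine RD.of_le (c := Real.log 2) (C := 15 * 2 ^ 8 * (2 * Real.exp l)) 8
      (Real.log_pos (by norm_num)) ?_
    filter_upwards [base] with n ⟨h6, h4, hx, hR1, hRM, hRx, hRM', hK1, hK2, hB⟩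
    have hn : (6:ℝ) ≤ n := by exact_mod_cast h6
    have h2 : (2:ℝ) ^ n * (2 ^ n) ^ 8 / Real.exp e ^ n ≤ Real.exp (-Real.log 2 * √n) := by
      have h3 : (2:ℝ) ^ n * (2 ^ n) ^ 8 / Real.exp e ^ n = (2 ^ 9 / Real.exp e) ^ n := by
        rw [div_pow, ← pow_mul, ← pow_mul, ← pow_add]; congr 2; ring
      have h4 : (2:ℝ) ^ 9 / Real.exp e ≤ Real.exp (-Real.log 2) := by
        rw [Real.exp_neg, Real.exp_log (by norm_num), div_le_iff₀ (by positivity)]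
        linarith
      rw [h3]
      refine (pow_le_pow_left₀ (by positivity) h4 n).trans ?_
      rw [← Real.exp_nat_mul]
      refine Real.exp_le_exp.2 ?_
      have h5 := mul_nonneg (Real.log_pos (by norm_num : (1:ℝ) < 2)).le
        (by nlinarith : (0:ℝ) ≤ n - √n)
      linarith
    calc 15 * 2 ^ (n + 8) * ((n * 2 ^ n) ^ 8 * (2 * Real.exp l / Real.exp e ^ n))
        = 15 * 2 ^ 8 * (2 * Real.exp l) * (n:ℝ) ^ 8
          * ((2:ℝ) ^ n * (2 ^ n) ^ 8 / Real.exp e ^ n) := by ring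
      _ ≤ _ := by gcongr
  · -- classes of prescribed edge coefficients
    refine RD.of_le (c := 1) (C := 5 * Real.exp (6 * l)) 1 one_pos ?_
    filter_upwards [base] with n ⟨h6, h4, hx, hR1, hRM, hRx, hRM', hK1, hK2, hB⟩
    have hn : (6:ℝ) ≤ n := by exact_mod_cast h6
    have h1 : (((2 * R n + 3 : ℕ)) : ℝ) ≤ 5 * n := by push_cast; nlinarith
    have hB0 : (0:ℝ) < ((2 * R n + 3 : ℕ) : ℝ) := by positivity
    have hB1 : (1:ℝ) ≤ ((2 * R n + 3 : ℕ) : ℝ) := by exact_mod_cast (by omega)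
    have h30 : 0 ≤ 1 - 1 / (125 * ((2 * R n + 3 : ℕ) : ℝ)) := by
      rw [sub_nonneg, div_le_one (by positivity)]; linarith
    have h2 : (1 - 1 / (125 * ((2 * R n + 3 : ℕ) : ℝ))) ^ n ≤ Real.exp (-(M / 625 * √n)) := by
      have h3 : 1 - 1 / (125 * ((2 * R n + 3 : ℕ) : ℝ))
          ≤ Real.exp (-(1 / (125 * ((2 * R n + 3 : ℕ) : ℝ)))) := Real.one_sub_le_exp_neg _
      refine (pow_le_pow_left₀ h30 h3 n).trans ?_
      rw [← Real.exp_nat_mul]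
      refine Real.exp_le_exp.2 ?_
      rw [mul_neg, neg_le_neg_iff, mul_one_div, le_div_iff₀ (by positivity)]
      have h5 : (((2 * R n + 3 : ℕ)) : ℝ) ≤ 5 * (√n / M) := by push_cast; exact hB
      calc M / 625 * √n * (125 * ((2 * R n + 3 : ℕ) : ℝ))
          ≤ M / 625 * √n * (125 * (5 * (√n / M))) := by gcongr
        _ = √n ^ 2 := by field_simp; norm_num
        _ = n := hx
    have h3 : Real.exp l ^ (2 * R n + 3) * Real.exp l ^ (2 * R n + 3) * Real.exp (-(M / 625 * √n))
        ≤ Real.exp (6 * l) * Real.exp (-1 * √n) := by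
      rw [← Real.exp_nat_mul, ← Real.exp_add, ← Real.exp_add, ← Real.exp_add]
      refine Real.exp_le_exp.2 ?_
      push_cast
      nlinarith [mul_le_mul_of_nonneg_left hRx hl0.le,
        mul_le_mul_of_nonneg_right hM1 (Real.sqrt_nonneg (n:ℝ))]
    calc Real.exp l ^ (2 * R n + 3) * Real.exp l ^ (2 * R n + 3) * (((2 * R n + 3 : ℕ) : ℝ) *
          (1 - 1 / (125 * ((2 * R n + 3 : ℕ) : ℝ))) ^ n)
        ≤ Real.exp l ^ (2 * R n + 3) * Real.exp l ^ (2 * R n + 3) * (5 * n *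
          Real.exp (-(M / 625 * √n))) := by
          have h4 := pow_nonneg h30 n
          gcongr
      _ = 5 * n * (Real.exp l ^ (2 * R n + 3) * Real.exp l ^ (2 * R n + 3) *
          Real.exp (-(M / 625 * √n))) := by ring
      _ ≤ 5 * n * (Real.exp (6 * l) * Real.exp (-1 * √n)) := by gcongr
      _ = _ := by ring
  · refine RD.of_le (c := l) (C := 2 * Real.exp (3 * l)) 1 hl0 ?_
    filter_upwards [base] with n ⟨h6, h4, hx, hR1, hRM, hRx, hRM', hK1, hK2, hB⟩
    have h3 : Real.exp l ^ (2 * R n + 3) / Real.exp l ^ n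
        ≤ Real.exp (3 * l) * Real.exp (-l * √n) := by
      rw [← Real.exp_nat_mul, ← Real.exp_nat_mul, ← Real.exp_sub, ← Real.exp_add]
      refine Real.exp_le_exp.2 ?_
      push_cast
      have : (2 * R n - n : ℝ) ≤ -√n := by nlinarith
      nlinarith [mul_le_mul_of_nonneg_left this hl0.le]
    calc 2 * (n:ℝ) * Real.exp l ^ (2 * R n + 3) / Real.exp l ^ n
        = 2 * n * (Real.exp l ^ (2 * R n + 3) / Real.exp l ^ n) := by ring
      _ ≤ 2 * n * (Real.exp (3 * l) * Real.exp (-l * √n)) := by gcongr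
      _ = _ := by ring
  · -- prime powers
    refine RD.of_le (c := g) (C := 4) 3 hg0 ?_
    filter_upwards [base] with n ⟨h6, h4, hx, hR1, hRM, hRx, hRM', hK1, hK2, hB⟩
    have hn : (6:ℝ) ≤ n := by exact_mod_cast h6
    have h2 : 1 / Real.exp g ^ n ≤ Real.exp (-g * √n) := by
      rw [← Real.exp_nat_mul, one_div, ← Real.exp_neg]
      refine Real.exp_le_exp.2 ?_
      nlinarith [mul_nonneg hg0.le (by nlinarith : (0:ℝ) ≤ n - √n)]
    calc (n:ℝ) * (n + 1) ^ 2 / Real.exp g ^ n = n * (n + 1) ^ 2 * (1 / Real.exp g ^ n) := by ring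
      _ ≤ n * (n + n) ^ 2 * Real.exp (-g * √n) := by gcongr; linarith
      _ = _ := by ring

/-! ### Choice of parameters -/

open Filter Topology

/-- The nontrivial Fourier coefficients of all intervals of length at least two are bounded away
from the trivial one, uniformly for a given prime. -/
lemma exists_rho : ∃ ρ : ℝ, 0 < ρ ∧ ρ < 1 ∧ ∀ m : ℕ, 2 ≤ m → m ≤ p → ∀ y : ZMod p, y ≠ 0 →
    gs m y / m ≤ ρ := by
  have h1 : ∀ᶠ ρ : ℝ in 𝓝[<] 1, ∀ z ∈ (Finset.Icc 2 p) ×ˢ (Finset.univ.erase (0 : ZMod p)),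
      gs z.1 z.2 / z.1 ≤ ρ := by
    rw [eventually_all_finset]
    rintro ⟨m, y⟩ hz
    obtain ⟨h2, h3⟩ := Finset.mem_product.1 hz
    have h4 : 2 ≤ m := (Finset.mem_Icc.1 h2).1
    have h5 : gs m y / m < 1 := by
      rw [div_lt_one (by exact_mod_cast (by omega : 0 < m))]
      exact gs_lt h4 (Finset.ne_of_mem_erase h3)
    filter_upwards [Ioo_mem_nhdsLT h5] with ρ hρ
    exact hρ.1.le
  obtain ⟨ρ, h2, h3⟩ := (h1.and (Ioo_mem_nhdsLT (zero_lt_one (α := ℝ)))).exists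
  exact ⟨ρ, h3.1, h3.2, fun m hm hmp y hy => h2 (m, y) (by simp [hm, hmp, hy])⟩

/-- For large `p` the normalised `L¹` norm `1 + p (1 + log p) / m` of the Fourier transform of an
interval of length `m > p ^ (3/4 + δ)` leaves room below `p ^ (1/4)` for a factor
`p ^ (δ/2) = d ^ 2`. -/
lemma exists_threshold {δ : ℝ} (hδ : 0 < δ) (hδ' : δ < 1 / 4) : ∃ p₀ : ℕ, ∀ q : ℕ, p₀ ≤ q →
    3 ≤ q ∧ (2:ℝ) ^ 10 ≤ (q:ℝ) ^ (δ / 4) ∧ ∀ m : ℝ, (q:ℝ) ^ ((3:ℝ) / 4 + δ) < m →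
      (1 + q * (1 + Real.log q) / m) * ((q:ℝ) ^ (δ / 4)) ^ 2 ≤ (q:ℝ) ^ ((1:ℝ) / 4) := by
  have t1 : Tendsto (fun q : ℕ => (q:ℝ) ^ (δ / 4)) atTop atTop :=
    (tendsto_rpow_atTop (by positivity)).comp tendsto_natCast_atTop_atTop
  have t2 : Tendsto (fun q : ℕ => (q:ℝ) ^ ((1:ℝ) / 8)) atTop atTop :=
    (tendsto_rpow_atTop (by positivity)).comp tendsto_natCast_atTop_atTop
  have t3 : ∀ᶠ q : ℕ in atTop, 2 * (1 + Real.log q) ≤ (q:ℝ) ^ (δ / 2) := by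
    have h1 := (isLittleO_log_rpow_atTop (by positivity : 0 < δ / 2)).bound
      (by norm_num : (0:ℝ) < 1 / 4)
    have h2 := tendsto_natCast_atTop_atTop (R := ℝ) |>.eventually h1
    have h3 : ∀ᶠ q : ℕ in atTop, (4:ℝ) ≤ (q:ℝ) ^ (δ / 2) :=
      ((tendsto_rpow_atTop (by positivity)).comp tendsto_natCast_atTop_atTop).eventually_ge_atTop 4
    filter_upwards [h2, h3] with q h2 h3
    have h4 := (Real.le_norm_self _).trans h2
    rw [Real.norm_of_nonneg (by positivity)] at h4
    linarith
  have := ((eventually_ge_atTop 3).and ((t1.eventually_ge_atTop (2 ^ 10)).and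
    ((t2.eventually_ge_atTop 2).and t3)))
  obtain ⟨p₀, h⟩ := eventually_atTop.1 this
  refine ⟨p₀, fun q hq => ?_⟩
  obtain ⟨h1, h2, h3, h4⟩ := h q hq
  refine ⟨h1, h2, fun m hm => ?_⟩
  have hq1 : (1:ℝ) ≤ q := by exact_mod_cast (by omega : 1 ≤ q)
  have hq0 : (0:ℝ) < q := by linarith
  have hlog : 0 ≤ Real.log q := Real.log_nonneg hq1
  have e1 : ((q:ℝ) ^ (δ / 4)) ^ 2 = (q:ℝ) ^ (δ / 2) := by
    rw [← Real.rpow_natCast, ← Real.rpow_mul hq0.le]; congr 1; push_cast; ring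
  have e2 : q * (1 + Real.log q) / m ≤ q * (1 + Real.log q) / (q:ℝ) ^ ((3:ℝ) / 4 + δ) := by
    gcongr
  have e3 : (q:ℝ) / (q:ℝ) ^ ((3:ℝ) / 4 + δ) * (q:ℝ) ^ (δ / 2) * (q:ℝ) ^ (δ / 2)
      = (q:ℝ) ^ ((1:ℝ) / 4) := by
    nth_rewrite 1 [← Real.rpow_one (q:ℝ)]
    rw [← Real.rpow_sub hq0, ← Real.rpow_add hq0, ← Real.rpow_add hq0]
    congr 1; ring
  have e4 : 2 * (q:ℝ) ^ (δ / 2) ≤ (q:ℝ) ^ ((1:ℝ) / 4) := by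
    have h5 : (q:ℝ) ^ (δ / 2) ≤ (q:ℝ) ^ ((1:ℝ) / 8) :=
      Real.rpow_le_rpow_of_exponent_le hq1 (by linarith)
    have h6 : (q:ℝ) ^ ((1:ℝ) / 8) * (q:ℝ) ^ ((1:ℝ) / 8) = (q:ℝ) ^ ((1:ℝ) / 4) := by
      rw [← Real.rpow_add hq0]; congr 1; norm_num
    rw [← h6]
    nlinarith
  have e5 : 2 * (q * (1 + Real.log q) / m * (q:ℝ) ^ (δ / 2)) ≤ (q:ℝ) ^ ((1:ℝ) / 4) := by
    rw [← e3]
    calc 2 * (q * (1 + Real.log q) / m * (q:ℝ) ^ (δ / 2))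
        ≤ 2 * (q * (1 + Real.log q) / (q:ℝ) ^ ((3:ℝ) / 4 + δ) * (q:ℝ) ^ (δ / 2)) := by gcongr
      _ = (q:ℝ) / (q:ℝ) ^ ((3:ℝ) / 4 + δ) * (q:ℝ) ^ (δ / 2) * (2 * (1 + Real.log q)) := by ring
      _ ≤ _ := by gcongr
  rw [e1, add_mul, one_mul]
  linarith

/-- The number of irreducible monic polynomials of degree `n` with non-leading coefficients in the
interval of length `m` starting at `a`. -/
def cnt (a : ZMod p) (m n : ℕ) : ℕ :=
  ((monics p n).filter fun f => (∀ i < n, f.coeff i ∈ iv a m) ∧ Irreducible f).card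

lemma cnt_le {a : ZMod p} {m : ℕ} (hm : m ≤ p) (n : ℕ) : cnt a m n ≤ m ^ n := by
  have h1 : cnt a m n ≤ ((monics p n).filter fun f => ∀ i < n, f.coeff i ∈ iv a m).card := by
    refine Finset.card_le_card fun f hf => ?_
    rw [Finset.mem_filter] at hf ⊢
    exact ⟨hf.1, hf.2.1⟩
  refine h1.trans (le_of_eq ?_)
  rw [card_monics_filter (fun _ => iv a m)]
  have : (Finset.univ.filter fun c : Fin n → ZMod p => ∀ i : Fin n, c i ∈ iv a m)
      = Fintype.piFinset fun _ : Fin n => iv a m := by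
    ext c; simp [Fintype.mem_piFinset]
  rw [this, Fintype.card_piFinset]
  simp [card_iv hm]

/-- The asymptotic formula for intervals, multiplied by `n`. -/
lemma interval_count {δ : ℝ} (hp3 : 3 ≤ p) (hδ : 0 < δ) (hd : (2:ℝ) ^ 10 ≤ (p:ℝ) ^ (δ / 4))
    (hL : ∀ m : ℝ, (p:ℝ) ^ ((3:ℝ) / 4 + δ) < m →
      (1 + p * (1 + Real.log p) / m) * ((p:ℝ) ^ (δ / 4)) ^ 2 ≤ (p:ℝ) ^ ((1:ℝ) / 4)) :
    ∃ C c : ℝ, 0 < C ∧ 0 < c ∧ ∀ (a : ZMod p) (m : ℕ), m ≤ p → (p:ℝ) ^ ((3:ℝ) / 4 + δ) < m →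
      ∀ n : ℕ, 0 < n →
        |n * (cnt a m n : ℝ) - (p:ℝ) / (p - 1) *
          (if (0 : ZMod p) ∈ iv a m then 1 - 1 / (m : ℝ) else 1) * (m : ℝ) ^ n|
          ≤ C * ((p:ℝ) / (p - 1)) * (m:ℝ) ^ n * Real.exp (-c * √n) := by
  have hp1 : (3:ℝ) ≤ p := by exact_mod_cast hp3
  have hp0 : (0:ℝ) < p := by linarith
  obtain ⟨ρ, hρ0, hρ1, hρ⟩ := exists_rho (p := p)
  obtain ⟨R, K, hev, c, hc, C, hC⟩ := exists_err_bound (P := p) (ρ := ρ) (d := (p:ℝ) ^ (δ / 4))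
    (G := (p:ℝ) ^ ((1:ℝ) / 4)) (by linarith) hρ0 hρ1 hd
    (Real.one_lt_rpow (by linarith) (by norm_num))
  obtain ⟨n₀, h0⟩ := eventually_atTop.1 (hev.and hC)
  have hpp : (1:ℝ) ≤ p / (p - 1) := by rw [le_div_iff₀ (by linarith)]; linarith
  refine ⟨|C| + (n₀ + 1) * Real.exp (c * √n₀), c, by positivity, hc, ?_⟩
  intro a m hmp hm n hn
  have hm1' : (1:ℝ) < m := lt_of_le_of_lt (Real.one_le_rpow (by linarith) (by linarith)) hm
  have hm2 : 2 ≤ m := by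
    have : 1 < m := by exact_mod_cast hm1'
    omega
  have hm0 : (0:ℝ) < m := by linarith
  have hcard : ((iv a m).card : ℝ) = m := by rw [card_iv hmp]
  rw [add_mul, add_mul, add_mul]
  have q1 : 0 ≤ |C| * ((p:ℝ) / (p - 1)) * (m:ℝ) ^ n * Real.exp (-c * √n) := by positivity
  have q2 : 0 ≤ (n₀ + 1) * Real.exp (c * √n₀) * ((p:ℝ) / (p - 1)) * (m:ℝ) ^ n
      * Real.exp (-c * √n) := by positivity
  by_cases hnn : n₀ ≤ n
  · obtain ⟨⟨h1, h2, h3⟩, h4⟩ := h0 n hnn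
    have h5 := count_bound (p := p) (by omega) (A := iv a m) (by rw [card_iv hmp]; omega)
      h1 h2 h3 hρ0.le
      (fun y hy => by
        rw [norm_hat_iv hmp, card_iv hmp]
        exact hρ m hm2 hmp _ (neg_ne_zero.2 hy))
      (G := (p:ℝ) ^ ((1:ℝ) / 4)) (d := (p:ℝ) ^ (δ / 4))
      (by rw [← Real.rpow_natCast, ← Real.rpow_mul hp0.le]; norm_num)
      (Real.one_le_rpow (by linarith) (by norm_num))
      (by
        rw [hcard, ← Real.rpow_natCast, ← Real.rpow_mul hp0.le]
        refine le_trans ?_ hm.le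
        refine Real.rpow_le_rpow_of_exponent_le (by linarith) ?_
        norm_num
        linarith)
      (Real.one_le_rpow (by linarith) (by positivity))
      (by
        refine le_trans ?_ (hL m hm)
        refine mul_le_mul_of_nonneg_right ?_ (by positivity)
        rw [← Finset.sum_div, hcard]
        have h6 : ∑ y : ZMod p, ‖hat (iv a m) y‖ = ∑ y : ZMod p, gs m y := by
          rw [← Equiv.sum_comp (Equiv.neg (ZMod p)) (fun y => gs m y)]
          exact Finset.sum_congr rfl fun y _ => norm_hat_iv hmp y
        rw [h6, div_le_iff₀ hm0, add_mul, div_mul_cancel₀ _ hm0.ne', one_mul]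
        exact sum_gs_le m)
    rw [hcard] at h5
    refine le_trans ?_ (le_add_of_nonneg_right q2)
    refine (le_of_eq ?_).trans (h5.trans ?_)
    · rfl
    · calc (m:ℝ) ^ n * err p ρ ((p:ℝ) ^ (δ / 4)) ((p:ℝ) ^ ((1:ℝ) / 4)) (R n) (K n) n
          ≤ (m:ℝ) ^ n * (C * Real.exp (-c * √n)) := by gcongr
        _ ≤ (m:ℝ) ^ n * (|C| * Real.exp (-c * √n)) := by gcongr; exact le_abs_self C
        _ = |C| * 1 * (m:ℝ) ^ n * Real.exp (-c * √n) := by ring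
        _ ≤ _ := by gcongr
  · -- small degrees: both terms are trivially bounded
    push Not at hnn
    refine le_trans ?_ (le_add_of_nonneg_left q1)
    have h1 : (cnt a m n : ℝ) ≤ (m:ℝ) ^ n := by exact_mod_cast cnt_le hmp n
    have h2 : 0 ≤ (if (0 : ZMod p) ∈ iv a m then 1 - 1 / (m : ℝ) else 1) ∧
        (if (0 : ZMod p) ∈ iv a m then 1 - 1 / (m : ℝ) else 1) ≤ 1 := by
      have h3 : 1 / (m:ℝ) ≤ 1 := by rw [div_le_one hm0]; linarith
      have h4 : 0 ≤ 1 / (m:ℝ) := by positivity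
      split_ifs <;> constructor <;> linarith
    set Q : ℝ := if (0 : ZMod p) ∈ iv a m then 1 - 1 / (m : ℝ) else 1
    have h3 : (p:ℝ) / (p - 1) * Q * (m : ℝ) ^ n ≤ (p:ℝ) / (p - 1) * (m : ℝ) ^ n := by
      calc (p:ℝ) / (p - 1) * Q * (m : ℝ) ^ n ≤ (p:ℝ) / (p - 1) * 1 * (m : ℝ) ^ n := by
            gcongr; exact h2.2
        _ = _ := by ring
    have h3' : 0 ≤ (p:ℝ) / (p - 1) * Q * (m : ℝ) ^ n := by
      have := h2.1
      positivity
    have h4 : (n:ℝ) * cnt a m n ≤ n₀ * ((p:ℝ) / (p - 1) * (m : ℝ) ^ n) := by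
      calc (n:ℝ) * cnt a m n ≤ n₀ * (1 * (m:ℝ) ^ n) := by
            rw [one_mul]
            have : (n:ℝ) ≤ n₀ := by exact_mod_cast hnn.le
            gcongr
        _ ≤ _ := by gcongr
    have h5 : (1:ℝ) ≤ Real.exp (c * √n₀) * Real.exp (-c * √n) := by
      rw [← Real.exp_add, Real.one_le_exp_iff]
      have : √(n:ℝ) ≤ √n₀ := Real.sqrt_le_sqrt (by exact_mod_cast hnn.le)
      nlinarith
    have h6 : (0:ℝ) ≤ n * cnt a m n := by positivity
    have h7 : (0:ℝ) ≤ (p:ℝ) / (p - 1) * (m : ℝ) ^ n := by positivity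
    calc _ ≤ (n:ℝ) * cnt a m n + (p:ℝ) / (p - 1) * Q * (m : ℝ) ^ n := by
          rw [abs_le]; constructor <;> linarith
      _ ≤ (n₀ + 1) * ((p:ℝ) / (p - 1) * (m : ℝ) ^ n) * 1 := by linarith
      _ ≤ (n₀ + 1) * ((p:ℝ) / (p - 1) * (m : ℝ) ^ n)
          * (Real.exp (c * √n₀) * Real.exp (-c * √n)) := by gcongr
      _ = _ := by ring

lemma consec_eq_iv (r : ZMod p) (s : ℕ) : consec p r s = iv r s := by
  ext x
  unfold consec iv
  simp only [Finset.mem_image, Finset.mem_range]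
  constructor
  · rintro ⟨y, hy, rfl⟩
    simp at hy
    obtain ⟨a, ha, rfl⟩ := hy
    exact ⟨a, ha, rfl⟩
  · rintro ⟨a, ha, rfl⟩
    exact ⟨a, by simpa using ⟨a, ha, rfl⟩, rfl⟩

lemma card_MRP {r : ZMod p} {s : ℕ} (hs : s ≤ p) (n : ℕ) :
    ((MRP p (consec p r s) n).filter fun f => Irreducible f).card
      = cnt (r + (s : ZMod p)) (p - s) n := by
  unfold cnt
  rw [← iv_compl hs, consec_eq_iv]
  congr 1
  ext f
  rw [Finset.mem_filter, Finset.mem_filter, ← and_assoc]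
  refine and_congr_left fun _ => ?_
  unfold MRP
  rw [Finset.mem_image]
  constructor
  · rintro ⟨c, hc, rfl⟩
    have hc' := (Finset.mem_filter.1 hc).2
    change mon c ∈ monics p n ∧ ∀ i < n, (mon c).coeff i ∈ _
    refine ⟨mem_monics.2 ⟨mon_monic c, mon_natDegree c⟩, fun i hi => ?_⟩
    rw [mon_coeff c hi, Finset.mem_compl]
    exact hc' _
  · rintro ⟨hf, h⟩
    obtain ⟨c, rfl⟩ := exists_mon (mem_monics.1 hf).1 (mem_monics.1 hf).2
    refine ⟨c, Finset.mem_filter.2 ⟨Finset.mem_univ _, fun i => ?_⟩, rfl⟩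
    have := h i i.2
    rwa [mon_coeff c i.2, Finset.mem_compl] at this

end RC

/-- **Theorem 2** (restricted consecutive coefficients). For every `δ > 0` and
every sufficiently large prime `p`, there are constants `C, c > 0` (depending on
`p` and `δ`) such that for `R = {r, …, r+s-1}` with `p - s > p^{3/4+δ}` and every
`n ≥ 1`, the number of monic irreducible polynomials of degree `n` with all
non-leading coefficients outside `R` is
`(p/(p-1))·((p-s)^n/n)·(Λ + O(e^{-c√n}))`. -/
theorem statement1 :
    ∀ δ : ℝ, 0 < δ →
      ∃ p₀ : ℕ, ∀ (p : ℕ) [Fact p.Prime], p₀ ≤ p →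
        ∃ C c : ℝ, 0 < C ∧ 0 < c ∧
          ∀ (r : ZMod p) (s : ℕ), 0 < s →
            (p : ℝ) ^ ((3 : ℝ) / 4 + δ) < (p : ℝ) - s →
            ∀ n : ℕ, 0 < n →
              |(((MRP p (consec p r s) n).filter fun m => Irreducible m).card : ℝ) -
                  ((p : ℝ) / ((p : ℝ) - 1)) * (((p : ℝ) - s) ^ n / n) *
                    (if (0 : ZMod p) ∈ consec p r s then 1 else 1 - 1 / ((p : ℝ) - s))| ≤
                C * ((p : ℝ) / ((p : ℝ) - 1)) * (((p : ℝ) - s) ^ n / n) *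
                  Real.exp (-c * Real.sqrt n) := by
  intro δ hδ
  by_cases hδ' : δ < 1 / 4
  swap
  · -- the hypothesis `p - s > p ^ (3/4 + δ) ≥ p` is never satisfied
    refine ⟨0, fun p _ _ => ⟨1, 1, one_pos, one_pos, fun r s _ h => ?_⟩⟩
    have hp1 : (1:ℝ) ≤ p := by exact_mod_cast (Fact.out : p.Prime).one_le
    have h1 : (p:ℝ) ^ (1:ℝ) ≤ (p:ℝ) ^ ((3:ℝ) / 4 + δ) :=
      Real.rpow_le_rpow_of_exponent_le hp1 (by linarith [not_lt.1 hδ'])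
    rw [Real.rpow_one] at h1
    have h2 : (0:ℝ) ≤ s := Nat.cast_nonneg s
    linarith
  obtain ⟨p₀, h⟩ := RC.exists_threshold hδ hδ'
  refine ⟨p₀, fun p _ hp => ?_⟩
  obtain ⟨h1, h2, h3⟩ := h p hp
  obtain ⟨C, c, hC, hc, h4⟩ := RC.interval_count h1 hδ h2 h3
  refine ⟨C, c, hC, hc, fun r s hs hps n hn => ?_⟩
  have hp0 : (0:ℝ) < p := by exact_mod_cast (Fact.out : p.Prime).pos
  have hsp : s ≤ p := by
    have : (0:ℝ) < p - s := lt_trans (by positivity) hps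
    have : (s:ℝ) ≤ p := by linarith
    exact_mod_cast this
  have hcast : (((p - s : ℕ)) : ℝ) = (p:ℝ) - s := by rw [Nat.cast_sub hsp]
  have h5 := h4 (r + (s : ZMod p)) (p - s) (Nat.sub_le _ _) (by rwa [hcast]) n hn
  rw [hcast] at h5
  have h6 : (if (0 : ZMod p) ∈ consec p r s then 1 else 1 - 1 / ((p : ℝ) - s))
      = if (0 : ZMod p) ∈ RC.iv (r + (s : ZMod p)) (p - s) then 1 - 1 / ((p : ℝ) - s) else 1 := by
    rw [← RC.iv_compl hsp, RC.consec_eq_iv]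
    by_cases h7 : (0 : ZMod p) ∈ RC.iv r s
    · rw [if_pos h7, if_neg (by simpa using h7)]
    · rw [if_neg h7, if_pos (by simpa using h7)]
  rw [h6, RC.card_MRP hsp]
  set Q : ℝ := if (0 : ZMod p) ∈ RC.iv (r + (s : ZMod p)) (p - s) then 1 - 1 / ((p : ℝ) - s) else 1
  have hn0 : (0:ℝ) < n := by exact_mod_cast hn
  refine le_of_mul_le_mul_left ?_ hn0
  rw [← abs_of_pos hn0, ← abs_mul, abs_of_pos hn0]
  refine (le_of_eq ?_).trans (h5.trans (le_of_eq ?_))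
  · congr 1
    field_simp
  · field_simp

end
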